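/- Let μ be a Borel probability measure on SL₂(ℝ) with a finite exponential moment whose support generates a Zariski dense subgroup, with unique stationary measure ν and Lyapunov exponent σ_μ. There exists C > 0, and for every δ ∈ (0, 1/3] a constant C_δ > 0, such that for all real b₁ ≤ b₂, all x ∈ X and all t > 0: (i) if b₂ − b₁ ≥ 2δ then Σ_{n≥0} μ^{*n}{ g : σ(g,x) − t ∈ [b₁, b₂] } ≤ C (b₂ − b₁) ( 1/σ_μ + C_δ (1 + |b₁| + |b₂|)/t ); (ii) if 0 ≤ b₂ − b₁ < 2δ then Σ_{n≥0} μ^{*n}{ g : σ(g,x) − t ∈ [b₁, b₂] } ≤ C δ ( 1/σ_μ + C_δ (1 + |b₁|)/t ). -/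

import Mathlib

open MeasureTheory Filter

noncomputable section

abbrev SL2 := Matrix.SpecialLinearGroup (Fin 2) ℝ

abbrev PX := Projectivization ℝ (Fin 2 → ℝ)

instance : TopologicalSpace SL2 := instTopologicalSpaceSubtype
instance : TopologicalSpace PX := instTopologicalSpaceQuotient
instance : MeasurableSpace SL2 := borel _
instance : MeasurableSpace PX := borel _

/-- Euclidean norm on ℝ². -/
def enorm2 (v : Fin 2 → ℝ) : ℝ := Real.sqrt (v 0 ^ 2 + v 1 ^ 2)

/-- Operator norm of g ∈ SL₂(ℝ) w.r.t. the Euclidean norm on ℝ². -/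
def opNorm (g : SL2) : ℝ :=
  ‖Matrix.toEuclideanCLM (𝕜 := ℝ) (n := Fin 2) (g : Matrix (Fin 2) (Fin 2) ℝ)‖

/-- Cartan projection κ(g) = log ‖g‖. -/
def kappa (g : SL2) : ℝ := Real.log (opNorm g)

/-- The projective action of SL₂(ℝ) on ℙ(ℝ²). -/
def act (g : SL2) (x : PX) : PX :=
  Projectivization.map ((Matrix.SpecialLinearGroup.toLin' g).toLinearMap)
    (LinearEquiv.injective _) x

/-- The norm cocycle σ(g, ℝv) = log (‖gv‖/‖v‖). -/
def cocycle (g : SL2) (x : PX) : ℝ :=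
  Real.log (enorm2 ((g : Matrix (Fin 2) (Fin 2) ℝ).mulVec x.rep) / enorm2 x.rep)

/-- The sine distance d(ℝv, ℝw) = |det(v,w)|/(‖v‖‖w‖) on ℙ(ℝ²). -/
def projDist (x y : PX) : ℝ :=
  |x.rep 0 * y.rep 1 - x.rep 1 * y.rep 0| / (enorm2 x.rep * enorm2 y.rep)

/-- An angle θ(x) ∈ ℝ representing x = ℝ(cos θ, sin θ). -/
def pangle (x : PX) : ℝ := Complex.arg (x.rep 0 + x.rep 1 * Complex.I)

/-- The (topological) support of a measure. -/
def measSupp (μ : Measure SL2) : Set SL2 :=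
  {g | ∀ U : Set SL2, IsOpen U → g ∈ U → 0 < μ U}

/-- μ has a finite exponential moment. -/
def HasExpMoment (μ : Measure SL2) : Prop :=
  ∃ ε₁ > (0 : ℝ), ∫⁻ g, ENNReal.ofReal (opNorm g ^ ε₁) ∂μ < ⊤

/-- The group generated by the support of μ is Zariski dense in SL₂(ℝ),
equivalently it is not solvable. -/
def ZariskiDense (μ : Measure SL2) : Prop :=
  ¬ IsSolvable (Subgroup.closure (measSupp μ))

/-- ν is μ-stationary: μ ∗ ν = ν. -/
def IsStationaryMeas (μ : Measure SL2) (ν : Measure PX) : Prop :=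
  μ.bind (fun g => ν.map (act g)) = ν

/-- The product g₁ ⋯ gₙ of a word (g₁, …, gₙ). -/
def word {n : ℕ} (g : Fin n → SL2) : SL2 := (List.ofFn g).prod

/-- The product measure μ^{⊗n} on words of length n. -/
def μpi (μ : Measure SL2) (n : ℕ) : Measure (Fin n → SL2) := Measure.pi fun _ => μ

/-!
Write `R(x, t)` for the renewal measure, so that `R(x, t) B` is the left-hand side for an interval
`B`. As the constant `C` may depend on `μ`, it suffices to show that `R(x, t) [b, b + 2δ]` is
bounded, and is `O(δ)` as soon as `t + b` exceeds a threshold depending on `δ`: for `t + b` below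
that threshold the error term `C_δ (1 + |b|) / t` dominates the uniform bound, and long intervals
are covered by short ones.

Positivity of the Lyapunov exponent makes `E ‖gₙ ⋯ g₁ v‖^(-ε)` decay exponentially, uniformly in
`‖v‖ = 1`, and the maximum principle turns this into a uniform bound `M` for the expected time
spent in a fixed window `|log ‖v‖| ≤ 3`.

For the `O(δ)` bound, replace the indicator of the interval by a Lipschitz bump `f` and let
`H v = ∑ₙ E f(log ‖gₙ ⋯ g₁ v‖)`. This function is bounded, Lipschitz in `log ‖v‖`, Hölder in the
direction of `v`, and `μ`-harmonic near `0`. Let `g` be a hyperbolic element of the semigroup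
generated by the support of `μ`, with an eigenvalue `l > 1`, and consider `G v = H (l v) - H v`. At
points `v → 0` almost realising `m = limsup_{v → 0} G v`, harmonicity forces `G` to be close to `m`
along the whole orbit of the semigroup. Iterates of `g` push the orbit towards the eigenline of `l`,
where the values of `G` at `v, l v, l² v, …` telescope, so `m > 0` would contradict the boundedness
of `H`. Hence `log l` is an asymptotic period of `H`. Zariski density yields arbitrarily small
periods, so about `1 / δ` translates of `f` with disjoint supports in the window have nearly equal
expected visit counts. These add up to at most `M`, so each is `O(δ)`.
-/

open scoped Topology ENNReal NNReal RealInnerProductSpace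

section Plane

/-- The Euclidean plane, on which `SL2` acts through Mathlib's action on `Fin 2 → ℝ`. -/
abbrev Plane := EuclideanSpace ℝ (Fin 2)

instance : Fact (Module.finrank ℝ Plane = 2) := ⟨finrank_euclideanSpace_fin⟩

/-- The standard orientation of the plane. -/
def planeOrientation : Orientation ℝ Plane (Fin 2) :=
  (EuclideanSpace.basisFun (Fin 2) ℝ).toBasis.orientation

/-- The wedge product `v ∧ w` of two vectors of the plane, as a real number. -/
def wedge : Plane →ₗ[ℝ] Plane →ₗ[ℝ] ℝ := planeOrientation.areaForm

/-- The trace of an element of `SL2`. -/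
def trace (g : SL2) : ℝ := (g : Matrix (Fin 2) (Fin 2) ℝ).trace

lemma trace_eq (g : SL2) : trace g = g 0 0 + g 1 1 := Matrix.trace_fin_two _

lemma plane_ext {v w : Plane} (h₀ : v 0 = w 0) (h₁ : v 1 = w 1) : v = w := by
  ext i
  fin_cases i <;> assumption

lemma smul_apply_zero (g : SL2) (v : Plane) : (g • v) 0 = g 0 0 * v 0 + g 0 1 * v 1 := by
  simp [Matrix.SpecialLinearGroup.smul_def, Matrix.mulVec, dotProduct, Fin.sum_univ_two]

lemma smul_apply_one (g : SL2) (v : Plane) : (g • v) 1 = g 1 0 * v 0 + g 1 1 * v 1 := by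
  simp [Matrix.SpecialLinearGroup.smul_def, Matrix.mulVec, dotProduct, Fin.sum_univ_two]

lemma det_eq_one (g : SL2) : g 0 0 * g 1 1 - g 0 1 * g 1 0 = 1 := by
  simpa only [Matrix.det_fin_two] using g.2

lemma wedge_apply (v w : Plane) : wedge v w = v 0 * w 1 - v 1 * w 0 := by
  rw [wedge, Orientation.areaForm_to_volumeForm, planeOrientation,
    Orientation.volumeForm_robust _ (EuclideanSpace.basisFun (Fin 2) ℝ) rfl,
    Module.Basis.det_apply, Matrix.det_fin_two]
  simp [Module.Basis.toMatrix_apply, mul_comm]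

@[simp] lemma wedge_self (v : Plane) : wedge v v = 0 := planeOrientation.areaForm_apply_self v

lemma wedge_swap (v w : Plane) : wedge v w = -wedge w v := planeOrientation.areaForm_swap v w

lemma abs_wedge_le (v w : Plane) : |wedge v w| ≤ ‖v‖ * ‖w‖ :=
  planeOrientation.abs_areaForm_le v w

@[simp] lemma wedge_smul_smul (g : SL2) (v w : Plane) : wedge (g • v) (g • w) = wedge v w := by
  simp only [wedge_apply, smul_apply_zero, smul_apply_one]
  linear_combination (v 0 * w 1 - v 1 * w 0) * det_eq_one g

lemma wedge_smul_eq_add (e f v : Plane) : wedge e f • v = wedge v f • e + wedge e v • f := by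
  apply plane_ext <;>
    simp only [wedge_apply, PiLp.add_apply, PiLp.smul_apply, smul_eq_mul] <;> ring

lemma exists_eq_smul_of_wedge_eq_zero {e w : Plane} (he : e ≠ 0) (h : wedge e w = 0) :
    ∃ c : ℝ, w = c • e := by
  have hex : wedge e (planeOrientation.rightAngleRotation e) ≠ 0 := by
    simpa [wedge] using he
  refine ⟨(wedge e (planeOrientation.rightAngleRotation e))⁻¹ *
    wedge w (planeOrientation.rightAngleRotation e), ?_⟩
  rw [mul_smul, eq_inv_smul_iff₀ hex, wedge_smul_eq_add, h, zero_smul, add_zero]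

instance : FaithfulSMul SL2 Plane where
  eq_of_smul_eq_smul {g h} H := by
    have h₀ := H !₂[1, 0]
    have h₁ := H !₂[0, 1]
    ext i j
    fin_cases i <;> fin_cases j
    · simpa [smul_apply_zero] using congrArg (· 0) h₀
    · simpa [smul_apply_zero] using congrArg (· 0) h₁
    · simpa [smul_apply_one] using congrArg (· 1) h₀
    · simpa [smul_apply_one] using congrArg (· 1) h₁

lemma toEuclideanCLM_apply_eq_smul (g : SL2) (v : Plane) :
    Matrix.toEuclideanCLM (𝕜 := ℝ) (g : Matrix (Fin 2) (Fin 2) ℝ) v = g • v := by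
  apply plane_ext <;>
    simp [smul_apply_zero, smul_apply_one, Matrix.mulVec, dotProduct, Fin.sum_univ_two]

lemma smul_smul_eq_trace_smul_sub (g : SL2) (v : Plane) :
    g • g • v = trace g • (g • v) - v := by
  apply plane_ext <;>
    simp only [smul_apply_zero, smul_apply_one, trace_eq, PiLp.sub_apply, PiLp.smul_apply,
      smul_eq_mul]
  · linear_combination -v 0 * det_eq_one g
  · linear_combination -v 1 * det_eq_one g

end Plane

section OperatorNorm

lemma opNorm_nonneg (g : SL2) : 0 ≤ opNorm g := norm_nonneg _

lemma norm_smul_le_opNorm (g : SL2) (v : Plane) : ‖g • v‖ ≤ opNorm g * ‖v‖ := by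
  simpa only [opNorm, toEuclideanCLM_apply_eq_smul] using
    (Matrix.toEuclideanCLM (𝕜 := ℝ) (g : Matrix (Fin 2) (Fin 2) ℝ)).le_opNorm v

lemma opNorm_mul_le (g h : SL2) : opNorm (g * h) ≤ opNorm g * opNorm h := by
  simpa only [opNorm, Matrix.SpecialLinearGroup.coe_mul, map_mul] using norm_mul_le
    (Matrix.toEuclideanCLM (𝕜 := ℝ) (g : Matrix (Fin 2) (Fin 2) ℝ))
    (Matrix.toEuclideanCLM (𝕜 := ℝ) (h : Matrix (Fin 2) (Fin 2) ℝ))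

lemma norm_le_opNorm_mul_norm_smul (g : SL2) (v : Plane) : ‖v‖ ≤ opNorm g * ‖g • v‖ := by
  rcases eq_or_ne v 0 with rfl | hv
  · simp
  let Jv := planeOrientation.rightAngleRotation v
  have hJv : ‖Jv‖ = ‖v‖ := planeOrientation.rightAngleRotation.norm_map v
  refine le_of_mul_le_mul_left ?_ (norm_pos_iff.2 hv)
  calc ‖v‖ * ‖v‖ = wedge v Jv := by simp [wedge, Jv, sq]
    _ = wedge (g • v) (g • Jv) := (wedge_smul_smul g v Jv).symm
    _ ≤ ‖g • v‖ * ‖g • Jv‖ := (le_abs_self _).trans (abs_wedge_le _ _)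
    _ ≤ ‖g • v‖ * (opNorm g * ‖Jv‖) := by gcongr; exact norm_smul_le_opNorm g Jv
    _ = ‖v‖ * (opNorm g * ‖g • v‖) := by rw [hJv]; ring

lemma norm_smul_pos (g : SL2) {v : Plane} (hv : v ≠ 0) : 0 < ‖g • v‖ :=
  norm_pos_iff.2 ((smul_ne_zero_iff_ne g).2 hv)

lemma one_le_opNorm (g : SL2) : 1 ≤ opNorm g := by
  obtain ⟨v, hv⟩ := exists_ne (0 : Plane)
  have h : 1 * ‖v‖ ≤ opNorm g ^ 2 * ‖v‖ :=
    calc 1 * ‖v‖ ≤ opNorm g * ‖g • v‖ := by simpa using norm_le_opNorm_mul_norm_smul g v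
      _ ≤ opNorm g * (opNorm g * ‖v‖) := by
        gcongr
        exacts [opNorm_nonneg g, norm_smul_le_opNorm g v]
      _ = opNorm g ^ 2 * ‖v‖ := by ring
  exact (one_le_sq_iff₀ (opNorm_nonneg g)).1 (le_of_mul_le_mul_right h (norm_pos_iff.2 hv))

lemma opNorm_pos (g : SL2) : 0 < opNorm g := one_pos.trans_le (one_le_opNorm g)

lemma log_opNorm_nonneg (g : SL2) : 0 ≤ Real.log (opNorm g) := Real.log_nonneg (one_le_opNorm g)

lemma norm_mul_norm_smul_le (g : SL2) (v w : Plane) :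
    ‖w‖ * ‖g • v‖ ≤ ‖v‖ * ‖g • w‖ + |wedge v w| * opNorm g := by
  rcases eq_or_ne w 0 with rfl | hw
  · simp
  let Jw := planeOrientation.rightAngleRotation w
  have hJw : ‖Jw‖ = ‖w‖ := planeOrientation.rightAngleRotation.norm_map w
  have decomposition : (‖w‖ ^ 2) • v = ⟪w, v⟫ • w + wedge w v • Jw :=
    ext_inner_right ℝ fun y ↦ by
      simpa [inner_add_left, real_inner_smul_left, wedge, Jw] using
        (planeOrientation.inner_mul_inner_add_areaForm_mul_areaForm w v y).symm
  refine le_of_mul_le_mul_left ?_ (norm_pos_iff.2 hw)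
  calc ‖w‖ * (‖w‖ * ‖g • v‖) = ‖g • (‖w‖ ^ 2) • v‖ := by
        rw [smul_comm, norm_smul (‖w‖ ^ 2), norm_pow, norm_norm]; ring
    _ = ‖⟪w, v⟫ • (g • w) + wedge w v • (g • Jw)‖ := by
        rw [decomposition, smul_add, smul_comm g, smul_comm g]
    _ ≤ |⟪w, v⟫| * ‖g • w‖ + |wedge w v| * ‖g • Jw‖ := by
        simpa only [norm_smul, Real.norm_eq_abs] using
          norm_add_le (⟪w, v⟫ • (g • w)) (wedge w v • (g • Jw))
    _ ≤ ‖w‖ * ‖v‖ * ‖g • w‖ + |wedge w v| * (opNorm g * ‖w‖) := by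
        gcongr
        · exact abs_real_inner_le_norm w v
        · exact hJw ▸ norm_smul_le_opNorm g Jw
    _ = ‖w‖ * (‖v‖ * ‖g • w‖ + |wedge v w| * opNorm g) := by
        rw [wedge_swap, abs_neg]; ring

end OperatorNorm

section Topology

instance : BorelSpace SL2 := ⟨rfl⟩
instance : BorelSpace PX := ⟨rfl⟩
instance : IsTopologicalGroup SL2 := Matrix.SpecialLinearGroup.topologicalGroup

instance : SecondCountableTopology SL2 :=
  haveI : SecondCountableTopology (Matrix (Fin 2) (Fin 2) ℝ) :=
    inferInstanceAs (SecondCountableTopology (Fin 2 → Fin 2 → ℝ))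
  TopologicalSpace.Subtype.secondCountableTopology _

lemma continuous_toEuclideanCLM : Continuous fun g : SL2 ↦
    Matrix.toEuclideanCLM (𝕜 := ℝ) (n := Fin 2) (g : Matrix (Fin 2) (Fin 2) ℝ) :=
  (LinearMap.continuous_of_finiteDimensional
    (Matrix.toEuclideanCLM (𝕜 := ℝ) (n := Fin 2)).toAlgEquiv.toLinearMap).comp
      continuous_subtype_val

instance : ContinuousSMul SL2 Plane where
  continuous_smul := by
    simpa only [Function.comp_apply, toEuclideanCLM_apply_eq_smul] using
      (continuous_toEuclideanCLM.comp continuous_fst).clm_apply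
        (continuous_snd : Continuous fun p : SL2 × Plane ↦ p.2)

@[fun_prop] lemma continuous_opNorm : Continuous opNorm := continuous_toEuclideanCLM.norm

@[fun_prop] lemma measurable_opNorm : Measurable opNorm := continuous_opNorm.measurable

lemma continuous_wedge : Continuous fun p : Plane × Plane ↦ wedge p.1 p.2 := by
  simp only [wedge_apply]
  fun_prop

end Topology

section ConvolutionPowers

variable {M : Type*} [Monoid M] [MeasurableSpace M]

/-- The convolution power `μ^{*n}` of a measure on a monoid. -/
def convPow (μ : Measure M) : ℕ → Measure M
  | 0 => Measure.dirac 1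
  | n + 1 => μ ∗ₘ convPow μ n

lemma convPow_zero (μ : Measure M) : convPow μ 0 = Measure.dirac 1 := rfl

lemma convPow_succ (μ : Measure M) (n : ℕ) : convPow μ (n + 1) = μ ∗ₘ convPow μ n := rfl

lemma lintegral_convPow_zero (μ : Measure M) {F : M → ℝ≥0∞} (hF : Measurable F) :
    ∫⁻ g, F g ∂(convPow μ 0) = F 1 := by
  rw [convPow_zero, lintegral_dirac' _ hF]

variable [MeasurableMul₂ M]

instance (μ : Measure M) [IsProbabilityMeasure μ] (n : ℕ) :
    IsProbabilityMeasure (convPow μ n) := by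
  induction n with
  | zero => rw [convPow_zero]; infer_instance
  | succ n ih => rw [convPow_succ]; infer_instance

variable (μ : Measure M) [IsProbabilityMeasure μ]

lemma convPow_one : convPow μ 1 = μ := by
  rw [convPow_succ, convPow_zero, Measure.mconv_dirac_one]

lemma convPow_add (n k : ℕ) : convPow μ (n + k) = convPow μ n ∗ₘ convPow μ k := by
  induction n with
  | zero => rw [zero_add, convPow_zero, Measure.dirac_one_mconv]
  | succ n ih => rw [add_right_comm, convPow_succ, ih, convPow_succ, Measure.mconv_assoc]

lemma lintegral_convPow_add (n k : ℕ) {F : M → ℝ≥0∞} (hF : Measurable F) :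
    ∫⁻ g, F g ∂(convPow μ (n + k)) = ∫⁻ h, ∫⁻ g, F (g * h) ∂(convPow μ n) ∂(convPow μ k) := by
  rw [convPow_add, Measure.lintegral_mconv hF, lintegral_lintegral_swap]
  exact (hF.comp measurable_mul).aemeasurable

lemma lintegral_convPow_succ (n : ℕ) {F : M → ℝ≥0∞} (hF : Measurable F) :
    ∫⁻ g, F g ∂(convPow μ (n + 1)) = ∫⁻ h, ∫⁻ g, F (g * h) ∂(convPow μ n) ∂μ := by
  rw [lintegral_convPow_add μ n 1 hF, convPow_one]

lemma integral_convPow_add (n k : ℕ) {F : M → ℝ} (hF : Integrable F (convPow μ (n + k))) :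
    ∫ g, F g ∂(convPow μ (n + k)) = ∫ h, ∫ g, F (g * h) ∂(convPow μ n) ∂(convPow μ k) := by
  rw [convPow_add, Measure.mconv] at hF ⊢
  rw [integral_map measurable_mul.aemeasurable hF.1, integral_prod_symm]
  exact hF.comp_measurable measurable_mul

end ConvolutionPowers

section Words

lemma word_succ {n : ℕ} (g : Fin (n + 1) → SL2) :
    word g = g 0 * word fun i : Fin n ↦ g i.succ := by
  rw [word, List.ofFn_succ, List.prod_cons, word]

lemma measurable_word (n : ℕ) : Measurable (word : (Fin n → SL2) → SL2) := by
  induction n with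
  | zero => exact measurable_const
  | succ n ih =>
    rw [funext word_succ]
    exact (measurable_pi_apply 0).mul
      (ih.comp (measurable_pi_lambda _ fun i ↦ measurable_pi_apply i.succ))

lemma map_word_μpi (μ : Measure SL2) [IsProbabilityMeasure μ] (n : ℕ) :
    (μpi μ n).map word = convPow μ n := by
  induction n with
  | zero =>
    have word_fin_zero : (word : (Fin 0 → SL2) → SL2) = fun _ ↦ 1 := funext fun g ↦ by simp [word]
    rw [word_fin_zero, Measure.map_const, convPow_zero, μpi]
    simp
  | succ n ih =>
    have first_letter := measurePreserving_piFinSuccAbove (fun _ : Fin (n + 1) ↦ μ) 0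
    have : IsProbabilityMeasure (μpi μ n) := by unfold μpi; infer_instance
    have word_eq : (word : (Fin (n + 1) → SL2) → SL2) =
        (fun p : SL2 × SL2 ↦ p.1 * p.2) ∘ Prod.map id word ∘
          MeasurableEquiv.piFinSuccAbove (fun _ ↦ SL2) 0 :=
      funext word_succ
    rw [word_eq, ← Measure.map_map measurable_mul
        ((measurable_id.prodMap (measurable_word n)).comp (MeasurableEquiv.measurable _)),
      ← Measure.map_map (measurable_id.prodMap (measurable_word n)) (MeasurableEquiv.measurable _),
      μpi, first_letter.map_eq, convPow_succ, Measure.mconv, ← ih]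
    congr 1
    simpa only [Measure.map_id, μpi] using
      (Measure.map_prod_map μ (μpi μ n) measurable_id (measurable_word n)).symm

end Words

section Moments

variable {μ : Measure SL2} [IsProbabilityMeasure μ]

lemma lintegral_opNorm_rpow_convPow_lt_top {ε : ℝ} (hε : 0 ≤ ε)
    (h : ∫⁻ g, ENNReal.ofReal (opNorm g ^ ε) ∂μ < ∞) (n : ℕ) :
    ∫⁻ g, ENNReal.ofReal (opNorm g ^ ε) ∂(convPow μ n) < ∞ := by
  have hm : Measurable fun g ↦ ENNReal.ofReal (opNorm g ^ ε) := by fun_prop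
  induction n with
  | zero => rw [lintegral_convPow_zero μ hm]; exact ENNReal.ofReal_lt_top
  | succ n ih =>
    rw [lintegral_convPow_succ μ n hm]
    calc ∫⁻ h, ∫⁻ g, ENNReal.ofReal (opNorm (g * h) ^ ε) ∂(convPow μ n) ∂μ
        ≤ ∫⁻ h, ∫⁻ g, ENNReal.ofReal (opNorm g ^ ε) * ENNReal.ofReal (opNorm h ^ ε)
            ∂(convPow μ n) ∂μ := by
          gcongr with h g
          rw [← ENNReal.ofReal_mul (Real.rpow_nonneg (opNorm_nonneg g) ε),
            ← Real.mul_rpow (opNorm_nonneg _) (opNorm_nonneg _)]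
          gcongr
          exacts [opNorm_nonneg _, opNorm_mul_le g h]
      _ = (∫⁻ g, ENNReal.ofReal (opNorm g ^ ε) ∂(convPow μ n)) *
            ∫⁻ h, ENNReal.ofReal (opNorm h ^ ε) ∂μ := by
          simp_rw [lintegral_mul_const _ hm, lintegral_const_mul _ hm]
      _ < ∞ := ENNReal.mul_lt_top ih h

end Moments

section ZariskiDensity

open scoped commutatorElement Pointwise
open MulAction

lemma isSolvable_of_commutators_commute {G : Type*} [Group G] (K : Subgroup G)
    (h : ∀ a ∈ K, ∀ b ∈ K, ∀ c ∈ K, ∀ d ∈ K, Commute ⁅a, b⁆ ⁅c, d⁆) : Group.IsSolvable K := by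
  refine ⟨2, ?_⟩
  rw [derivedSeries_succ, derivedSeries_succ, derivedSeries_zero,
    Subgroup.commutator_eq_bot_iff_le_centralizer]
  nth_rw 1 [Subgroup.commutator_def]
  rw [Subgroup.closure_le, Set.subset_def]
  rintro _ ⟨a, -, b, -, rfl⟩
  rw [SetLike.mem_coe, Subgroup.mem_centralizer_iff]
  intro y hy
  rw [SetLike.mem_coe, Subgroup.commutator_def] at hy
  change Commute y _
  induction hy using Subgroup.closure_induction with
  | mem y hy =>
    obtain ⟨c, -, d, -, rfl⟩ := hy
    exact Subtype.ext (h c c.2 d d.2 a a.2 b b.2)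
  | one => exact Commute.one_left _
  | mul y z _ _ hy hz => exact hy.mul_left hz
  | inv y _ hy => exact hy.inv_left

lemma smul_smul_comm_of_mem_stabilizer_pair {G α : Type*} [Group G] [MulAction G α]
    {x y : α} {a b : G} (ha : a ∈ stabilizer G ({x, y} : Set α))
    (hb : b ∈ stabilizer G ({x, y} : Set α)) : a • b • x = b • a • x := by
  rw [mem_stabilizer_iff, Set.smul_set_insert, Set.smul_set_singleton,
    Set.pair_eq_pair_iff] at ha hb
  rcases ha with ⟨hax, hay⟩ | ⟨hax, hay⟩ <;> rcases hb with ⟨hbx, hby⟩ | ⟨hbx, hby⟩ <;>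
    simp only [hax, hay, hbx, hby]

lemma commutatorElement_mem_stabilizer_of_mem_stabilizer_pair {G α : Type*} [Group G]
    [MulAction G α] {x y : α} {a b : G} (ha : a ∈ stabilizer G ({x, y} : Set α))
    (hb : b ∈ stabilizer G ({x, y} : Set α)) : ⁅a, b⁆ ∈ stabilizer G x := by
  rw [mem_stabilizer_iff, commutatorElement_def, mul_smul, mul_smul, mul_smul,
    smul_smul_comm_of_mem_stabilizer_pair (inv_mem ha) (inv_mem hb), smul_inv_smul, smul_inv_smul]

lemma smul_span_singleton (g : SL2) (v : Plane) : g • (ℝ ∙ v) = ℝ ∙ (g • v) := by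
  rw [Submodule.smul_span, Set.smul_set_singleton]

lemma span_singleton_eq_iff_wedge_eq_zero {e f : Plane} (he : e ≠ 0) (hf : f ≠ 0) :
    (ℝ ∙ e) = ℝ ∙ f ↔ wedge e f = 0 := by
  constructor
  · intro h
    obtain ⟨c, rfl⟩ := Submodule.mem_span_singleton.1 (h ▸ Submodule.mem_span_singleton_self f)
    simp
  · intro h
    obtain ⟨c, rfl⟩ := exists_eq_smul_of_wedge_eq_zero he h
    exact (Submodule.span_singleton_smul_eq (IsUnit.mk0 c (smul_ne_zero_iff.1 hf).1) e).symm

lemma mem_stabilizer_span_singleton_iff_wedge {g : SL2} {e : Plane} (he : e ≠ 0) :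
    g ∈ stabilizer SL2 (ℝ ∙ e) ↔ wedge e (g • e) = 0 := by
  rw [mem_stabilizer_iff, smul_span_singleton, eq_comm,
    span_singleton_eq_iff_wedge_eq_zero he ((smul_ne_zero_iff_ne g).2 he)]

lemma exists_smul_eq_smul_of_mem_stabilizer {g : SL2} {e : Plane}
    (hg : g ∈ stabilizer SL2 (ℝ ∙ e)) : ∃ c : ℝ, g • e = c • e := by
  rw [mem_stabilizer_iff, smul_span_singleton] at hg
  obtain ⟨c, hc⟩ := Submodule.mem_span_singleton.1 (hg ▸ Submodule.mem_span_singleton_self (g • e))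
  exact ⟨c, hc.symm⟩

lemma commutatorElement_smul_eq_of_mem_stabilizer {e : Plane} {a b : SL2}
    (ha : a ∈ stabilizer SL2 (ℝ ∙ e)) (hb : b ∈ stabilizer SL2 (ℝ ∙ e)) : ⁅a, b⁆ • e = e := by
  obtain ⟨c, hc⟩ := exists_smul_eq_smul_of_mem_stabilizer (inv_mem ha)
  obtain ⟨d, hd⟩ := exists_smul_eq_smul_of_mem_stabilizer (inv_mem hb)
  have h : a⁻¹ • b⁻¹ • e = b⁻¹ • a⁻¹ • e := by
    rw [hc, hd, smul_comm _ d, smul_comm _ c, hc, hd, smul_comm]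
  rw [commutatorElement_def, mul_smul, mul_smul, mul_smul, h, smul_inv_smul, smul_inv_smul]

lemma commute_of_smul_eq {e : Plane} (he : e ≠ 0) {g h : SL2} (hg : g • e = e)
    (hh : h • e = e) : Commute g h := by
  have shear : ∀ g : SL2, g • e = e → ∀ v, ∃ s : ℝ, g • v = v + s • e := by
    intro g hg v
    have hw : wedge e (g • v - v) = 0 := by
      rw [map_sub, ← wedge_smul_smul g e v, hg, sub_self]
    obtain ⟨s, hs⟩ := exists_eq_smul_of_wedge_eq_zero he hw
    exact ⟨s, by rw [← hs, add_sub_cancel]⟩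
  refine eq_of_smul_eq_smul (α := Plane) fun v ↦ ?_
  obtain ⟨s, hs⟩ := shear g hg v
  obtain ⟨t, ht⟩ := shear h hh v
  rw [mul_smul, mul_smul, hs, ht, smul_add, smul_add, smul_comm g, smul_comm h, hs, ht, hg, hh]
  abel

lemma ext_of_wedge_ne_zero {e f : Plane} (hef : wedge e f ≠ 0) {g h : SL2}
    (he : g • e = h • e) (hf : g • f = h • f) : g = h := by
  refine eq_of_smul_eq_smul (α := Plane) fun v ↦ smul_right_injective Plane hef ?_
  have expand : ∀ g : SL2, wedge e f • (g • v) = wedge v f • (g • e) + wedge e v • (g • f) := by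
    intro g
    rw [← smul_comm, wedge_smul_eq_add e f v, smul_add, smul_comm g, smul_comm g]
  simp only [expand, he, hf]

lemma commute_of_mem_stabilizer_of_mem_stabilizer {e f : Plane} (hef : wedge e f ≠ 0) {g h : SL2}
    (hge : g ∈ stabilizer SL2 (ℝ ∙ e)) (hgf : g ∈ stabilizer SL2 (ℝ ∙ f))
    (hhe : h ∈ stabilizer SL2 (ℝ ∙ e)) (hhf : h ∈ stabilizer SL2 (ℝ ∙ f)) : Commute g h := by
  obtain ⟨a, ha⟩ := exists_smul_eq_smul_of_mem_stabilizer hge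
  obtain ⟨b, hb⟩ := exists_smul_eq_smul_of_mem_stabilizer hgf
  obtain ⟨c, hc⟩ := exists_smul_eq_smul_of_mem_stabilizer hhe
  obtain ⟨d, hd⟩ := exists_smul_eq_smul_of_mem_stabilizer hhf
  apply ext_of_wedge_ne_zero hef
  · rw [mul_smul, mul_smul, ha, hc, smul_comm g, smul_comm h, ha, hc, smul_comm]
  · rw [mul_smul, mul_smul, hb, hd, smul_comm g, smul_comm h, hb, hd, smul_comm]

variable {μ : Measure SL2}

lemma measSupp_eq_support (μ : Measure SL2) : measSupp μ = μ.support := by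
  rw [Measure.support_eq_forall_isOpen]
  exact Set.ext fun g ↦ forall_congr' fun U ↦ forall_comm

lemma ZariskiDense.not_isSolvable (hμ : ZariskiDense μ) :
    ¬ Group.IsSolvable (Subgroup.closure μ.support) := by
  rwa [← measSupp_eq_support]

lemma ZariskiDense.exists_wedge_smul_ne_zero (hμ : ZariskiDense μ) {e : Plane} (he : e ≠ 0) :
    ∃ s ∈ μ.support, wedge e (s • e) ≠ 0 := by
  by_contra! h
  have hle : Subgroup.closure (μ.support) ≤ stabilizer SL2 (ℝ ∙ e) :=
    (Subgroup.closure_le _).2 fun s hs ↦ (mem_stabilizer_span_singleton_iff_wedge he).2 (h s hs)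
  exact hμ.not_isSolvable <| isSolvable_of_commutators_commute _ fun a ha b hb c hc d hd ↦
    commute_of_smul_eq he
      (commutatorElement_smul_eq_of_mem_stabilizer (hle ha) (hle hb))
      (commutatorElement_smul_eq_of_mem_stabilizer (hle hc) (hle hd))

lemma ZariskiDense.exists_not_commute (hμ : ZariskiDense μ) :
    ∃ s ∈ μ.support, ∃ t ∈ μ.support, ¬ Commute s t := by
  by_contra! h
  have := Subgroup.isMulCommutative_closure fun s hs t ht ↦ (h s hs t ht).eq
  exact hμ.not_isSolvable (Group.isSolvable_of_comm mul_comm')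

lemma ZariskiDense.exists_notMem_stabilizer_pair (hμ : ZariskiDense μ) {e f : Plane}
    (hef : wedge e f ≠ 0) :
    ∃ s ∈ μ.support, s ∉ stabilizer SL2 ({ℝ ∙ e, ℝ ∙ f} : Set (Submodule ℝ Plane)) := by
  by_contra! h
  have hle : Subgroup.closure (μ.support) ≤
      stabilizer SL2 ({ℝ ∙ e, ℝ ∙ f} : Set (Submodule ℝ Plane)) := (Subgroup.closure_le _).2 h
  have hle' := hle
  rw [Set.pair_comm] at hle'
  exact hμ.not_isSolvable <| isSolvable_of_commutators_commute _ fun a ha b hb c hc d hd ↦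
    commute_of_mem_stabilizer_of_mem_stabilizer hef
      (commutatorElement_mem_stabilizer_of_mem_stabilizer_pair (hle ha) (hle hb))
      (commutatorElement_mem_stabilizer_of_mem_stabilizer_pair (hle' ha) (hle' hb))
      (commutatorElement_mem_stabilizer_of_mem_stabilizer_pair (hle hc) (hle hd))
      (commutatorElement_mem_stabilizer_of_mem_stabilizer_pair (hle' hc) (hle' hd))

lemma ZariskiDense.exists_not_preserves_pair (hμ : ZariskiDense μ) {e f : Plane}
    (hef : wedge e f ≠ 0) :
    ∃ s ∈ μ.support, ¬ (wedge e (s • e) = 0 ∧ wedge f (s • f) = 0) ∧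
      ¬ (wedge f (s • e) = 0 ∧ wedge e (s • f) = 0) := by
  have he : e ≠ 0 := by rintro rfl; simp at hef
  have hf : f ≠ 0 := by rintro rfl; simp at hef
  obtain ⟨s, hs, hns⟩ := hμ.exists_notMem_stabilizer_pair hef
  refine ⟨s, hs, not_or.1 fun h ↦ hns ?_⟩
  have hse := (smul_ne_zero_iff_ne s).2 he
  have hsf := (smul_ne_zero_iff_ne s).2 hf
  rwa [mem_stabilizer_iff, Set.smul_set_insert, Set.smul_set_singleton, smul_span_singleton,
    smul_span_singleton, eq_comm, Set.pair_eq_pair_iff, span_singleton_eq_iff_wedge_eq_zero he hse,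
    span_singleton_eq_iff_wedge_eq_zero hf hsf, span_singleton_eq_iff_wedge_eq_zero he hsf,
    span_singleton_eq_iff_wedge_eq_zero hf hse, and_comm (a := wedge e (s • f) = 0)]

end ZariskiDensity

section Support

variable {X Y M : Type*}

lemma mk_mem_support_prod [TopologicalSpace X] [MeasurableSpace X] [TopologicalSpace Y]
    [MeasurableSpace Y] {μ : Measure X} {ν : Measure Y} [SFinite ν] {x : X} {y : Y}
    (hx : x ∈ μ.support) (hy : y ∈ ν.support) : (x, y) ∈ (μ.prod ν).support := by
  rw [Measure.mem_support_iff_forall] at hx hy ⊢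
  intro U hU
  obtain ⟨A, hA, B, hB, hAB⟩ := mem_nhds_prod_iff.1 hU
  calc 0 < μ A * ν B := ENNReal.mul_pos (hx A hA).ne' (hy B hB).ne'
    _ = (μ.prod ν) (A ×ˢ B) := (Measure.prod_prod A B).symm
    _ ≤ (μ.prod ν) U := measure_mono hAB

lemma map_mem_support_map [TopologicalSpace X] [MeasurableSpace X] [TopologicalSpace Y]
    [MeasurableSpace Y] {μ : Measure X} {f : X → Y} (hf : AEMeasurable f μ)
    (hf' : Continuous f) {x : X} (hx : x ∈ μ.support) : f x ∈ (μ.map f).support := by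
  rw [Measure.mem_support_iff_forall] at hx ⊢
  exact fun U hU ↦ (hx _ (hf'.continuousAt hU)).trans_le (Measure.le_map_apply hf U)

lemma mul_mem_support_mconv [Monoid M] [TopologicalSpace M] [ContinuousMul M] [MeasurableSpace M]
    [MeasurableMul₂ M] {μ ν : Measure M} [SFinite ν] {x y : M} (hx : x ∈ μ.support)
    (hy : y ∈ ν.support) : x * y ∈ (μ ∗ₘ ν).support :=
  map_mem_support_map (f := fun p : M × M ↦ p.1 * p.2) measurable_mul.aemeasurable
    continuous_mul (mk_mem_support_prod hx hy)

lemma integral_pos_of_mem_support [TopologicalSpace X] [MeasurableSpace X] {μ : Measure X}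
    {f : X → ℝ} (hf : Continuous f) (hf₀ : 0 ≤ f) (hfi : Integrable f μ) {x : X}
    (hx : x ∈ μ.support) (hfx : f x ≠ 0) : 0 < ∫ y, f y ∂μ :=
  (integral_pos_iff_support_of_nonneg hf₀ hfi).2 <|
    (Measure.mem_support_iff_forall x).1 hx _ <| hf.isOpen_support.mem_nhds hfx

end Support

section SineDistance

/-- The sine of the angle between the lines spanned by two nonzero vectors, the standard distance
on the projective line. -/
def sinDist (v w : Plane) : ℝ := |wedge v w| / (‖v‖ * ‖w‖)

lemma sinDist_nonneg (v w : Plane) : 0 ≤ sinDist v w := by unfold sinDist; positivity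

lemma sinDist_le_one (v w : Plane) : sinDist v w ≤ 1 :=
  div_le_one_of_le₀ (abs_wedge_le v w) (by positivity)

lemma norm_sinDist_le_one (v w : Plane) : ‖sinDist v w‖ ≤ 1 :=
  (Real.norm_of_nonneg (sinDist_nonneg v w)).trans_le (sinDist_le_one v w)

lemma sinDist_comm (v w : Plane) : sinDist v w = sinDist w v := by
  rw [sinDist, sinDist, wedge_swap, abs_neg, mul_comm]

lemma sinDist_smul_smul {c c' : ℝ} (hc : c ≠ 0) (hc' : c' ≠ 0) (v w : Plane) :
    sinDist (c • v) (c' • w) = sinDist v w := by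
  simp only [sinDist, map_smul, LinearMap.smul_apply, smul_eq_mul, norm_smul, abs_mul,
    Real.norm_eq_abs]
  rw [← mul_assoc, mul_mul_mul_comm, mul_comm |c'|,
    mul_div_mul_left _ _ (mul_ne_zero (abs_ne_zero.2 hc) (abs_ne_zero.2 hc'))]

lemma sinDist_ne_zero {v w : Plane} (h : wedge v w ≠ 0) : sinDist v w ≠ 0 := by
  have hv : v ≠ 0 := by rintro rfl; simp at h
  have hw : w ≠ 0 := by rintro rfl; simp at h
  exact div_ne_zero (abs_ne_zero.2 h) (mul_ne_zero (norm_ne_zero_iff.2 hv) (norm_ne_zero_iff.2 hw))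

lemma continuousOn_sinDist {X : Type*} [TopologicalSpace X] {s : Set X} {f g : X → Plane}
    (hf : ContinuousOn f s) (hg : ContinuousOn g s) (hf₀ : ∀ x ∈ s, f x ≠ 0)
    (hg₀ : ∀ x ∈ s, g x ≠ 0) : ContinuousOn (fun x ↦ sinDist (f x) (g x)) s := by
  refine (continuous_wedge.comp_continuousOn (hf.prodMk hg)).abs.div (hf.norm.mul hg.norm) ?_
  exact fun x hx ↦ mul_ne_zero (norm_ne_zero_iff.2 (hf₀ x hx)) (norm_ne_zero_iff.2 (hg₀ x hx))

@[fun_prop] lemma measurable_sinDist {X : Type*} [MeasurableSpace X] {f g : X → Plane}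
    (hf : Measurable f) (hg : Measurable g) : Measurable fun x ↦ sinDist (f x) (g x) :=
  (continuous_wedge.measurable.comp (hf.prodMk hg)).abs.div (hf.norm.mul hg.norm)

end SineDistance

section Nondegeneracy

open scoped Pointwise
open MulAction

lemma exists_forall_smul_eq_smul_of_three_lines {e f w : Plane} (hef : wedge e f ≠ 0)
    (hew : wedge e w ≠ 0) (hfw : wedge f w ≠ 0) {g : SL2} (hge : g ∈ stabilizer SL2 (ℝ ∙ e))
    (hgf : g ∈ stabilizer SL2 (ℝ ∙ f)) (hgw : g ∈ stabilizer SL2 (ℝ ∙ w)) :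
    ∃ c : ℝ, ∀ v : Plane, g • v = c • v := by
  obtain ⟨a, ha⟩ := exists_smul_eq_smul_of_mem_stabilizer hge
  obtain ⟨b, hb⟩ := exists_smul_eq_smul_of_mem_stabilizer hgf
  obtain ⟨c, hc⟩ := exists_smul_eq_smul_of_mem_stabilizer hgw
  have hac : c * a = 1 := by simpa [ha, hc, ← mul_assoc, hew] using wedge_smul_smul g e w
  have hbc : c * b = 1 := by simpa [hb, hc, ← mul_assoc, hfw] using wedge_smul_smul g f w
  have hba : b = a := by
    calc b = b * (c * a) := by rw [hac, mul_one]
      _ = a := by rw [← mul_assoc, mul_comm b, hbc, one_mul]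
  refine ⟨a, fun v ↦ smul_right_injective Plane hef ?_⟩
  simp only [← smul_comm g, smul_comm _ a]
  rw [wedge_smul_eq_add, smul_add, smul_comm g, smul_comm g, ha, hb, hba, smul_add,
    smul_comm a, smul_comm a]

variable {μ : Measure SL2}

lemma inv_mul_mem_stabilizer_span_singleton {s a : SL2} {w : Plane} (hw : w ≠ 0)
    (h : wedge (s • w) (a • w) = 0) : s⁻¹ * a ∈ stabilizer SL2 (ℝ ∙ w) := by
  rwa [mem_stabilizer_span_singleton_iff_wedge hw, mul_smul, ← wedge_smul_smul s, smul_inv_smul]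

lemma commute_of_inv_mul_smul_eq_smul {s a b : SL2} {c d : ℝ}
    (ha : ∀ w : Plane, (s⁻¹ * a) • w = c • w) (hb : ∀ w : Plane, (s⁻¹ * b) • w = d • w) :
    Commute a b := by
  have eq_smul {a : SL2} {c : ℝ} (ha : ∀ w : Plane, (s⁻¹ * a) • w = c • w) (w : Plane) :
      a • w = c • (s • w) := by
    rw [← smul_comm s c w, ← ha, mul_smul, smul_inv_smul]
  refine eq_of_smul_eq_smul (α := Plane) fun w ↦ ?_
  rw [mul_smul, mul_smul, eq_smul ha, eq_smul hb, eq_smul hb, eq_smul ha, smul_comm s d (s • w),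
    smul_comm s c (s • w), smul_comm c d]

/- Otherwise all `s⁻¹ * a` with `a` in the support fix the lines through `v`, `s • v` and
`s • s • v`, so that either these lines are not distinct and the support preserves a line or a pair
of lines, or all `s⁻¹ * a` are central. -/
lemma ZariskiDense.exists_wedge_three_steps_ne_zero (hμ : ZariskiDense μ) {v : Plane}
    (hv : v ≠ 0) {s : SL2} (hs : s ∈ μ.support) :
    ∃ a ∈ μ.support, ∃ b ∈ μ.support, ∃ c ∈ μ.support,
      wedge (s • s • s • v) (a • b • c • v) ≠ 0 := by
  by_contra! H
  have ne_zero {w : Plane} (hw : w ≠ 0) : s • w ≠ 0 := (smul_ne_zero_iff_ne s).2 hw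
  have fix₀ (a) (ha : a ∈ μ.support) : s⁻¹ * a ∈ stabilizer SL2 (ℝ ∙ v) :=
    inv_mul_mem_stabilizer_span_singleton hv
      (by simpa only [wedge_smul_smul] using H s hs s hs a ha)
  have fix₁ (a) (ha : a ∈ μ.support) : s⁻¹ * a ∈ stabilizer SL2 (ℝ ∙ (s • v)) :=
    inv_mul_mem_stabilizer_span_singleton (ne_zero hv)
      (by simpa only [wedge_smul_smul] using H s hs a ha s hs)
  have fix₂ (a) (ha : a ∈ μ.support) : s⁻¹ * a ∈ stabilizer SL2 (ℝ ∙ (s • s • v)) :=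
    inv_mul_mem_stabilizer_span_singleton (ne_zero (ne_zero hv)) (H a ha s hs s hs)
  by_cases h₀₁ : wedge v (s • v) = 0
  · obtain ⟨a, ha, hva⟩ := hμ.exists_wedge_smul_ne_zero hv
    have hsv := (mem_stabilizer_span_singleton_iff_wedge hv).2 h₀₁
    refine hva ((mem_stabilizer_span_singleton_iff_wedge hv).1 ?_)
    simpa using mul_mem hsv (fix₀ a ha)
  by_cases h₀₂ : wedge v (s • s • v) = 0
  · obtain ⟨a, ha, hna⟩ := hμ.exists_notMem_stabilizer_pair h₀₁
    have hs_pair : s ∈ stabilizer SL2 ({ℝ ∙ v, ℝ ∙ (s • v)} : Set (Submodule ℝ Plane)) := by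
      rw [mem_stabilizer_iff, Set.smul_set_insert, Set.smul_set_singleton, smul_span_singleton,
        smul_span_singleton,
        ← (span_singleton_eq_iff_wedge_eq_zero hv (ne_zero (ne_zero hv))).2 h₀₂, Set.pair_comm]
    have hsa_pair : s⁻¹ * a ∈ stabilizer SL2 ({ℝ ∙ v, ℝ ∙ (s • v)} : Set (Submodule ℝ Plane)) := by
      rw [mem_stabilizer_iff, Set.smul_set_insert, Set.smul_set_singleton,
        mem_stabilizer_iff.1 (fix₀ a ha), mem_stabilizer_iff.1 (fix₁ a ha)]
    exact hna (by simpa using mul_mem hs_pair hsa_pair)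
  obtain ⟨a, ha, b, hb, hab⟩ := hμ.exists_not_commute
  have scalar (a) (ha : a ∈ μ.support) : ∃ c : ℝ, ∀ w : Plane, (s⁻¹ * a) • w = c • w :=
    exists_forall_smul_eq_smul_of_three_lines h₀₁ h₀₂ (by simpa using h₀₁)
      (fix₀ a ha) (fix₁ a ha) (fix₂ a ha)
  obtain ⟨c, hc⟩ := scalar a ha
  obtain ⟨d, hd⟩ := scalar b hb
  exact hab (commute_of_inv_mul_smul_eq_smul hc hd)

lemma ZariskiDense.exists_wedge_smul_smul_ne_zero [IsProbabilityMeasure μ] (hμ : ZariskiDense μ)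
    {v : Plane} (hv : v ≠ 0) :
    ∃ s ∈ (convPow μ 3).support, ∃ t ∈ (convPow μ 3).support, wedge (s • v) (t • v) ≠ 0 := by
  obtain ⟨s, hs⟩ := Measure.nonempty_support (IsProbabilityMeasure.ne_zero μ)
  obtain ⟨a, ha, b, hb, c, hc, h⟩ := hμ.exists_wedge_three_steps_ne_zero hv hs
  have mul_mem {x y z : SL2} (hx : x ∈ μ.support) (hy : y ∈ μ.support) (hz : z ∈ μ.support) :
      x * (y * z) ∈ (convPow μ 3).support := by
    rw [convPow_succ, convPow_succ, convPow_one]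
    exact mul_mem_support_mconv hx (mul_mem_support_mconv hy hz)
  exact ⟨_, mul_mem hs hs hs, _, mul_mem ha hb hc, by simpa only [mul_smul] using h⟩

lemma integral_sinDist_pos {ρ : Measure SL2} [IsProbabilityMeasure ρ] {v : Plane} (hv : v ≠ 0)
    {s t : SL2} (hs : s ∈ ρ.support) (ht : t ∈ ρ.support) (hst : wedge (s • v) (t • v) ≠ 0) :
    0 < ∫ p, sinDist (p.1 • v) (p.2 • v) ∂(ρ.prod ρ) := by
  have hc : Continuous fun p : SL2 × SL2 ↦ sinDist (p.1 • v) (p.2 • v) := by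
    rw [← continuousOn_univ]
    exact continuousOn_sinDist (by fun_prop) (by fun_prop)
      (fun p _ ↦ (smul_ne_zero_iff_ne _).2 hv) (fun p _ ↦ (smul_ne_zero_iff_ne _).2 hv)
  exact integral_pos_of_mem_support hc (fun p ↦ sinDist_nonneg _ _)
    (.of_bound hc.aestronglyMeasurable 1 (.of_forall fun p ↦ norm_sinDist_le_one _ _))
    (mk_mem_support_prod hs ht) (sinDist_ne_zero hst)

lemma exists_le_integral_sinDist {ρ : Measure SL2} [IsProbabilityMeasure ρ]
    (h : ∀ v : Plane, v ≠ 0 → ∃ s ∈ ρ.support, ∃ t ∈ ρ.support, wedge (s • v) (t • v) ≠ 0) :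
    ∃ Δ > 0, ∀ v : Plane, v ≠ 0 → Δ ≤ ∫ p, sinDist (p.1 • v) (p.2 • v) ∂(ρ.prod ρ) := by
  have ne_zero : ∀ v ∈ Metric.sphere (0 : Plane) 1, v ≠ 0 :=
    fun v hv ↦ ne_zero_of_mem_unit_sphere ⟨v, hv⟩
  have hc : ContinuousOn (fun v : Plane ↦ ∫ p, sinDist (p.1 • v) (p.2 • v) ∂(ρ.prod ρ))
      (Metric.sphere 0 1) :=
    continuousOn_of_dominated (bound := fun _ ↦ 1)
      (fun v _ ↦ Measurable.aestronglyMeasurable (by fun_prop))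
      (fun v _ ↦ .of_forall fun p ↦ norm_sinDist_le_one _ _) (integrable_const _)
      (.of_forall fun p ↦ continuousOn_sinDist (by fun_prop) (by fun_prop)
        (fun v hv ↦ (smul_ne_zero_iff_ne _).2 (ne_zero v hv))
        (fun v hv ↦ (smul_ne_zero_iff_ne _).2 (ne_zero v hv)))
  obtain ⟨v₀, hv₀, hmin⟩ := (isCompact_sphere (0 : Plane) 1).exists_isMinOn
    (NormedSpace.sphere_nonempty.2 zero_le_one) hc
  obtain ⟨s, hs, t, ht, hst⟩ := h v₀ (ne_zero v₀ hv₀)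
  refine ⟨_, integral_sinDist_pos (ne_zero v₀ hv₀) hs ht hst, fun v hv ↦ ?_⟩
  have hv' : ‖v‖⁻¹ ≠ 0 := inv_ne_zero (norm_ne_zero_iff.2 hv)
  have hmem : ‖v‖⁻¹ • v ∈ Metric.sphere (0 : Plane) 1 := by
    simpa using norm_smul_inv_norm (𝕜 := ℝ) hv
  simpa only [Set.mem_ofPred_eq, smul_comm _ ‖v‖⁻¹, sinDist_smul_smul hv' hv'] using hmin hmem

end Nondegeneracy

section NormCocycle

/-- The norm cocycle `log (‖g v‖ / ‖v‖)`, as a function of vectors rather than lines. -/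
def normCocycle (g : SL2) (v : Plane) : ℝ := Real.log (‖g • v‖ / ‖v‖)

lemma log_norm_smul (g : SL2) {v : Plane} (hv : v ≠ 0) :
    Real.log ‖g • v‖ = normCocycle g v + Real.log ‖v‖ := by
  rw [normCocycle, Real.log_div (norm_smul_pos g hv).ne' (norm_ne_zero_iff.2 hv), sub_add_cancel]

lemma normCocycle_mul (g h : SL2) {v : Plane} (hv : v ≠ 0) :
    normCocycle (g * h) v = normCocycle g (h • v) + normCocycle h v := by
  linarith [mul_smul g h v ▸ log_norm_smul (g * h) hv, log_norm_smul h hv,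
    log_norm_smul g ((smul_ne_zero_iff_ne h).2 hv)]

lemma normCocycle_one (v : Plane) : normCocycle 1 v = 0 := by
  rcases eq_or_ne v 0 with rfl | hv
  · simp [normCocycle]
  · rw [normCocycle, one_smul, div_self (norm_ne_zero_iff.2 hv), Real.log_one]

lemma normCocycle_smul (g : SL2) (v : Plane) {c : ℝ} (hc : c ≠ 0) :
    normCocycle g (c • v) = normCocycle g v := by
  rw [normCocycle, smul_comm, norm_smul c, norm_smul c,
    mul_div_mul_left _ _ (norm_ne_zero_iff.2 hc), normCocycle]

lemma abs_normCocycle_le (g : SL2) {v : Plane} (hv : v ≠ 0) :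
    |normCocycle g v| ≤ Real.log (opNorm g) := by
  have hv' := norm_pos_iff.2 hv
  rw [abs_le, ← Real.log_inv]
  refine ⟨Real.log_le_log (inv_pos.2 (opNorm_pos g)) ?_,
    Real.log_le_log (div_pos (norm_smul_pos g hv) hv') ?_⟩
  · rw [le_div_iff₀ hv', inv_mul_le_iff₀ (opNorm_pos g)]
    exact norm_le_opNorm_mul_norm_smul g v
  · exact (div_le_iff₀ hv').2 (norm_smul_le_opNorm g v)

@[fun_prop] lemma measurable_normCocycle {α : Type*} [MeasurableSpace α] {f : α → SL2}
    {v : α → Plane} (hf : Measurable f) (hv : Measurable v) :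
    Measurable fun a ↦ normCocycle (f a) (v a) :=
  Real.measurable_log.comp ((hf.smul hv).norm.div hv.norm)

variable {μ : Measure SL2} [IsProbabilityMeasure μ]

lemma integrable_opNorm_rpow_convPow {ε : ℝ} (hε : 0 ≤ ε)
    (h : ∫⁻ g, ENNReal.ofReal (opNorm g ^ ε) ∂μ < ∞) (n : ℕ) :
    Integrable (fun g ↦ opNorm g ^ ε) (convPow μ n) :=
  ⟨Measurable.aestronglyMeasurable (by fun_prop), (hasFiniteIntegral_iff_ofReal
    (.of_forall fun g ↦ Real.rpow_nonneg (opNorm_nonneg g) ε)).2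
      (lintegral_opNorm_rpow_convPow_lt_top hε h n)⟩

lemma HasExpMoment.integrable_log_opNorm (hμ : HasExpMoment μ) (n : ℕ) :
    Integrable (fun g ↦ Real.log (opNorm g)) (convPow μ n) := by
  obtain ⟨ε, hε, h⟩ := hμ
  refine ((integrable_opNorm_rpow_convPow hε.le h n).div_const ε).mono'
    (Measurable.aestronglyMeasurable (by fun_prop)) (.of_forall fun g ↦ ?_)
  rw [Real.norm_of_nonneg (log_opNorm_nonneg g)]
  exact Real.log_le_rpow_div (opNorm_nonneg g) hε

lemma integrable_normCocycle {ρ : Measure SL2} (hρ : Integrable (fun g ↦ Real.log (opNorm g)) ρ)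
    {v : Plane} (hv : v ≠ 0) : Integrable (fun g ↦ normCocycle g v) ρ :=
  hρ.mono' (Measurable.aestronglyMeasurable (by fun_prop))
    (.of_forall fun g ↦ abs_normCocycle_le g hv)

end NormCocycle

section ProjectiveLine

/-- A vector spanning the line `x`. -/
def repVec (x : PX) : Plane := WithLp.toLp 2 x.rep

lemma repVec_ne_zero (x : PX) : repVec x ≠ 0 := fun h ↦
  x.rep_nonzero ((WithLp.toLp_eq_zero 2).1 h)

lemma enorm2_eq_norm (v : Fin 2 → ℝ) : enorm2 v = ‖(WithLp.toLp 2 v : Plane)‖ := by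
  rw [enorm2, EuclideanSpace.norm_eq, Fin.sum_univ_two]
  simp only [Real.norm_eq_abs, sq_abs]

lemma toLp_mulVec (g : SL2) (v : Fin 2 → ℝ) :
    (WithLp.toLp 2 ((g : Matrix (Fin 2) (Fin 2) ℝ).mulVec v) : Plane) = g • WithLp.toLp 2 v := by
  refine plane_ext ?_ ?_ <;>
    simp [smul_apply_zero, smul_apply_one, Matrix.mulVec, dotProduct, Fin.sum_univ_two]

lemma cocycle_eq_normCocycle (g : SL2) (x : PX) : cocycle g x = normCocycle g (repVec x) := by
  rw [cocycle, normCocycle, enorm2_eq_norm, enorm2_eq_norm, toLp_mulVec, repVec]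

lemma repVec_mk' (v : {v : Fin 2 → ℝ // v ≠ 0}) :
    ∃ c : ℝ, c ≠ 0 ∧ repVec (Projectivization.mk' ℝ v) = c • WithLp.toLp 2 v.1 := by
  obtain ⟨c, hc⟩ := Projectivization.exists_smul_eq_mk_rep ℝ v.1 v.2
  exact ⟨c, c.ne_zero, congrArg (WithLp.toLp 2) hc.symm⟩

lemma cocycle_mk' (g : SL2) (v : {v : Fin 2 → ℝ // v ≠ 0}) :
    cocycle g (Projectivization.mk' ℝ v) = normCocycle g (WithLp.toLp 2 v.1) := by
  obtain ⟨c, hc, h⟩ := repVec_mk' v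
  rw [cocycle_eq_normCocycle, h, normCocycle_smul g _ hc]

lemma mulVec_ne_zero (g : SL2) {v : Fin 2 → ℝ} (hv : v ≠ 0) :
    (g : Matrix (Fin 2) (Fin 2) ℝ).mulVec v ≠ 0 := fun h ↦
  (smul_ne_zero_iff_ne g).2 ((WithLp.toLp_eq_zero 2).not.2 hv)
    ((toLp_mulVec g v).symm.trans ((WithLp.toLp_eq_zero 2).2 h))

lemma act_mk' (g : SL2) (v : {v : Fin 2 → ℝ // v ≠ 0}) :
    act g (Projectivization.mk' ℝ v) = Projectivization.mk' ℝ ⟨_, mulVec_ne_zero g v.2⟩ := rfl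

lemma cocycle_mul (g h : SL2) (x : PX) : cocycle (g * h) x = cocycle g (act h x) + cocycle h x := by
  obtain ⟨v, rfl⟩ := Quotient.exists_rep x
  change cocycle (g * h) (Projectivization.mk' ℝ v) = cocycle g (act h (Projectivization.mk' ℝ v)) +
    cocycle h (Projectivization.mk' ℝ v)
  rw [act_mk', cocycle_mk', cocycle_mk', cocycle_mk', toLp_mulVec,
    normCocycle_mul g h ((WithLp.toLp_eq_zero 2).not.2 v.2)]

lemma cocycle_one (x : PX) : cocycle 1 x = 0 := by
  rw [cocycle_eq_normCocycle, normCocycle_one]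

lemma abs_cocycle_le (g : SL2) (x : PX) : |cocycle g x| ≤ Real.log (opNorm g) := by
  rw [cocycle_eq_normCocycle]
  exact abs_normCocycle_le g (repVec_ne_zero x)

lemma isOpenQuotientMap_mk' :
    IsOpenQuotientMap (Projectivization.mk' ℝ : {v : Fin 2 → ℝ // v ≠ 0} → PX) := by
  refine ⟨Quotient.mk_surjective, continuous_quotient_mk', fun U hU ↦ isOpen_coinduced.2 ?_⟩
  have smul_ne_zero (c : ℝˣ) (v : {v : Fin 2 → ℝ // v ≠ 0}) : c • v.1 ≠ 0 :=
    (smul_ne_zero_iff_ne c).2 v.2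
  have preimage_eq : Projectivization.mk' ℝ ⁻¹' (Projectivization.mk' ℝ '' U) =
      ⋃ c : ℝˣ, (fun v : {v : Fin 2 → ℝ // v ≠ 0} ↦ ⟨c • v.1, smul_ne_zero c v⟩) ⁻¹' U := by
    ext v
    simp only [Set.mem_preimage, Set.mem_image, Set.mem_iUnion]
    constructor
    · rintro ⟨w, hw, h⟩
      obtain ⟨c, hc⟩ := (Projectivization.mk_eq_mk_iff ℝ w.1 v.1 w.2 v.2).1 h
      exact ⟨c, by simpa only [hc] using hw⟩
    · rintro ⟨c, hc⟩
      exact ⟨_, hc, (Projectivization.mk_eq_mk_iff ℝ _ _ (smul_ne_zero c v) v.2).2 ⟨c, rfl⟩⟩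
  change IsOpen (Projectivization.mk' ℝ ⁻¹' (Projectivization.mk' ℝ '' U))
  rw [preimage_eq]
  exact isOpen_iUnion fun c ↦ hU.preimage (by fun_prop)

lemma continuous_cocycle : Continuous fun p : SL2 × PX ↦ cocycle p.1 p.2 := by
  refine (IsOpenQuotientMap.id.prodMap isOpenQuotientMap_mk').continuous_comp_iff.1 ?_
  have toLp_ne_zero (v : {v : Fin 2 → ℝ // v ≠ 0}) : (WithLp.toLp 2 v.1 : Plane) ≠ 0 :=
    (WithLp.toLp_eq_zero 2).not.2 v.2
  simp only [Function.comp_def, Prod.map, id, cocycle_mk', normCocycle]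
  refine Continuous.log (.div (by fun_prop) (by fun_prop) ?_) ?_
  · exact fun p ↦ norm_ne_zero_iff.2 (toLp_ne_zero p.2)
  · exact fun p ↦ (div_pos (norm_smul_pos p.1 (toLp_ne_zero p.2))
      (norm_pos_iff.2 (toLp_ne_zero p.2))).ne'

lemma continuous_act : Continuous fun p : SL2 × PX ↦ act p.1 p.2 := by
  refine (IsOpenQuotientMap.id.prodMap isOpenQuotientMap_mk').continuous_comp_iff.1 ?_
  refine isOpenQuotientMap_mk'.continuous.comp (.subtype_mk ?_ _)
  exact (continuous_subtype_val.comp continuous_fst).matrix_mulVec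
    (continuous_subtype_val.comp continuous_snd)

@[fun_prop] lemma measurable_cocycle {α : Type*} [MeasurableSpace α] {f : α → SL2} {x : α → PX}
    (hf : Measurable f) (hx : Measurable x) : Measurable fun a ↦ cocycle (f a) (x a) :=
  continuous_cocycle.measurable.comp (f := fun a ↦ (f a, x a)) (hf.prodMk hx)

@[fun_prop] lemma measurable_act {α : Type*} [MeasurableSpace α] {f : α → SL2} {x : α → PX}
    (hf : Measurable f) (hx : Measurable x) : Measurable fun a ↦ act (f a) (x a) :=
  continuous_act.measurable.comp (hf.prodMk hx)

end ProjectiveLine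

section LyapunovExponent

variable {μ : Measure SL2} {ν : Measure PX} [IsProbabilityMeasure ν]

lemma IsStationaryMeas.map_act_prod (hν : IsStationaryMeas μ ν) :
    (μ.prod ν).map (fun p ↦ act p.1 p.2) = ν := by
  have hact : Measurable fun p : SL2 × PX ↦ act p.1 p.2 := by fun_prop
  have map_act_apply {s : Set PX} (hs : MeasurableSet s) (g : SL2) :
      ν.map (act g) s = ν (Prod.mk g ⁻¹' ((fun p : SL2 × PX ↦ act p.1 p.2) ⁻¹' s)) :=
    Measure.map_apply (by fun_prop) hs
  have hmap : Measurable fun g ↦ ν.map (act g) := Measure.measurable_of_measurable_coe _ fun s hs ↦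
    by simpa only [map_act_apply hs] using measurable_measure_prodMk_left (hact hs)
  refine Measure.ext fun s hs ↦ ?_
  conv_rhs => rw [← hν]
  rw [Measure.map_apply hact hs, Measure.prod_apply (hact hs),
    Measure.bind_apply hs hmap.aemeasurable]
  simp only [map_act_apply hs]

lemma abs_integral_cocycle_le {ρ : Measure SL2} (hρ : Integrable (fun g ↦ Real.log (opNorm g)) ρ)
    (x : PX) : |∫ g, cocycle g x ∂ρ| ≤ ∫ g, Real.log (opNorm g) ∂ρ :=
  norm_integral_le_of_norm_le (f := fun g ↦ cocycle g x) hρ (.of_forall fun g ↦ abs_cocycle_le g x)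

lemma integrable_cocycle {ρ : Measure SL2} (hρ : Integrable (fun g ↦ Real.log (opNorm g)) ρ)
    (x : PX) : Integrable (fun g ↦ cocycle g x) ρ :=
  hρ.mono' (Measurable.aestronglyMeasurable (by fun_prop)) (.of_forall fun g ↦ abs_cocycle_le g x)

variable [IsProbabilityMeasure μ]

lemma integral_cocycle_convPow_succ (hμ : HasExpMoment μ) (n : ℕ) (x : PX) :
    ∫ g, cocycle g x ∂(convPow μ (n + 1)) =
      ∫ h, ((∫ g, cocycle g (act h x) ∂(convPow μ n)) + cocycle h x) ∂μ := by
  rw [integral_convPow_add μ n 1 (integrable_cocycle (hμ.integrable_log_opNorm _) x), convPow_one]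
  refine integral_congr_ae (.of_forall fun h ↦ ?_)
  simp only [cocycle_mul]
  rw [integral_add (integrable_cocycle (hμ.integrable_log_opNorm n) _) (integrable_const _),
    integral_const, probReal_univ, one_smul]

lemma integral_integral_cocycle_convPow (hμ : HasExpMoment μ) (hν : IsStationaryMeas μ ν) (n : ℕ) :
    ∫ x, ∫ g, cocycle g x ∂(convPow μ n) ∂ν = n * ∫ g, ∫ x, cocycle g x ∂ν ∂μ := by
  have hact : Measurable fun p : SL2 × PX ↦ act p.1 p.2 := by fun_prop
  have integrable_cocycle_prod : Integrable (fun p : SL2 × PX ↦ cocycle p.1 p.2) (μ.prod ν) :=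
    ((convPow_one μ ▸ hμ.integrable_log_opNorm 1).comp_fst ν).mono'
      (Measurable.aestronglyMeasurable (by fun_prop)) (.of_forall fun p ↦ abs_cocycle_le _ _)
  induction n with
  | zero =>
    have integral_dirac_one (x : PX) : ∫ g, cocycle g x ∂(Measure.dirac (1 : SL2)) = 0 := by
      rw [integral_dirac' _ _ (Measurable.stronglyMeasurable (by fun_prop)), cocycle_one]
    simp only [convPow_zero, integral_dirac_one, integral_zero, Nat.cast_zero, zero_mul]
  | succ n ih =>
    set K : PX → ℝ := fun x ↦ ∫ g, cocycle g x ∂(convPow μ n)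
    have hK : Measurable K := (StronglyMeasurable.integral_prod_left
      (f := fun (g : SL2) (x : PX) ↦ cocycle g x) (Measurable.stronglyMeasurable
        (by fun_prop))).measurable
    have hKi : Integrable (fun p : SL2 × PX ↦ K (act p.1 p.2)) (μ.prod ν) :=
      .of_bound (hK.comp hact).aestronglyMeasurable _
        (.of_forall fun p ↦ abs_integral_cocycle_le (hμ.integrable_log_opNorm n) _)
    calc ∫ x, ∫ g, cocycle g x ∂(convPow μ (n + 1)) ∂ν
        = ∫ x, ∫ h, (K (act h x) + cocycle h x) ∂μ ∂ν := by
          simp only [integral_cocycle_convPow_succ hμ, K]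
      _ = ∫ p, (K (act p.1 p.2) + cocycle p.1 p.2) ∂(μ.prod ν) :=
          (integral_prod_symm _ (hKi.add integrable_cocycle_prod)).symm
      _ = ∫ x, K x ∂ν + ∫ g, ∫ x, cocycle g x ∂ν ∂μ := by
          rw [integral_add hKi integrable_cocycle_prod, integral_prod _ integrable_cocycle_prod]
          congr 1
          conv_rhs => rw [← hν.map_act_prod,
            integral_map hact.aemeasurable hK.aestronglyMeasurable]
      _ = (n + 1 : ℕ) * ∫ g, ∫ x, cocycle g x ∂ν ∂μ := by
          rw [ih]; push_cast; ring

lemma mul_lyapunov_le_integral_log_opNorm (hμ : HasExpMoment μ) (hν : IsStationaryMeas μ ν)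
    (n : ℕ) :
    n * ∫ g, ∫ x, cocycle g x ∂ν ∂μ ≤ ∫ g, Real.log (opNorm g) ∂(convPow μ n) := by
  rw [← integral_integral_cocycle_convPow hμ hν]
  have h := norm_integral_le_of_norm_le_const (μ := ν)
    (f := fun x ↦ ∫ g, cocycle g x ∂(convPow μ n))
    (.of_forall fun x ↦ abs_integral_cocycle_le (hμ.integrable_log_opNorm n) x)
  rw [probReal_univ, mul_one] at h
  exact (le_abs_self _).trans h

end LyapunovExponent

section LaplaceTransform

lemma exp_neg_le_one_sub_add_sq_mul_exp_abs (x : ℝ) :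
    Real.exp (-x) ≤ 1 - x + x ^ 2 * Real.exp |x| := by
  have h := Complex.norm_exp_sub_sum_le_norm_mul_exp (-x : ℝ) 2
  rw [Finset.sum_range_succ, Finset.sum_range_one, ← Complex.ofReal_exp] at h
  norm_cast at h
  simp only [pow_zero, pow_one, Nat.factorial_zero, Nat.factorial_one, Nat.cast_one, div_one,
    norm_neg, Real.norm_eq_abs, sq_abs] at h
  linarith [(abs_le.1 h).2]

lemma exp_neg_mul_le {a ε y L : ℝ} (ha : 0 < a) (hε : 0 ≤ ε) (hεa : ε ≤ a / 2) (hy : |y| ≤ L) :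
    Real.exp (-(ε * y)) ≤ 1 - ε * y + ε ^ 2 * (8 / a ^ 2 * Real.exp (a * L)) := by
  have hL : 0 ≤ L := (abs_nonneg y).trans hy
  have exp_abs_le : Real.exp |ε * y| ≤ Real.exp (a / 2 * L) := by
    rw [Real.exp_le_exp, abs_mul, abs_of_nonneg hε]
    gcongr
  have sq_le : y ^ 2 ≤ 8 / a ^ 2 * Real.exp (a / 2 * L) :=
    calc y ^ 2 ≤ L ^ 2 := sq_le_sq.2 (hy.trans (le_abs_self L))
      _ = 8 / a ^ 2 * ((a / 2 * L) ^ 2 / 2) := by field_simp; ring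
      _ ≤ 8 / a ^ 2 * Real.exp (a / 2 * L) := by
        have := Real.quadratic_le_exp_of_nonneg (show 0 ≤ a / 2 * L by positivity)
        gcongr
        linarith [show 0 ≤ a / 2 * L by positivity]
  refine (exp_neg_le_one_sub_add_sq_mul_exp_abs _).trans (add_le_add_right ?_ _)
  calc (ε * y) ^ 2 * Real.exp |ε * y|
      ≤ ε ^ 2 * (8 / a ^ 2 * Real.exp (a / 2 * L)) * Real.exp (a / 2 * L) := by
        rw [mul_pow]
        gcongr
    _ = ε ^ 2 * (8 / a ^ 2 * Real.exp (a * L)) := by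
        rw [mul_assoc, mul_assoc, ← Real.exp_add, ← add_mul, add_halves]

lemma lintegral_exp_neg_mul_le {Ω : Type*} [MeasurableSpace Ω] {P : Measure Ω}
    [IsProbabilityMeasure P] {Y L : Ω → ℝ} {a ε : ℝ} (ha : 0 < a) (hε : 0 ≤ ε) (hεa : ε ≤ a / 2)
    (hYL : ∀ ω, |Y ω| ≤ L ω) (hY : Integrable Y P)
    (hL : Integrable (fun ω ↦ Real.exp (a * L ω)) P) :
    ∫⁻ ω, ENNReal.ofReal (Real.exp (-(ε * Y ω))) ∂P ≤ ENNReal.ofReal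
      (Real.exp (-(ε * ∫ ω, Y ω ∂P) + ε ^ 2 * (8 / a ^ 2 * ∫ ω, Real.exp (a * L ω) ∂P))) := by
  have exp_le (ω : Ω) := exp_neg_mul_le ha hε hεa (hYL ω)
  have hY' : Integrable (fun ω ↦ 1 - ε * Y ω) P := (integrable_const 1).sub (hY.const_mul ε)
  have hL' : Integrable (fun ω ↦ ε ^ 2 * (8 / a ^ 2 * Real.exp (a * L ω))) P :=
    (hL.const_mul _).const_mul _
  calc ∫⁻ ω, ENNReal.ofReal (Real.exp (-(ε * Y ω))) ∂P
      ≤ ∫⁻ ω, ENNReal.ofReal (1 - ε * Y ω + ε ^ 2 * (8 / a ^ 2 * Real.exp (a * L ω))) ∂P :=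
        lintegral_mono fun ω ↦ ENNReal.ofReal_le_ofReal (exp_le ω)
    _ = ENNReal.ofReal
        (1 - ε * ∫ ω, Y ω ∂P + ε ^ 2 * (8 / a ^ 2 * ∫ ω, Real.exp (a * L ω) ∂P)) := by
        rw [← ofReal_integral_eq_lintegral_ofReal (by exact hY'.add hL')
          (.of_forall fun ω ↦ (Real.exp_pos _).le.trans (exp_le ω)), integral_add hY' hL',
          integral_sub (integrable_const 1) (hY.const_mul ε)]
        simp only [integral_const_mul, integral_const, probReal_univ, smul_eq_mul, mul_one]
    _ ≤ _ := ENNReal.ofReal_le_ofReal <| by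
        linarith [Real.add_one_le_exp
          (-(ε * ∫ ω, Y ω ∂P) + ε ^ 2 * (8 / a ^ 2 * ∫ ω, Real.exp (a * L ω) ∂P))]

/-- The Laplace transform `E exp (-ε σ(g, ℝv))` of the norm cocycle at the line `ℝv`, where `g` has
law `ρ`. -/
def cocycleLaplace (ρ : Measure SL2) (ε : ℝ) (v : Plane) : ℝ≥0∞ :=
  ∫⁻ g, ENNReal.ofReal (Real.exp (-(ε * normCocycle g v))) ∂ρ

variable {μ : Measure SL2} [IsProbabilityMeasure μ] {ε : ℝ}

lemma cocycleLaplace_convPow_add_le {k n : ℕ} {r s : ℝ≥0∞}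
    (hs : ∀ v ≠ 0, cocycleLaplace (convPow μ n) ε v ≤ s)
    (hr : ∀ v ≠ 0, cocycleLaplace (convPow μ k) ε v ≤ r) {v : Plane} (hv : v ≠ 0) :
    cocycleLaplace (convPow μ (n + k)) ε v ≤ s * r := by
  have exp_mul (g h : SL2) : ENNReal.ofReal (Real.exp (-(ε * normCocycle (g * h) v))) =
      ENNReal.ofReal (Real.exp (-(ε * normCocycle g (h • v)))) *
        ENNReal.ofReal (Real.exp (-(ε * normCocycle h v))) := by
    rw [normCocycle_mul g h hv, ← ENNReal.ofReal_mul (Real.exp_pos _).le, ← Real.exp_add]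
    ring_nf
  calc cocycleLaplace (convPow μ (n + k)) ε v
      = ∫⁻ h, cocycleLaplace (convPow μ n) ε (h • v) *
          ENNReal.ofReal (Real.exp (-(ε * normCocycle h v))) ∂(convPow μ k) := by
        rw [cocycleLaplace, lintegral_convPow_add μ n k (by fun_prop)]
        simp_rw [exp_mul]
        refine lintegral_congr fun h ↦ lintegral_mul_const _ (by fun_prop)
    _ ≤ ∫⁻ h, s * ENNReal.ofReal (Real.exp (-(ε * normCocycle h v))) ∂(convPow μ k) := by
        gcongr with h
        exact hs _ ((smul_ne_zero_iff_ne h).2 hv)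
    _ = s * cocycleLaplace (convPow μ k) ε v := lintegral_const_mul _ (by fun_prop)
    _ ≤ s * r := by gcongr; exact hr v hv

lemma cocycleLaplace_convPow_mul_le {k : ℕ} {r : ℝ≥0∞}
    (hr : ∀ v ≠ 0, cocycleLaplace (convPow μ k) ε v ≤ r) (q : ℕ) {v : Plane} (hv : v ≠ 0) :
    cocycleLaplace (convPow μ (q * k)) ε v ≤ r ^ q := by
  induction q generalizing v with
  | zero =>
    rw [zero_mul, cocycleLaplace, lintegral_convPow_zero μ (by fun_prop), normCocycle_one]
    simp
  | succ q ih =>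
    rw [Nat.succ_mul, pow_succ]
    exact cocycleLaplace_convPow_add_le (fun _ ↦ ih) hr hv

lemma cocycleLaplace_le_lintegral_opNorm_rpow (hε : 0 ≤ ε) (ρ : Measure SL2) {v : Plane}
    (hv : v ≠ 0) : cocycleLaplace ρ ε v ≤ ∫⁻ g, ENNReal.ofReal (opNorm g ^ ε) ∂ρ := by
  refine lintegral_mono fun g ↦ ENNReal.ofReal_le_ofReal ?_
  rw [Real.rpow_def_of_pos (opNorm_pos g), Real.exp_le_exp, mul_comm, ← neg_mul]
  exact mul_le_mul_of_nonneg_right ((neg_le_abs _).trans (abs_normCocycle_le g hv)) hε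

lemma HasExpMoment.exists_cocycleLaplace_convPow_le (hμ : HasExpMoment μ) (k : ℕ) :
    ∃ ε₀ > 0, ∃ K ≥ 0, ∀ ε, 0 ≤ ε → ε ≤ ε₀ → ∀ v ≠ 0, cocycleLaplace (convPow μ k) ε v ≤
      ENNReal.ofReal (Real.exp (-(ε * ∫ g, normCocycle g v ∂(convPow μ k)) + ε ^ 2 * K)) := by
  have log_integrable := hμ.integrable_log_opNorm k
  obtain ⟨a, ha, h⟩ := hμ
  have exp_eq (g : SL2) : Real.exp (a * Real.log (opNorm g)) = opNorm g ^ a := by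
    rw [Real.rpow_def_of_pos (opNorm_pos g), mul_comm]
  refine ⟨a / 2, half_pos ha, 8 / a ^ 2 * ∫ g, Real.exp (a * Real.log (opNorm g)) ∂(convPow μ k),
    by positivity, fun ε hε hεa v hv ↦ ?_⟩
  refine lintegral_exp_neg_mul_le ha hε hεa (fun g ↦ abs_normCocycle_le g hv)
    (integrable_normCocycle log_integrable hv) ?_
  simp_rw [exp_eq]
  exact integrable_opNorm_rpow_convPow ha.le h k

end LaplaceTransform

section Drift

lemma abs_wedge_mul_opNorm_le (g : SL2) (v w : Plane) :
    |wedge v w| * opNorm g ≤ ‖w‖ * ‖g • v‖ + ‖v‖ * ‖g • w‖ := by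
  rcases (abs_nonneg (wedge v w)).eq_or_lt with h | h
  · rw [← h, zero_mul]
    positivity
  rw [mul_comm, ← le_div_iff₀ h, opNorm]
  refine ContinuousLinearMap.opNorm_le_bound _ (by positivity) fun u ↦ ?_
  rw [toEuclideanCLM_apply_eq_smul, div_mul_eq_mul_div, le_div_iff₀ h]
  calc ‖g • u‖ * |wedge v w|
      = ‖wedge u w • g • v + wedge v u • g • w‖ := by
        rw [← smul_comm g (wedge u w), ← smul_comm g (wedge v u), ← smul_add,
          ← wedge_smul_eq_add, smul_comm g (wedge v w), norm_smul (wedge v w), Real.norm_eq_abs,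
          mul_comm]
    _ ≤ ‖u‖ * ‖w‖ * ‖g • v‖ + ‖v‖ * ‖u‖ * ‖g • w‖ := by
        refine (norm_add_le _ _).trans ?_
        rw [norm_smul (wedge u w), norm_smul (wedge v u)]
        gcongr
        exacts [abs_wedge_le u w, abs_wedge_le v u]
    _ = (‖w‖ * ‖g • v‖ + ‖v‖ * ‖g • w‖) * ‖u‖ := by ring

lemma exp_normCocycle (g : SL2) {v : Plane} (hv : v ≠ 0) :
    Real.exp (normCocycle g v) = ‖g • v‖ / ‖v‖ :=
  Real.exp_log (div_pos (norm_smul_pos g hv) (norm_pos_iff.2 hv))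

lemma sinDist_mul_opNorm_le (g : SL2) {v w : Plane} (hv : v ≠ 0) (hw : w ≠ 0) :
    sinDist v w * opNorm g ≤ Real.exp (normCocycle g v) + Real.exp (normCocycle g w) := by
  have hv' := norm_pos_iff.2 hv
  have hw' := norm_pos_iff.2 hw
  rw [exp_normCocycle g hv, exp_normCocycle g hw, sinDist, div_mul_eq_mul_div,
    div_add_div _ _ hv'.ne' hw'.ne', div_le_div_iff_of_pos_right (by positivity), mul_comm _ ‖w‖]
  exact abs_wedge_mul_opNorm_le g v w

lemma sinDist_mul_log_opNorm_le {g : SL2} {v w : Plane} (hv : v ≠ 0) (hw : w ≠ 0) {B : ℝ}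
    (hB : 0 ≤ B) (hgv : normCocycle g v ≤ B) (hgw : normCocycle g w ≤ B) :
    sinDist v w * Real.log (opNorm g) ≤ B + 1 := by
  rcases (sinDist_nonneg v w).eq_or_lt with h | h
  · rw [← h, zero_mul]
    positivity
  have log_le : Real.log (sinDist v w) + Real.log (opNorm g) ≤ Real.log 2 + B := by
    rw [← Real.log_mul h.ne' (opNorm_pos g).ne', Real.log_le_iff_le_exp
      (mul_pos h (opNorm_pos g)), Real.exp_add, Real.exp_log two_pos, two_mul]
    refine (sinDist_mul_opNorm_le g hv hw).trans ?_
    gcongr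
  have le_mul_log : sinDist v w - 1 ≤ sinDist v w * Real.log (sinDist v w) := by
    have := mul_le_mul_of_nonneg_left (Real.one_sub_inv_le_log_of_pos h) h.le
    rwa [mul_sub, mul_one, mul_inv_cancel₀ h.ne'] at this
  nlinarith [sinDist_le_one v w, Real.log_two_lt_d9, mul_le_mul_of_nonneg_left log_le h.le]

lemma abs_sub_le_add_exp {ε a b y : ℝ} (hε : 0 < ε) (hab : a ≤ b) :
    |y - b| ≤ y - b + 2 * (b - a) + 2 / ε * Real.exp (ε * a) * Real.exp (-(ε * y)) := by
  have exp_eq : 2 / ε * Real.exp (ε * a) * Real.exp (-(ε * y)) =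
      2 * (Real.exp (-(ε * (y - a))) / ε) := by
    rw [mul_assoc, ← Real.exp_add]
    ring_nf
  have le_exp : -(y - a) ≤ Real.exp (-(ε * (y - a))) / ε := by
    rw [le_div_iff₀ hε]
    linarith [Real.add_one_le_exp (-(ε * (y - a)))]
  have : 0 ≤ Real.exp (-(ε * (y - a))) / ε := by positivity
  rw [exp_eq, abs_le]
  constructor <;> linarith

lemma integral_abs_sub_le_of_lintegral_exp_le {Ω : Type*} [MeasurableSpace Ω] {P : Measure Ω}
    [IsProbabilityMeasure P] {Y : Ω → ℝ} {ε a b : ℝ} (hε : 0 < ε) (hab : a ≤ b)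
    (hY : Integrable Y P) (h : ∫⁻ ω, ENNReal.ofReal (Real.exp (-(ε * Y ω))) ∂P ≤
      ENNReal.ofReal (Real.exp (-(ε * a)))) :
    ∫ ω, |Y ω - b| ∂P ≤ ∫ ω, Y ω ∂P - b + 2 * (b - a) + 2 / ε := by
  have exp_nonneg : 0 ≤ᵐ[P] fun ω ↦ Real.exp (-(ε * Y ω)) := .of_forall fun _ ↦ (Real.exp_pos _).le
  have exp_integrable : Integrable (fun ω ↦ Real.exp (-(ε * Y ω))) P :=
    ⟨Real.continuous_exp.comp_aestronglyMeasurable (hY.1.const_mul ε).neg,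
      (hasFiniteIntegral_iff_ofReal exp_nonneg).2 (h.trans_lt ENNReal.ofReal_lt_top)⟩
  rw [← ofReal_integral_eq_lintegral_ofReal exp_integrable exp_nonneg,
    ENNReal.ofReal_le_ofReal_iff (Real.exp_pos _).le] at h
  have sub_integrable : Integrable (fun ω ↦ Y ω - b) P := hY.sub (integrable_const b)
  have add_integrable : Integrable (fun ω ↦ Y ω - b + 2 * (b - a)) P :=
    sub_integrable.add (integrable_const _)
  calc ∫ ω, |Y ω - b| ∂P
      ≤ ∫ ω, Y ω - b + 2 * (b - a) + 2 / ε * Real.exp (ε * a) * Real.exp (-(ε * Y ω)) ∂P :=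
        integral_mono sub_integrable.abs (add_integrable.add (exp_integrable.const_mul _))
          fun ω ↦ abs_sub_le_add_exp hε hab
    _ = ∫ ω, Y ω ∂P - b + 2 * (b - a) +
        2 / ε * Real.exp (ε * a) * ∫ ω, Real.exp (-(ε * Y ω)) ∂P := by
        rw [integral_add add_integrable (exp_integrable.const_mul _),
          integral_add sub_integrable (integrable_const _), integral_sub hY (integrable_const b)]
        simp only [integral_const_mul, integral_const, probReal_univ, smul_eq_mul, one_mul]
    _ ≤ ∫ ω, Y ω ∂P - b + 2 * (b - a) + 2 / ε * Real.exp (ε * a) * Real.exp (-(ε * a)) := by gcongr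
    _ = _ := by rw [mul_assoc, ← Real.exp_add, add_neg_cancel, Real.exp_zero, mul_one]

lemma integrable_normCocycle_smul {P ρ : Measure SL2} [IsFiniteMeasure ρ] [SFinite P]
    (hP : Integrable (fun g ↦ Real.log (opNorm g)) P) {v : Plane} (hv : v ≠ 0) :
    Integrable (fun q : SL2 × SL2 ↦ normCocycle q.2 (q.1 • v)) (ρ.prod P) :=
  (hP.comp_snd ρ).mono' (Measurable.aestronglyMeasurable (by fun_prop))
    (.of_forall fun q ↦ abs_normCocycle_le q.2 ((smul_ne_zero_iff_ne q.1).2 hv))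

lemma integrable_sinDist_smul_smul {ρ : Measure SL2} [IsFiniteMeasure ρ] (v : Plane) :
    Integrable (fun p : SL2 × SL2 ↦ sinDist (p.1 • v) (p.2 • v)) (ρ.prod ρ) :=
  (integrable_const 1).mono' (Measurable.aestronglyMeasurable (by fun_prop))
    (.of_forall fun _ ↦ norm_sinDist_le_one _ _)

/- If the cocycle stays near a constant `c ≤ 0`, it cannot grow along two transverse directions,
which forces the norm itself to stay bounded. -/
lemma sinDist_mul_integral_log_opNorm_le {P : Measure SL2} [IsProbabilityMeasure P]
    (hP : Integrable (fun g ↦ Real.log (opNorm g)) P) {v w : Plane} (hv : v ≠ 0) (hw : w ≠ 0)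
    {c : ℝ} (hc : c ≤ 0) : sinDist v w * ∫ g, Real.log (opNorm g) ∂P ≤
      ∫ g, |normCocycle g v - c| ∂P + ∫ g, |normCocycle g w - c| ∂P + 1 := by
  have abs_integrable {u : Plane} (hu : u ≠ 0) : Integrable (fun g ↦ |normCocycle g u - c|) P :=
    ((integrable_normCocycle hP hu).sub (integrable_const c)).abs
  have sum_integrable := (abs_integrable hv).add (abs_integrable hw)
  rw [← integral_const_mul]
  calc ∫ g, sinDist v w * Real.log (opNorm g) ∂P
      ≤ ∫ g, (|normCocycle g v - c| + |normCocycle g w - c| + 1) ∂P := by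
        refine integral_mono (hP.const_mul _) (sum_integrable.add (integrable_const 1))
          fun g ↦ sinDist_mul_log_opNorm_le hv hw (by positivity) ?_ ?_
        · linarith [le_abs_self (normCocycle g v - c), abs_nonneg (normCocycle g w - c)]
        · linarith [le_abs_self (normCocycle g w - c), abs_nonneg (normCocycle g v - c)]
    _ = _ := by
        rw [integral_add (by exact sum_integrable) (integrable_const 1),
          integral_add (abs_integrable hv) (abs_integrable hw), integral_const, probReal_univ,
          one_smul]

lemma integral_sinDist_mul_integral_log_opNorm_le {P ρ : Measure SL2} [IsProbabilityMeasure P]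
    [IsProbabilityMeasure ρ] (hP : Integrable (fun g ↦ Real.log (opNorm g)) P) {v : Plane}
    (hv : v ≠ 0) {c : ℝ} (hc : c ≤ 0) :
    (∫ p, sinDist (p.1 • v) (p.2 • v) ∂(ρ.prod ρ)) * ∫ g, Real.log (opNorm g) ∂P ≤
      2 * ∫ h, ∫ g, |normCocycle g (h • v) - c| ∂P ∂ρ + 1 := by
  have hv' (h : SL2) : h • v ≠ 0 := (smul_ne_zero_iff_ne h).2 hv
  have integrable : Integrable (fun h ↦ ∫ g, |normCocycle g (h • v) - c| ∂P) ρ :=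
    ((integrable_normCocycle_smul hP hv).sub (integrable_const c)).abs.integral_prod_left
  have integrable_fst := integrable.comp_fst ρ
  have integrable_snd := integrable.comp_snd ρ
  rw [← integral_mul_const]
  refine (integral_mono ((integrable_sinDist_smul_smul v).mul_const _)
    ((integrable_fst.add integrable_snd).add (integrable_const 1))
    fun p ↦ sinDist_mul_integral_log_opNorm_le hP (hv' p.1) (hv' p.2) hc).trans_eq ?_
  simp only [Pi.add_apply]
  rw [integral_add (by exact integrable_fst.add integrable_snd) (integrable_const 1),
    integral_add integrable_fst integrable_snd,
    integral_fun_fst fun h ↦ ∫ g, |normCocycle g (h • v) - c| ∂P,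
    integral_fun_snd fun h ↦ ∫ g, |normCocycle g (h • v) - c| ∂P]
  simp only [integral_const, probReal_univ, one_smul]
  ring

variable {μ : Measure SL2} [IsProbabilityMeasure μ]

lemma HasExpMoment.integral_normCocycle_convPow_add (hμ : HasExpMoment μ) (n k : ℕ) {v : Plane}
    (hv : v ≠ 0) : ∫ g, normCocycle g v ∂(convPow μ (n + k)) =
      ∫ h, ∫ g, normCocycle g (h • v) ∂(convPow μ n) ∂(convPow μ k) +
        ∫ h, normCocycle h v ∂(convPow μ k) := by
  have hv' (h : SL2) : h • v ≠ 0 := (smul_ne_zero_iff_ne h).2 hv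
  have integrable (m : ℕ) {w : Plane} :=
    integrable_normCocycle (v := w) (hμ.integrable_log_opNorm m)
  rw [integral_convPow_add μ n k (integrable _ hv), ← integral_add
    (integrable_normCocycle_smul (hμ.integrable_log_opNorm n) hv).integral_prod_left
    (integrable k hv)]
  refine integral_congr_ae (.of_forall fun h ↦ ?_)
  simp only [normCocycle_mul _ _ hv]
  rw [integral_add (integrable n (hv' h)) (integrable_const _), integral_const, probReal_univ,
    one_smul]

lemma HasExpMoment.abs_integral_normCocycle_le (hμ : HasExpMoment μ) (n : ℕ) {v : Plane}
    (hv : v ≠ 0) :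
    |∫ g, normCocycle g v ∂(convPow μ n)| ≤ ∫ g, Real.log (opNorm g) ∂(convPow μ n) :=
  norm_integral_le_of_norm_le (f := fun g ↦ normCocycle g v) (hμ.integrable_log_opNorm n)
    (.of_forall fun g ↦ abs_normCocycle_le g hv)

lemma HasExpMoment.integral_sinDist_mul_integral_log_opNorm_convPow_le (hμ : HasExpMoment μ)
    {n k : ℕ} {ε a b B : ℝ} (hε : 0 < ε) (hab : a ≤ b) (hb : b ≤ 0) {v : Plane} (hv : v ≠ 0)
    (hL : ∀ w ≠ 0, cocycleLaplace (convPow μ n) ε w ≤ ENNReal.ofReal (Real.exp (-(ε * a))))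
    (hB : ∫ g, normCocycle g v ∂(convPow μ (n + k)) ≤ b + B) :
    (∫ p, sinDist (p.1 • v) (p.2 • v) ∂((convPow μ k).prod (convPow μ k))) *
        ∫ g, Real.log (opNorm g) ∂(convPow μ n) ≤
      2 * (B + ∫ g, Real.log (opNorm g) ∂(convPow μ k) + 2 * (b - a) + 2 / ε) + 1 := by
  have hv' (h : SL2) : h • v ≠ 0 := (smul_ne_zero_iff_ne h).2 hv
  have log_integrable := hμ.integrable_log_opNorm n
  refine (integral_sinDist_mul_integral_log_opNorm_le log_integrable hv hb).trans ?_
  have integrable : Integrable (fun h ↦ ∫ g, normCocycle g (h • v) ∂(convPow μ n)) (convPow μ k) :=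
    (integrable_normCocycle_smul log_integrable hv).integral_prod_left
  gcongr
  calc ∫ h, ∫ g, |normCocycle g (h • v) - b| ∂(convPow μ n) ∂(convPow μ k)
      ≤ ∫ h, (∫ g, normCocycle g (h • v) ∂(convPow μ n) + (-b + 2 * (b - a) + 2 / ε))
          ∂(convPow μ k) := by
        refine integral_mono_of_nonneg (.of_forall fun h ↦ integral_nonneg fun g ↦ abs_nonneg _)
          (integrable.add (integrable_const _)) (.of_forall fun h ↦ ?_)
        have := integral_abs_sub_le_of_lintegral_exp_le hε hab
          (integrable_normCocycle log_integrable (hv' h)) (hL _ (hv' h))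
        simp only
        linarith
    _ = ∫ h, ∫ g, normCocycle g (h • v) ∂(convPow μ n) ∂(convPow μ k) +
          (-b + 2 * (b - a) + 2 / ε) := by
        rw [integral_add integrable (integrable_const _), integral_const, probReal_univ, one_smul]
    _ ≤ B + ∫ g, Real.log (opNorm g) ∂(convPow μ k) + 2 * (b - a) + 2 / ε := by
        linarith [hμ.integral_normCocycle_convPow_add n k hv,
          neg_le_of_abs_le (hμ.abs_integral_normCocycle_le k hv)]

lemma HasExpMoment.exists_cocycleLaplace_convPow_mul_le (hμ : HasExpMoment μ) {k : ℕ} {m m' : ℝ}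
    (hm : ∀ v ≠ 0, m ≤ ∫ g, normCocycle g v ∂(convPow μ k)) (hm' : m' < m) :
    ∃ ε₀ > 0, ∀ ε, 0 ≤ ε → ε ≤ ε₀ → ∀ (q : ℕ), ∀ v ≠ 0, cocycleLaplace (convPow μ (q * k)) ε v ≤
      ENNReal.ofReal (Real.exp (-(ε * m'))) ^ q := by
  obtain ⟨ε₀, hε₀, K, hK, hexp⟩ := hμ.exists_cocycleLaplace_convPow_le k
  refine ⟨min ε₀ ((m - m') / (K + 1)),
    lt_min hε₀ (div_pos (sub_pos.2 hm') (by positivity)), fun ε hε hle q v hv ↦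
    cocycleLaplace_convPow_mul_le (fun w hw ↦ ?_) q hv⟩
  refine (hexp ε hε (hle.trans (min_le_left _ _)) w hw).trans
    (ENNReal.ofReal_le_ofReal (Real.exp_le_exp.2 ?_))
  have hεK := (le_div_iff₀ (by positivity)).1 (hle.trans (min_le_right _ _))
  nlinarith [hm w hw]

lemma exists_lower_growth_rate {V : Type*} {φ : ℕ → V → ℝ} {B : ℝ} (hB : ∀ v, B ≤ φ 1 v)
    (hφ : ∀ k ≥ 1, ∀ c > 0, ∃ v, φ k v < c) :
    ∃ c ≤ 0, (∀ η > 0, ∃ k ≥ 1, ∀ v, (c - η) * k ≤ φ k v) ∧ ∀ m ≥ 1, ∃ v, φ m v < c * m + 1 := by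
  set A : Set ℝ := {c | ∃ k ≥ 1, ∀ v, c * (k : ℕ) ≤ φ k v}
  have nonpos : ∀ c ∈ A, c ≤ 0 := by
    rintro c ⟨k, hk, h⟩
    by_contra! hc
    obtain ⟨v, hv⟩ := hφ k hk (c * k) (by positivity)
    exact hv.not_ge (h v)
  have hA : A.Nonempty := ⟨B, 1, le_rfl, by simpa only [Nat.cast_one, mul_one] using hB⟩
  refine ⟨sSup A, csSup_le hA nonpos, fun η hη ↦ ?_, fun m hm ↦ ?_⟩
  · obtain ⟨c, ⟨k, hk, hck⟩, hc⟩ := exists_lt_of_lt_csSup hA (sub_lt_self (sSup A) hη)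
    exact ⟨k, hk, fun v ↦ (mul_le_mul_of_nonneg_right hc.le k.cast_nonneg).trans (hck v)⟩
  · have hm' : (0 : ℝ) < m := by exact_mod_cast hm
    by_contra! h
    have mem : sSup A + 1 / m ∈ A := ⟨m, hm, fun v ↦ by
      rw [add_mul, one_div_mul_cancel hm'.ne']
      exact h v⟩
    have : 0 < 1 / (m : ℝ) := by positivity
    linarith [le_csSup ⟨0, nonpos⟩ mem]

lemma ZariskiDense.exists_le_integral_normCocycle_convPow (hμ : ZariskiDense μ)
    (hμ' : HasExpMoment μ) {σ : ℝ} (hσ : 0 < σ)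
    (hlog : ∀ n : ℕ, n * σ ≤ ∫ g, Real.log (opNorm g) ∂(convPow μ n)) :
    ∃ k ≥ 1, ∃ c > 0, ∀ v ≠ 0, c ≤ ∫ g, normCocycle g v ∂(convPow μ k) := by
  by_contra! hcon
  obtain ⟨Δ, hΔ, hΔ'⟩ := exists_le_integral_sinDist (ρ := convPow μ 3)
    fun v hv ↦ hμ.exists_wedge_smul_smul_ne_zero hv
  obtain ⟨c, hc, lower, upper⟩ := exists_lower_growth_rate
    (V := {v : Plane // v ≠ 0}) (φ := fun n v ↦ ∫ g, normCocycle g v ∂(convPow μ n))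
    (fun v ↦ neg_le_of_abs_le (hμ'.abs_integral_normCocycle_le 1 v.2))
    (fun k hk c hc ↦ let ⟨v, hv, h⟩ := hcon k hk c hc; ⟨⟨v, hv⟩, h⟩)
  set η := Δ * σ / 16 with hη
  have hη_pos : 0 < η := by positivity
  obtain ⟨k, hk, hlower⟩ := lower η hη_pos
  have hk' : (0 : ℝ) < k := by exact_mod_cast hk
  obtain ⟨ε, hε, hL⟩ := hμ'.exists_cocycleLaplace_convPow_mul_le (k := k)
    (fun v hv ↦ hlower ⟨v, hv⟩) (show (c - 2 * η) * k < (c - η) * k by gcongr; linarith)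
  set D := 2 * (1 + ∫ g, Real.log (opNorm g) ∂(convPow μ 3) + 2 / ε) + 1
  have bound (q : ℕ) : q * (Δ * σ * k / 2) ≤ D := by
    obtain ⟨⟨v, hv⟩, hv_upper⟩ := upper (q * k + 3) (by omega)
    have key := hμ'.integral_sinDist_mul_integral_log_opNorm_convPow_le (n := q * k) (k := 3)
      (a := q * ((c - 2 * η) * k)) (b := q * (c * k)) (B := 1) hε (by gcongr; linarith)
      (mul_nonpos_of_nonneg_of_nonpos q.cast_nonneg (mul_nonpos_of_nonpos_of_nonneg hc hk'.le)) hv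
      (fun w hw ↦ (hL ε hε.le le_rfl q w hw).trans_eq <| by
        rw [← ENNReal.ofReal_pow (Real.exp_pos _).le, ← Real.exp_nat_mul]
        ring_nf)
      (by push_cast at hv_upper; linarith)
    have := mul_le_mul (hΔ' v hv) (hlog (q * k)) (by positivity) (hΔ.le.trans (hΔ' v hv))
    push_cast at this
    linarith [show q * (c * k) - q * ((c - 2 * η) * k) = q * k * (Δ * σ) / 8 by rw [hη]; ring]
  obtain ⟨q, hq⟩ := exists_nat_gt (D / (Δ * σ * k / 2))
  exact ((div_lt_iff₀ (by positivity)).1 hq).not_ge (bound q)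

end Drift

section Potential

variable {G Z E : Type*} [Monoid G] [MeasurableSpace G] [MulAction G Z] {μ : Measure G}
  {φ J : Z → ℝ≥0∞} {z : Z} {M : ℝ≥0∞}

/-- The law `∑_{n < N} μ^{*n}` of the visits of the random walk before time `N`, that is, the
truncated Green measure. -/
def greenMeasure (μ : Measure G) (N : ℕ) : Measure G :=
  ∑ n ∈ Finset.range N, convPow μ n

/-- The potential `z ↦ ∑ₙ E φ(gₙ ⋯ g₁ z)` of a function `φ` for the random walk on a `G`-space with
increments of law `μ`. -/
def potential (μ : Measure G) (φ : Z → ℝ≥0∞) (z : Z) : ℝ≥0∞ :=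
  ∑' n, ∫⁻ g, φ (g • z) ∂(convPow μ n)

lemma tsum_lintegral_convPow_le_iff {F : G → ℝ≥0∞} :
    ∑' n, ∫⁻ g, F g ∂(convPow μ n) ≤ M ↔ ∀ N, ∫⁻ g, F g ∂(greenMeasure μ N) ≤ M := by
  simp_rw [greenMeasure, lintegral_finsetSum_measure, ENNReal.tsum_eq_iSup_nat, iSup_le_iff]

lemma lintegral_greenMeasure_le_potential (μ : Measure G) (φ : Z → ℝ≥0∞) (N : ℕ) (z : Z) :
    ∫⁻ g, φ (g • z) ∂(greenMeasure μ N) ≤ potential μ φ z :=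
  tsum_lintegral_convPow_le_iff.1 le_rfl N

variable [MeasurableSpace Z] [MeasurableSMul₂ G Z]

lemma measurable_lintegral_smul (hφ : Measurable φ) (ρ : Measure G) [SFinite ρ] :
    Measurable fun z : Z ↦ ∫⁻ g, φ (g • z) ∂ρ :=
  Measurable.lintegral_prod_right (f := fun (z : Z) (g : G) ↦ φ (g • z)) (by fun_prop)

lemma measurable_lintegral_smul_smul (hφ : Measurable φ) (ρ : Measure G) [SFinite ρ] (z : Z) :
    Measurable fun h : G ↦ ∫⁻ g, φ (g • h • z) ∂ρ :=
  (measurable_lintegral_smul hφ ρ).comp (by fun_prop)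

lemma potential_const_mul (hφ : Measurable φ) (c : ℝ≥0∞) (z : Z) :
    potential μ (fun z ↦ c * φ z) z = c * potential μ φ z := by
  simp_rw [potential, lintegral_const_mul c (show Measurable fun g : G ↦ φ (g • z) by fun_prop),
    ENNReal.tsum_mul_left]

variable [MeasurableMul₂ G] [IsProbabilityMeasure μ]

instance (N : ℕ) : IsFiniteMeasure (greenMeasure μ N) := by
  unfold greenMeasure
  infer_instance

lemma lintegral_greenMeasure_succ {F : G → ℝ≥0∞} (hF : Measurable F) (N : ℕ) :
    ∫⁻ g, F g ∂(greenMeasure μ (N + 1)) =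
      F 1 + ∫⁻ h, ∫⁻ g, F (g * h) ∂(greenMeasure μ N) ∂μ := by
  have meas (n : ℕ) : Measurable fun h ↦ ∫⁻ g, F (g * h) ∂(convPow μ n) :=
    Measurable.lintegral_prod_right (f := fun h g ↦ F (g * h)) (by fun_prop)
  simp_rw [greenMeasure, lintegral_finsetSum_measure]
  rw [Finset.sum_range_succ', lintegral_convPow_zero μ hF, add_comm,
    lintegral_finsetSum _ fun n _ ↦ meas n]
  simp_rw [lintegral_convPow_succ μ _ hF]

lemma measurable_potential (hφ : Measurable φ) : Measurable (potential μ φ) :=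
  .tsum fun n ↦ measurable_lintegral_smul hφ (convPow μ n)

lemma potential_eq_add_lintegral (hφ : Measurable φ) (z : Z) :
    potential μ φ z = φ z + ∫⁻ h, potential μ φ (h • z) ∂μ := by
  have meas : Measurable fun g : G ↦ φ (g • z) := by fun_prop
  unfold potential
  rw [tsum_eq_zero_add' ENNReal.summable, lintegral_convPow_zero μ meas, one_smul,
    lintegral_tsum fun n ↦ (measurable_lintegral_smul_smul hφ (convPow μ n) z).aemeasurable]
  simp_rw [lintegral_convPow_succ μ _ meas, mul_smul]

lemma potential_le_of_forall_ne_zero (hφ : Measurable φ) {s : Set Z}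
    (hs : ∀ (g : G), ∀ z ∈ s, g • z ∈ s) (h : ∀ z ∈ s, φ z ≠ 0 → potential μ φ z ≤ M)
    (hz : z ∈ s) : potential μ φ z ≤ M := by
  refine tsum_lintegral_convPow_le_iff.2 fun N ↦ ?_
  induction N generalizing z with
  | zero => simp [greenMeasure]
  | succ N ih =>
    by_cases h0 : φ z = 0
    · rw [lintegral_greenMeasure_succ (by fun_prop), one_smul, h0, zero_add]
      simp_rw [mul_smul]
      calc ∫⁻ h, ∫⁻ g, φ (g • h • z) ∂(greenMeasure μ N) ∂μ
          ≤ ∫⁻ _, M ∂μ := lintegral_mono fun h ↦ ih (hs h z hz)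
        _ = M := by rw [lintegral_const, measure_univ, mul_one]
    · exact (lintegral_greenMeasure_le_potential μ φ _ z).trans (h z hz h0)

variable [PseudoEMetricSpace E] [MeasurableSpace E] [OpensMeasurableSpace E]
  {d : Z → E}

/- The oscillation `d(gₙ ⋯ g₁ z) - d(z)` telescopes; the increment at time `k` is seen by all later
visits of `φ`, whose expected total is at most `M`. -/
lemma tsum_lintegral_edist_mul_le_potential (hφ : Measurable φ) (hJ : Measurable J)
    (hd : Measurable d) {s : Set Z} (hs : ∀ (g : G), ∀ z ∈ s, g • z ∈ s)
    (hM : ∀ z ∈ s, potential μ φ z ≤ M)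
    (h : ∀ z ∈ s, (∫⁻ h, edist (d (h • z)) (d z) ∂μ) * M ≤ J z) (hz : z ∈ s) :
    ∑' n, ∫⁻ g, edist (d (g • z)) (d z) * φ (g • z) ∂(convPow μ n) ≤ potential μ J z := by
  refine tsum_lintegral_convPow_le_iff.2 fun N ↦
    le_trans ?_ (lintegral_greenMeasure_le_potential μ J N z)
  induction N generalizing z with
  | zero => simp [greenMeasure]
  | succ N ih =>
    have edist_mul_le (g h : G) : edist (d ((g * h) • z)) (d z) * φ ((g * h) • z) ≤
        edist (d (g • h • z)) (d (h • z)) * φ (g • h • z) +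
          edist (d (h • z)) (d z) * φ (g • h • z) := by
      rw [mul_smul, ← add_mul]
      gcongr
      exact edist_triangle _ _ _
    rw [lintegral_greenMeasure_succ (by fun_prop), lintegral_greenMeasure_succ (by fun_prop),
      one_smul, edist_self, zero_mul, zero_add]
    calc ∫⁻ h, ∫⁻ g, edist (d ((g * h) • z)) (d z) * φ ((g * h) • z) ∂(greenMeasure μ N) ∂μ
        ≤ ∫⁻ h, (∫⁻ g, edist (d (g • h • z)) (d (h • z)) * φ (g • h • z) ∂(greenMeasure μ N) +
            edist (d (h • z)) (d z) * ∫⁻ g, φ (g • h • z) ∂(greenMeasure μ N)) ∂μ := by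
          refine lintegral_mono fun h ↦ (lintegral_mono fun g ↦ edist_mul_le g h).trans_eq ?_
          rw [lintegral_add_left (by fun_prop), lintegral_const_mul _ (by fun_prop)]
      _ ≤ ∫⁻ h, (∫⁻ g, J (g • h • z) ∂(greenMeasure μ N) + edist (d (h • z)) (d z) * M) ∂μ := by
          refine lintegral_mono fun h ↦ add_le_add (ih (hs h z hz)) ?_
          gcongr
          exact (lintegral_greenMeasure_le_potential μ φ N _).trans (hM _ (hs h z hz))
      _ = ∫⁻ h, ∫⁻ g, J (g • h • z) ∂(greenMeasure μ N) ∂μ +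
            (∫⁻ h, edist (d (h • z)) (d z) ∂μ) * M := by
          rw [lintegral_add_left (measurable_lintegral_smul_smul hJ _ z),
            lintegral_mul_const _ (by fun_prop)]
      _ ≤ J z + ∫⁻ h, ∫⁻ g, J ((g * h) • z) ∂(greenMeasure μ N) ∂μ := by
          simp_rw [mul_smul]
          rw [add_comm]
          gcongr
          exact h z hz

end Potential

section Transience

variable {μ : Measure SL2} [IsProbabilityMeasure μ]

lemma lintegral_opNorm_rpow_mono {ε ε' : ℝ} (hε : ε ≤ ε') (ρ : Measure SL2) :
    ∫⁻ g, ENNReal.ofReal (opNorm g ^ ε) ∂ρ ≤ ∫⁻ g, ENNReal.ofReal (opNorm g ^ ε') ∂ρ :=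
  lintegral_mono fun g ↦
    ENNReal.ofReal_le_ofReal (Real.rpow_le_rpow_of_exponent_le (one_le_opNorm g) hε)

lemma HasExpMoment.exists_lintegral_opNorm_rpow_lt_top (hμ : HasExpMoment μ) :
    ∃ ε₁ > 0, ∀ ε : ℝ, ε ≤ ε₁ → ∀ n, ∫⁻ g, ENNReal.ofReal (opNorm g ^ ε) ∂(convPow μ n) < ∞ := by
  obtain ⟨ε₁, hε₁, h⟩ := hμ
  exact ⟨ε₁, hε₁, fun ε hε n ↦ (lintegral_opNorm_rpow_mono hε _).trans_lt
    (lintegral_opNorm_rpow_convPow_lt_top hε₁.le h n)⟩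

lemma tsum_le_inv_one_sub_mul_sum {k : ℕ} [NeZero k] {a b : ℕ → ℝ≥0∞} {r : ℝ≥0∞}
    (h : ∀ q j, a (j + q * k) ≤ b j * r ^ q) :
    ∑' n, a n ≤ (1 - r)⁻¹ * ∑ j : Fin k, b j := by
  rw [← (Nat.divModEquiv k).symm.tsum_eq]
  calc ∑' p, a ((Nat.divModEquiv k).symm p)
      ≤ ∑' p : ℕ × Fin k, r ^ p.1 * b p.2 := ENNReal.tsum_le_tsum fun p ↦ by
        simpa only [Nat.divModEquiv_symm_apply, mul_comm, add_comm] using h p.1 p.2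
    _ = (1 - r)⁻¹ * ∑ j : Fin k, b j := by
        rw [ENNReal.tsum_prod (f := fun (q : ℕ) (j : Fin k) ↦ r ^ q * b j)]
        simp_rw [ENNReal.tsum_mul_left]
        rw [ENNReal.tsum_mul_right, ENNReal.tsum_geometric, tsum_fintype]

/-- The constants of exponential transience: `ε` is small enough for the `ε`-moment of `μ` to be
finite and for the `ε`-Laplace transforms of the cocycle to be summable, uniformly in the
direction. -/
structure IsTransienceExponent (μ : Measure SL2) (ε : ℝ) : Prop where
  moment_lt_top : ∫⁻ g, ENNReal.ofReal (opNorm g ^ ε) ∂μ < ∞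
  exists_tsum_le : ∃ C ≠ ∞, ∀ v ≠ 0, ∑' n, cocycleLaplace (convPow μ n) ε v ≤ C

lemma ZariskiDense.exists_isTransienceExponent (hμ : ZariskiDense μ) (hμ' : HasExpMoment μ) {σ : ℝ}
    (hσ : 0 < σ) (hlog : ∀ n : ℕ, n * σ ≤ ∫ g, Real.log (opNorm g) ∂(convPow μ n)) :
    ∃ ε₀ > 0, ∀ ε, 0 < ε → ε ≤ ε₀ → IsTransienceExponent μ ε := by
  obtain ⟨k, hk, c, hc, hdrift⟩ := hμ.exists_le_integral_normCocycle_convPow hμ' hσ hlog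
  obtain ⟨ε₀, hε₀, hL⟩ := hμ'.exists_cocycleLaplace_convPow_mul_le hdrift (half_lt_self hc)
  obtain ⟨ε₁, hε₁, moment⟩ := hμ'.exists_lintegral_opNorm_rpow_lt_top
  have : NeZero k := ⟨by omega⟩
  refine ⟨min ε₀ ε₁, lt_min hε₀ hε₁, fun ε hε hle ↦ ?_⟩
  have moment_ε := moment ε (hle.trans (min_le_right _ _))
  refine ⟨convPow_one μ ▸ moment_ε 1, _, ?_, fun v hv ↦ tsum_le_inv_one_sub_mul_sum fun q j ↦
    cocycleLaplace_convPow_add_le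
      (fun w hw ↦ cocycleLaplace_le_lintegral_opNorm_rpow hε.le (convPow μ j) hw)
      (hL ε hε.le (hle.trans (min_le_left _ _)) q) hv⟩
  have exp_lt_one : ENNReal.ofReal (Real.exp (-(ε * (c / 2)))) < 1 := by
    rw [ENNReal.ofReal_lt_one, Real.exp_lt_one_iff]
    linarith [show 0 < ε * (c / 2) by positivity]
  exact ENNReal.mul_ne_top (ENNReal.inv_ne_top.2 (tsub_pos_of_lt exp_lt_one).ne')
    (ENNReal.sum_lt_top.2 fun (j : Fin k) _ ↦ moment_ε j).ne

/-- The indicator of the window `|log ‖v‖| ≤ 3`, with `0` removed because `log 0 = 0`. -/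
def window : Plane → ℝ≥0∞ :=
  Set.indicator {v | v ≠ 0 ∧ |Real.log ‖v‖| ≤ 3} fun _ ↦ 1

lemma measurable_window : Measurable window :=
  measurable_const.indicator <| (measurableSet_singleton (0 : Plane)).compl.inter <|
    measurableSet_le measurable_norm.log.abs measurable_const

lemma window_eq_one {v : Plane} (hv : v ≠ 0) (h : |Real.log ‖v‖| ≤ 3) : window v = 1 :=
  Set.indicator_of_mem (by exact ⟨hv, h⟩) _

lemma abs_log_norm_le_of_window_ne_zero {v : Plane} (h : window v ≠ 0) : |Real.log ‖v‖| ≤ 3 :=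
  (Set.mem_of_indicator_ne_zero h).2

lemma window_smul_le {ε : ℝ} (hε : 0 ≤ ε) (g : SL2) {v : Plane} (hv : v ≠ 0)
    (h : |Real.log ‖v‖| ≤ 3) : window (g • v) ≤
      ENNReal.ofReal (Real.exp (6 * ε)) * ENNReal.ofReal (Real.exp (-(ε * normCocycle g v))) := by
  by_cases hg : window (g • v) = 0
  · rw [hg]
    exact zero_le
  have hgv := abs_log_norm_le_of_window_ne_zero hg
  have cocycle_le : normCocycle g v ≤ 6 := by
    linarith [log_norm_smul g hv, (abs_le.1 h).1, (abs_le.1 hgv).2]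
  rw [window_eq_one ((smul_ne_zero_iff_ne g).2 hv) hgv, ← ENNReal.ofReal_mul (Real.exp_pos _).le,
    ← Real.exp_add, ENNReal.one_le_ofReal, Real.one_le_exp_iff]
  nlinarith

lemma IsTransienceExponent.exists_potential_window_le {ε : ℝ} (h : IsTransienceExponent μ ε)
    (hε : 0 ≤ ε) : ∃ M ≠ ∞, ∀ v ≠ 0, potential μ window v ≤ M := by
  obtain ⟨C, hC, hsum⟩ := h.exists_tsum_le
  refine ⟨ENNReal.ofReal (Real.exp (6 * ε)) * C, ENNReal.mul_ne_top ENNReal.ofReal_ne_top hC,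
    fun v hv ↦ potential_le_of_forall_ne_zero (s := {v | v ≠ 0}) measurable_window
      (fun g _ ↦ (smul_ne_zero_iff_ne g).2) (fun w hw hw' ↦ ?_) hv⟩
  calc potential μ window w
      ≤ ∑' n, ENNReal.ofReal (Real.exp (6 * ε)) * cocycleLaplace (convPow μ n) ε w := by
        refine ENNReal.tsum_le_tsum fun n ↦ ?_
        rw [cocycleLaplace, ← lintegral_const_mul _ (by fun_prop)]
        exact lintegral_mono fun g ↦
          window_smul_le hε g hw (abs_log_norm_le_of_window_ne_zero hw')
    _ = ENNReal.ofReal (Real.exp (6 * ε)) * ∑' n, cocycleLaplace (convPow μ n) ε w :=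
        ENNReal.tsum_mul_left
    _ ≤ _ := by gcongr; exact hsum w hw

end Transience

section HolderEstimate

lemma log_one_add_le_rpow_div {x ε : ℝ} (hx : 0 ≤ x) (hε : 0 < ε) (hε' : ε ≤ 1) :
    Real.log (1 + x) ≤ x ^ ε / ε := by
  have hx' : 0 < 1 + x := by linarith
  rw [le_div_iff₀ hε, mul_comm, ← Real.log_rpow hx']
  calc Real.log ((1 + x) ^ ε) ≤ (1 + x) ^ ε - 1 :=
        Real.log_le_sub_one_of_pos (Real.rpow_pos_of_pos hx' ε)
    _ ≤ x ^ ε := by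
        linarith [Real.rpow_add_le_add_rpow zero_le_one hx hε.le hε', Real.one_rpow ε]

variable {v w : Plane} {ε : ℝ}

lemma exp_normCocycle_le_mul_exp_normCocycle (g : SL2) (hv : v ≠ 0) (hw : w ≠ 0) :
    Real.exp (normCocycle g v) ≤
      (1 + opNorm g ^ 2 * sinDist v w) * Real.exp (normCocycle g w) := by
  have hv' := norm_pos_iff.2 hv
  have hw' := norm_pos_iff.2 hw
  have one_le : 1 ≤ opNorm g * (‖g • w‖ / ‖w‖) := by
    rw [← mul_div_assoc, one_le_div hw']
    exact norm_le_opNorm_mul_norm_smul g w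
  have le_add : ‖g • v‖ / ‖v‖ ≤ ‖g • w‖ / ‖w‖ + sinDist v w * opNorm g := by
    rw [sinDist, div_mul_eq_mul_div, div_add_div _ _ hw'.ne' (by positivity),
      div_le_div_iff₀ hv' (by positivity)]
    nlinarith [mul_le_mul_of_nonneg_right (norm_mul_norm_smul_le g v w)
      (mul_pos hv' hw').le]
  rw [exp_normCocycle g hv, exp_normCocycle g hw]
  nlinarith [mul_le_mul_of_nonneg_left one_le
    (mul_nonneg (sinDist_nonneg v w) (opNorm_nonneg g))]

lemma normCocycle_sub_le (g : SL2) (hv : v ≠ 0) (hw : w ≠ 0) (hε : 0 < ε) (hε' : ε ≤ 1) :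
    normCocycle g v - normCocycle g w ≤ opNorm g ^ (2 * ε) * sinDist v w ^ ε / ε := by
  have nonneg : 0 ≤ opNorm g ^ 2 * sinDist v w :=
    mul_nonneg (sq_nonneg _) (sinDist_nonneg v w)
  have log_le := Real.log_le_log (Real.exp_pos _) (exp_normCocycle_le_mul_exp_normCocycle g hv hw)
  rw [Real.log_mul (by positivity) (Real.exp_pos _).ne', Real.log_exp, Real.log_exp] at log_le
  calc normCocycle g v - normCocycle g w ≤ Real.log (1 + opNorm g ^ 2 * sinDist v w) := by linarith
    _ ≤ (opNorm g ^ 2 * sinDist v w) ^ ε / ε := log_one_add_le_rpow_div nonneg hε hε'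
    _ = opNorm g ^ (2 * ε) * sinDist v w ^ ε / ε := by
        rw [Real.mul_rpow (sq_nonneg _) (sinDist_nonneg v w), Real.rpow_mul (opNorm_nonneg g),
          Real.rpow_two]

lemma abs_normCocycle_sub_le (g : SL2) (hv : v ≠ 0) (hw : w ≠ 0) (hε : 0 < ε) (hε' : ε ≤ 1) :
    |normCocycle g v - normCocycle g w| ≤ opNorm g ^ (2 * ε) * sinDist v w ^ ε / ε := by
  have := normCocycle_sub_le g hw hv hε hε'
  rw [sinDist_comm] at this
  exact abs_sub_le_iff.2 ⟨normCocycle_sub_le g hv hw hε hε', this⟩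

lemma sinDist_smul_eq (g : SL2) (hv : v ≠ 0) (hw : w ≠ 0) : sinDist (g • v) (g • w) =
    sinDist v w * (Real.exp (-normCocycle g v) * Real.exp (-normCocycle g w)) := by
  have hgv := norm_smul_pos g hv
  have hgw := norm_smul_pos g hw
  rw [Real.exp_neg, Real.exp_neg, exp_normCocycle g hv, exp_normCocycle g hw, sinDist, sinDist,
    wedge_smul_smul]
  field_simp

lemma sinDist_smul_rpow_le (g : SL2) (hv : v ≠ 0) (hw : w ≠ 0) (ε : ℝ) :
    sinDist (g • v) (g • w) ^ ε ≤ sinDist v w ^ ε *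
      (Real.exp (-(2 * ε * normCocycle g v)) + Real.exp (-(2 * ε * normCocycle g w))) := by
  have exp_eq (y : ℝ) : Real.exp (-(2 * ε * y)) = (Real.exp (-y) ^ ε) ^ 2 := by
    rw [← Real.exp_mul, ← Real.exp_nat_mul]
    push_cast
    ring_nf
  rw [sinDist_smul_eq g hv hw, Real.mul_rpow (sinDist_nonneg _ _) (by positivity),
    Real.mul_rpow (Real.exp_pos _).le (Real.exp_pos _).le, exp_eq, exp_eq]
  have := Real.rpow_nonneg (sinDist_nonneg v w) ε
  gcongr
  nlinarith [sq_nonneg (Real.exp (-normCocycle g v) ^ ε - Real.exp (-normCocycle g w) ^ ε)]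

variable {μ : Measure SL2}

lemma potential_sinDist_rpow_le (hv : v ≠ 0) (hw : w ≠ 0) :
    potential μ (fun z : Plane × Plane ↦ ENNReal.ofReal (sinDist z.1 z.2 ^ ε)) (v, w) ≤
      ENNReal.ofReal (sinDist v w ^ ε) * (∑' n, cocycleLaplace (convPow μ n) (2 * ε) v +
        ∑' n, cocycleLaplace (convPow μ n) (2 * ε) w) := by
  rw [← ENNReal.tsum_add, ← ENNReal.tsum_mul_left]
  refine ENNReal.tsum_le_tsum fun n ↦ ?_
  rw [cocycleLaplace, cocycleLaplace, ← lintegral_add_left (by fun_prop),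
    ← lintegral_const_mul _ (by fun_prop)]
  refine lintegral_mono fun g ↦ ?_
  rw [← ENNReal.ofReal_add (Real.exp_pos _).le (Real.exp_pos _).le,
    ← ENNReal.ofReal_mul (Real.rpow_nonneg (sinDist_nonneg _ _) _)]
  exact ENNReal.ofReal_le_ofReal (sinDist_smul_rpow_le g hv hw ε)

lemma lintegral_edist_normCocycle_le (ρ : Measure SL2) (hv : v ≠ 0) (hw : w ≠ 0) (hε : 0 < ε)
    (hε' : ε ≤ 1) : ∫⁻ g, edist (normCocycle g v) (normCocycle g w) ∂ρ ≤
      ENNReal.ofReal (1 / ε) * (∫⁻ g, ENNReal.ofReal (opNorm g ^ (2 * ε)) ∂ρ) *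
        ENNReal.ofReal (sinDist v w ^ ε) := by
  rw [← lintegral_const_mul _ (by fun_prop), ← lintegral_mul_const _ (by fun_prop)]
  refine lintegral_mono fun g ↦ ?_
  have := opNorm_nonneg g
  rw [edist_dist, Real.dist_eq, ← ENNReal.ofReal_mul (by positivity),
    ← ENNReal.ofReal_mul (by positivity)]
  refine ENNReal.ofReal_le_ofReal ((abs_normCocycle_sub_le g hv hw hε hε').trans_eq (by ring))

lemma IsTransienceExponent.exists_tsum_lintegral_edist_mul_window_le [IsProbabilityMeasure μ]
    (h : IsTransienceExponent μ (2 * ε)) (hε : 0 < ε) (hε' : ε ≤ 1) :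
    ∃ B ≠ ∞, ∀ v ≠ 0, ∀ w ≠ 0,
      ∑' n, ∫⁻ g, edist (normCocycle g v) (normCocycle g w) * window (g • v) ∂(convPow μ n) ≤
        B * ENNReal.ofReal (sinDist v w ^ ε) := by
  obtain ⟨M, hM, hwindow⟩ := h.exists_potential_window_le (by positivity)
  obtain ⟨C, hC, hsum⟩ := h.exists_tsum_le
  set b := ENNReal.ofReal (1 / ε) * ∫⁻ g, ENNReal.ofReal (opNorm g ^ (2 * ε)) ∂μ
  have hb : b ≠ ∞ := ENNReal.mul_ne_top ENNReal.ofReal_ne_top h.moment_lt_top.ne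
  refine ⟨b * M * (C + C), ENNReal.mul_ne_top (ENNReal.mul_ne_top hb hM)
    (ENNReal.add_ne_top.2 ⟨hC, hC⟩), fun v hv w hw ↦ ?_⟩
  set s : Set (Plane × Plane) := {z | z.1 ≠ 0 ∧ z.2 ≠ 0}
  set d : Plane × Plane → ℝ := fun z ↦ Real.log ‖z.1‖ - Real.log ‖z.2‖
  have edist_eq (g : SL2) {z : Plane × Plane} (hz : z ∈ s) :
      edist (d (g • z)) (d z) = edist (normCocycle g z.1) (normCocycle g z.2) := by
    simp only [d, edist_dist, Real.dist_eq, Prod.smul_fst, Prod.smul_snd, log_norm_smul g hz.1,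
      log_norm_smul g hz.2]
    ring_nf
  have key := tsum_lintegral_edist_mul_le_potential (μ := μ)
    (φ := fun z : Plane × Plane ↦ window z.1) (d := d)
    (J := fun z ↦ b * M * ENNReal.ofReal (sinDist z.1 z.2 ^ ε)) (M := M) (s := s) (z := (v, w))
    (measurable_window.comp measurable_fst) (by fun_prop) (by fun_prop)
    (fun g z hz ↦ ⟨(smul_ne_zero_iff_ne g).2 hz.1, (smul_ne_zero_iff_ne g).2 hz.2⟩)
    (fun z hz ↦ hwindow z.1 hz.1) (fun z hz ↦ by
      simp_rw [edist_eq _ hz]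
      rw [mul_right_comm]
      gcongr
      exact lintegral_edist_normCocycle_le μ hz.1 hz.2 hε hε') ⟨hv, hw⟩
  simp_rw [edist_eq _ (show (v, w) ∈ s from ⟨hv, hw⟩)] at key
  refine key.trans ?_
  rw [potential_const_mul (by fun_prop), mul_assoc (b * M), mul_comm (C + C)]
  gcongr
  refine (potential_sinDist_rpow_le hv hw).trans ?_
  gcongr
  exacts [hsum v hv, hsum w hw]

end HolderEstimate

section HarmonicNearZero

/-- `H` is bounded, Hölder in the direction and Lipschitz in `log ‖v‖`, and `μ`-harmonic on a
punctured neighbourhood of `0`. The renewal functions below have these properties, and so do their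
differences under scaling. -/
structure HarmonicNearZero (μ : Measure SL2) (H : Plane → ℝ) : Prop where
  measurable : Measurable H
  exists_abs_le : ∃ M : ℝ, ∀ v ≠ 0, |H v| ≤ M
  exists_holder : ∃ K ε : ℝ, 0 < ε ∧ ∀ v ≠ 0, ∀ w ≠ 0,
    |H v - H w| ≤ K * (sinDist v w ^ ε + |Real.log ‖v‖ - Real.log ‖w‖|)
  exists_harmonic : ∃ r : ℝ, 0 < r ∧ ∀ v ≠ 0, ‖v‖ < r → H v = ∫ g, H (g • v) ∂μ

lemma log_norm_smul_sub_log_norm_smul {c : ℝ} (hc : c ≠ 0) {v w : Plane} (hv : v ≠ 0) (hw : w ≠ 0) :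
    Real.log ‖c • v‖ - Real.log ‖c • w‖ = Real.log ‖v‖ - Real.log ‖w‖ := by
  rw [norm_smul, norm_smul, Real.log_mul (norm_ne_zero_iff.2 hc) (norm_ne_zero_iff.2 hv),
    Real.log_mul (norm_ne_zero_iff.2 hc) (norm_ne_zero_iff.2 hw), add_sub_add_left_eq_sub]

namespace HarmonicNearZero

variable {μ : Measure SL2} {H : Plane → ℝ} {v : Plane} {c : ℝ}

lemma neg (h : HarmonicNearZero μ H) : HarmonicNearZero μ fun v ↦ -H v where
  measurable := h.measurable.neg
  exists_abs_le := by simpa only [abs_neg] using h.exists_abs_le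
  exists_holder := by
    obtain ⟨K, ε, hε, hH⟩ := h.exists_holder
    refine ⟨K, ε, hε, fun v hv w hw ↦ ?_⟩
    rw [neg_sub_neg, abs_sub_comm]
    exact hH v hv w hw
  exists_harmonic := by simpa only [integral_neg, neg_inj] using h.exists_harmonic

lemma integrable [IsFiniteMeasure μ] (h : HarmonicNearZero μ H) (hv : v ≠ 0) :
    Integrable (fun g ↦ H (g • v)) μ := by
  obtain ⟨M, hM⟩ := h.exists_abs_le
  exact .of_bound (h.measurable.comp (by fun_prop)).aestronglyMeasurable M
    (.of_forall fun g ↦ hM _ ((smul_ne_zero_iff_ne g).2 hv))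

lemma scaling_sub [IsFiniteMeasure μ] (h : HarmonicNearZero μ H) (hc : 0 < c) :
    HarmonicNearZero μ fun v ↦ H (c • v) - H v where
  measurable := (h.measurable.comp (measurable_const_smul c)).sub h.measurable
  exists_abs_le := by
    obtain ⟨M, hM⟩ := h.exists_abs_le
    exact ⟨M + M, fun v hv ↦
      (abs_sub _ _).trans (add_le_add (hM _ (smul_ne_zero hc.ne' hv)) (hM v hv))⟩
  exists_holder := by
    obtain ⟨K, ε, hε, hH⟩ := h.exists_holder
    refine ⟨K + K, ε, hε, fun v hv w hw ↦ ?_⟩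
    have hcH := hH (c • v) (smul_ne_zero hc.ne' hv) (c • w) (smul_ne_zero hc.ne' hw)
    rw [sinDist_smul_smul hc.ne' hc.ne', log_norm_smul_sub_log_norm_smul hc.ne' hv hw] at hcH
    rw [sub_sub_sub_comm, add_mul]
    exact (abs_sub _ _).trans (add_le_add hcH (hH v hv w hw))
  exists_harmonic := by
    obtain ⟨r, hr, hH⟩ := h.exists_harmonic
    refine ⟨min r (r / c), lt_min hr (by positivity), fun v hv hvr ↦ ?_⟩
    have hcv : c • v ≠ 0 := smul_ne_zero hc.ne' hv
    have norm_lt : ‖c • v‖ < r := by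
      rw [norm_smul, Real.norm_of_nonneg hc.le, mul_comm, ← lt_div_iff₀ hc]
      exact hvr.trans_le (min_le_right _ _)
    simp_rw [← fun g : SL2 ↦ smul_comm g c v]
    rw [hH v hv (hvr.trans_le (min_le_left _ _)), hH _ hcv norm_lt,
      integral_sub (h.integrable hcv) (h.integrable hv)]

lemma eventually_abs_sub_lt (h : HarmonicNearZero μ H) {w : Plane} (hw : w ≠ 0) {η : ℝ}
    (hη : 0 < η) : ∀ᶠ v in 𝓝 w, ∀ r : ℝ, 0 < r → |H (r • v) - H (r • w)| < η := by
  obtain ⟨K, ε, hε, hH⟩ := h.exists_holder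
  have ne_zero : {v : Plane | v ≠ 0} ∈ 𝓝 w := isOpen_ne.mem_nhds hw
  have sinDist_tendsto : ContinuousAt (fun v ↦ sinDist v w) w :=
    (continuousOn_sinDist (by fun_prop) (by fun_prop) (fun _ hv ↦ hv)
      fun _ _ ↦ hw).continuousAt ne_zero
  have log_tendsto : ContinuousAt (fun v : Plane ↦ Real.log ‖v‖) w :=
    continuous_norm.continuousAt.log (norm_ne_zero_iff.2 hw)
  have modulus_tendsto : ContinuousAt
      (fun v ↦ K * (sinDist v w ^ ε + |Real.log ‖v‖ - Real.log ‖w‖|)) w := by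
    have := sinDist_tendsto.rpow_const (.inr hε.le) (p := ε)
    fun_prop
  have modulus_lt : K * (sinDist w w ^ ε + |Real.log ‖w‖ - Real.log ‖w‖|) < η := by
    simpa [sinDist, Real.zero_rpow hε.ne'] using hη
  filter_upwards [modulus_tendsto.eventually (gt_mem_nhds modulus_lt), ne_zero] with v hv hv' r hr
  have := hH (r • v) (smul_ne_zero hr.ne' hv') (r • w) (smul_ne_zero hr.ne' hw)
  rw [sinDist_smul_smul hr.ne' hr.ne', log_norm_smul_sub_log_norm_smul hr.ne' hv' hw] at this
  exact this.trans_lt hv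

end HarmonicNearZero

end HarmonicNearZero

section RenewalFunction

/-- A Lipschitz function `f : ℝ → [0, 1]` supported in `[-2, 2]`. -/
structure IsTestFunction (f : ℝ → ℝ≥0) : Prop where
  le_one : ∀ x, f x ≤ 1
  eq_zero : ∀ x, 2 < |x| → f x = 0
  exists_lipschitzWith : ∃ K, LipschitzWith K f

/-- The renewal function `v ↦ ∑ₙ E f(log ‖gₙ ⋯ g₁ v‖)` of a test function `f`. -/
def renewalFunction (μ : Measure SL2) (f : ℝ → ℝ≥0) (v : Plane) : ℝ :=
  (potential μ (fun w ↦ (f (Real.log ‖w‖) : ℝ≥0∞)) v).toReal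

variable {μ : Measure SL2} {f : ℝ → ℝ≥0} {v w : Plane} {M : ℝ≥0∞}

lemma renewalFunction_nonneg (μ : Measure SL2) (f : ℝ → ℝ≥0) (v : Plane) :
    0 ≤ renewalFunction μ f v :=
  ENNReal.toReal_nonneg

namespace IsTestFunction

lemma continuous (hf : IsTestFunction f) : Continuous f :=
  let ⟨_, hK⟩ := hf.exists_lipschitzWith
  hK.continuous

lemma measurable_comp_log_norm (hf : IsTestFunction f) :
    Measurable fun w : Plane ↦ (f (Real.log ‖w‖) : ℝ≥0∞) :=
  (hf.continuous.measurable.comp (by fun_prop)).coe_nnreal_ennreal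

lemma comp_log_norm_le_window (hf : IsTestFunction f) (hv : v ≠ 0) :
    (f (Real.log ‖v‖) : ℝ≥0∞) ≤ window v := by
  by_cases h : 2 < |Real.log ‖v‖|
  · rw [hf.eq_zero _ h]
    exact zero_le
  · rw [window_eq_one hv (by linarith)]
    exact_mod_cast hf.le_one _

lemma potential_le (hf : IsTestFunction f) (hM : ∀ v ≠ 0, potential μ window v ≤ M) (hv : v ≠ 0) :
    potential μ (fun w ↦ (f (Real.log ‖w‖) : ℝ≥0∞)) v ≤ M :=
  (ENNReal.tsum_le_tsum fun _ ↦ lintegral_mono fun g ↦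
    hf.comp_log_norm_le_window ((smul_ne_zero_iff_ne g).2 hv)).trans (hM v hv)

lemma ofReal_renewalFunction (hf : IsTestFunction f) (hM : ∀ v ≠ 0, potential μ window v ≤ M)
    (hM' : M ≠ ∞) (hv : v ≠ 0) : ENNReal.ofReal (renewalFunction μ f v) =
      potential μ (fun w ↦ (f (Real.log ‖w‖) : ℝ≥0∞)) v :=
  ENNReal.ofReal_toReal (ne_top_of_le_ne_top hM' (hf.potential_le hM hv))

lemma comp_log_norm_smul_le (hf : IsTestFunction f) {K : ℝ≥0} (hK : LipschitzWith K f)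
    (hv : v ≠ 0) (hw : w ≠ 0) (g : SL2) : (f (Real.log ‖g • v‖) : ℝ≥0∞) ≤
      f (Real.log ‖g • w‖) + K * (edist (normCocycle g v) (normCocycle g w) * window (g • v) +
        edist (Real.log ‖v‖) (Real.log ‖w‖) * window (g • v)) := by
  by_cases h : 2 < |Real.log ‖g • v‖|
  · rw [hf.eq_zero _ h]
    exact zero_le
  have le_add_edist : (f (Real.log ‖g • v‖) : ℝ≥0∞) ≤ f (Real.log ‖g • w‖) +
      edist (f (Real.log ‖g • v‖)) (f (Real.log ‖g • w‖)) := by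
    rw [edist_nndist]
    exact_mod_cast NNReal.le_add_nndist _ _
  rw [window_eq_one ((smul_ne_zero_iff_ne g).2 hv) (by linarith), mul_one, mul_one]
  refine le_add_edist.trans (add_le_add_right ((hK _ _).trans ?_) _)
  rw [log_norm_smul g hv, log_norm_smul g hw]
  gcongr
  exact edist_add_add_le _ _ _ _

lemma potential_le_potential_add (hf : IsTestFunction f) {K : ℝ≥0} (hK : LipschitzWith K f)
    (hv : v ≠ 0) (hw : w ≠ 0) :
    potential μ (fun w ↦ (f (Real.log ‖w‖) : ℝ≥0∞)) v ≤
      potential μ (fun w ↦ (f (Real.log ‖w‖) : ℝ≥0∞)) w +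
        K * (∑' n, ∫⁻ g, edist (normCocycle g v) (normCocycle g w) * window (g • v) ∂(convPow μ n) +
          edist (Real.log ‖v‖) (Real.log ‖w‖) * potential μ window v) := by
  have window_measurable : Measurable fun g : SL2 ↦ window (g • v) :=
    measurable_window.comp (by fun_prop)
  have edist_measurable : Measurable fun g : SL2 ↦
      edist (normCocycle g v) (normCocycle g w) * window (g • v) := by fun_prop
  have f_measurable : Measurable fun g : SL2 ↦ (f (Real.log ‖g • w‖) : ℝ≥0∞) :=
    hf.measurable_comp_log_norm.comp (measurable_smul_const w)
  simp_rw [potential]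
  rw [← ENNReal.tsum_mul_left, ← ENNReal.tsum_add, ← ENNReal.tsum_mul_left, ← ENNReal.tsum_add]
  refine ENNReal.tsum_le_tsum fun n ↦ ?_
  rw [← lintegral_const_mul _ window_measurable, ← lintegral_add_left edist_measurable,
    ← lintegral_const_mul _ (by fun_prop), ← lintegral_add_left f_measurable]
  exact lintegral_mono fun g ↦ hf.comp_log_norm_smul_le hK hv hw g

variable [IsProbabilityMeasure μ]

lemma renewalFunction_eq_integral (hf : IsTestFunction f)
    (hM : ∀ v ≠ 0, potential μ window v ≤ M) (hM' : M ≠ ∞) (hv : v ≠ 0)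
    (hv' : ‖v‖ < Real.exp (-2)) :
    renewalFunction μ f v = ∫ g, renewalFunction μ f (g • v) ∂μ := by
  have log_lt : Real.log ‖v‖ < -2 := (Real.log_lt_iff_lt_exp (norm_pos_iff.2 hv)).2 hv'
  have eq_zero : f (Real.log ‖v‖) = 0 := hf.eq_zero _ (by
    rw [abs_of_neg (by linarith)]
    linarith)
  unfold renewalFunction
  rw [potential_eq_add_lintegral hf.measurable_comp_log_norm, eq_zero, ENNReal.coe_zero, zero_add,
    integral_toReal]
  · exact ((measurable_potential hf.measurable_comp_log_norm).comp (by fun_prop)).aemeasurable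
  · exact .of_forall fun g ↦
      (hf.potential_le hM ((smul_ne_zero_iff_ne g).2 hv)).trans_lt hM'.lt_top

lemma exists_renewalFunction_le_add (hf : IsTestFunction f) {ε : ℝ}
    (h : IsTransienceExponent μ (2 * ε)) (hε : 0 < ε) (hε' : ε ≤ 1) :
    ∃ K, ∀ v ≠ 0, ∀ w ≠ 0, renewalFunction μ f v ≤
      renewalFunction μ f w + K * (sinDist v w ^ ε + |Real.log ‖v‖ - Real.log ‖w‖|) := by
  obtain ⟨K, hK⟩ := hf.exists_lipschitzWith
  obtain ⟨M, hM', hM⟩ := h.exists_potential_window_le (by positivity)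
  obtain ⟨B, hB', hB⟩ := h.exists_tsum_lintegral_edist_mul_window_le hε hε'
  refine ⟨K * (B + M).toReal, fun v hv w hw ↦ ?_⟩
  have rpow_nonneg := Real.rpow_nonneg (sinDist_nonneg v w) ε
  rw [← ENNReal.ofReal_le_ofReal_iff (add_nonneg (renewalFunction_nonneg μ f w) (by positivity)),
    ENNReal.ofReal_add (renewalFunction_nonneg μ f w) (by positivity),
    hf.ofReal_renewalFunction hM hM' hv, hf.ofReal_renewalFunction hM hM' hw,
    mul_assoc, ENNReal.ofReal_mul K.coe_nonneg, ENNReal.ofReal_coe_nnreal,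
    ENNReal.ofReal_mul ENNReal.toReal_nonneg,
    ENNReal.ofReal_toReal (ENNReal.add_ne_top.2 ⟨hB', hM'⟩),
    ENNReal.ofReal_add rpow_nonneg (abs_nonneg _), ← Real.dist_eq, ← edist_dist]
  refine (hf.potential_le_potential_add hK hv hw).trans ?_
  gcongr
  calc _ ≤ B * ENNReal.ofReal (sinDist v w ^ ε) +
        edist (Real.log ‖v‖) (Real.log ‖w‖) * M := by
        gcongr
        exacts [hB v hv w hw, hM v hv]
    _ ≤ (B + M) * ENNReal.ofReal (sinDist v w ^ ε) +
        (B + M) * edist (Real.log ‖v‖) (Real.log ‖w‖) := by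
        rw [mul_comm _ M]
        gcongr
        exacts [le_self_add, le_add_self]
    _ = _ := (mul_add _ _ _).symm

lemma harmonicNearZero_renewalFunction (hf : IsTestFunction f) {ε : ℝ}
    (h : IsTransienceExponent μ (2 * ε)) (hε : 0 < ε) (hε' : ε ≤ 1) :
    HarmonicNearZero μ (renewalFunction μ f) := by
  obtain ⟨M, hM', hM⟩ := h.exists_potential_window_le (by positivity)
  obtain ⟨K, hK⟩ := hf.exists_renewalFunction_le_add h hε hε'
  refine ⟨(measurable_potential hf.measurable_comp_log_norm).ennreal_toReal,
    ⟨M.toReal, fun v hv ↦ ?_⟩, ⟨K, ε, hε, fun v hv w hw ↦ ?_⟩, Real.exp (-2), Real.exp_pos _,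
    fun v hv ↦ hf.renewalFunction_eq_integral hM hM' hv⟩
  · rw [abs_of_nonneg (renewalFunction_nonneg μ f v)]
    exact ENNReal.toReal_mono hM' (hf.potential_le hM hv)
  · have := hK w hw v hv
    rw [sinDist_comm, abs_sub_comm (Real.log _)] at this
    exact abs_sub_le_iff.2 ⟨by linarith [hK v hv w hw], by linarith⟩

end IsTestFunction

end RenewalFunction

section MaximizingDirections

lemma tendsto_integral_abs_sub {Ω : Type*} [MeasurableSpace Ω] {P : Measure Ω}
    [IsProbabilityMeasure P] {F : ℕ → Ω → ℝ} {M m : ℝ}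
    (hF : ∀ᶠ k in atTop, AEStronglyMeasurable (F k) P) (hM : ∀ᶠ k in atTop, ∀ ω, |F k ω| ≤ M)
    (hle : ∀ ω, ∀ a > m, ∀ᶠ k in atTop, F k ω < a)
    (hlim : Tendsto (fun k ↦ ∫ ω, F k ω ∂P) atTop (𝓝 m)) :
    Tendsto (fun k ↦ ∫ ω, |F k ω - m| ∂P) atTop (𝓝 0) := by
  have posPart_tendsto : Tendsto (fun k ↦ ∫ ω, (F k ω - m)⁺ ∂P) atTop (𝓝 (∫ _, 0 ∂P)) := by
    refine tendsto_integral_filter_of_dominated_convergence (fun _ ↦ M + |m|) ?_ ?_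
      (integrable_const _) (.of_forall fun ω ↦ ?_)
    · filter_upwards [hF] with k hFk
      exact (hFk.sub aestronglyMeasurable_const).sup aestronglyMeasurable_const
    · filter_upwards [hM] with k hMk
      refine .of_forall fun ω ↦ ?_
      rw [Real.norm_of_nonneg (posPart_nonneg _)]
      exact (sup_le (le_abs_self _) (abs_nonneg _)).trans
        ((abs_sub _ _).trans (by gcongr; exact hMk ω))
    · refine tendsto_order.2 ⟨fun a ha ↦ .of_forall fun k ↦ ha.trans_le (posPart_nonneg _),
        fun a ha ↦ ?_⟩
      filter_upwards [hle ω (m + a) (by linarith)] with k hk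
      exact max_lt (by linarith) ha
  have hsub := (posPart_tendsto.const_mul 2).sub (hlim.sub_const m)
  rw [integral_zero, mul_zero, sub_self, sub_zero] at hsub
  refine hsub.congr' ?_
  filter_upwards [hF, hM] with k hFk hMk
  have integrable : Integrable (F k) P := .of_bound hFk M (.of_forall hMk)
  have := integral_abs_eq_two_mul_integral_posPart_sub_integral
    (integrable.sub (integrable_const m))
  simp_rw [Pi.sub_apply] at this
  rw [this, integral_sub integrable (integrable_const m), integral_const, probReal_univ, one_smul]

lemma tendsto_smul_nhdsNE_zero {r : ℕ → ℝ} {w : Plane}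
    (hr : Tendsto r atTop (𝓝[>] 0)) (hw : w ≠ 0) :
    Tendsto (fun k ↦ r k • w) atTop (𝓝[≠] 0) := by
  obtain ⟨hr, hr'⟩ := tendsto_nhdsWithin_iff.1 hr
  refine tendsto_nhdsWithin_iff.2 ⟨by simpa using hr.smul_const w, ?_⟩
  filter_upwards [hr'] with k hk using smul_ne_zero (ne_of_gt hk) hw

namespace HarmonicNearZero

variable {μ : Measure SL2} {G : Plane → ℝ} {m : ℝ} {r : ℕ → ℝ} {w : Plane}

lemma exists_tendsto_smul (h : HarmonicNearZero μ G) {z : ℕ → Plane}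
    (hz : Tendsto z atTop (𝓝[≠] 0)) (hzG : Tendsto (G ∘ z) atTop (𝓝 m)) :
    ∃ (r : ℕ → ℝ) (u : Plane), Tendsto r atTop (𝓝[>] 0) ∧ u ≠ 0 ∧
      Tendsto (fun k ↦ G (r k • u)) atTop (𝓝 m) := by
  have z_ne_zero : ∀ᶠ k in atTop, z k ≠ 0 := hz.eventually eventually_mem_nhdsWithin
  have norm_tendsto : Tendsto (fun k ↦ ‖z k‖) atTop (𝓝[>] 0) := by
    refine tendsto_nhdsWithin_iff.2 ⟨?_, z_ne_zero.mono fun k hk ↦ norm_pos_iff.2 hk⟩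
    simpa using (tendsto_nhdsWithin_iff.1 hz).1.norm
  have mem_sphere : ∃ᶠ k in atTop, ‖z k‖⁻¹ • z k ∈ Metric.sphere (0 : Plane) 1 := by
    refine (z_ne_zero.mono fun k hk ↦ ?_).frequently
    rw [mem_sphere_zero_iff_norm, norm_smul, norm_inv, norm_norm,
      inv_mul_cancel₀ (norm_ne_zero_iff.2 hk)]
  obtain ⟨u, hu, φ, φ_mono, hφ⟩ := (isCompact_sphere _ _).tendsto_subseq' mem_sphere
  have hu₀ : u ≠ 0 := ne_zero_of_mem_unit_sphere ⟨u, hu⟩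
  have norm_tendsto := norm_tendsto.comp φ_mono.tendsto_atTop
  refine ⟨_, u, norm_tendsto, hu₀, ?_⟩
  refine (hzG.comp φ_mono.tendsto_atTop).congr_dist
    (tendsto_order.2 ⟨fun η hη ↦ .of_forall fun k ↦ hη.trans_le dist_nonneg, fun η hη ↦ ?_⟩)
  filter_upwards [hφ.eventually (h.eventually_abs_sub_lt hu₀ hη),
    norm_tendsto.eventually eventually_mem_nhdsWithin] with k hk hpos
  have hpos : 0 < ‖z (φ k)‖ := hpos
  have := hk _ hpos
  rwa [Function.comp_apply, smul_inv_smul₀ hpos.ne', ← Real.dist_eq] at this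

variable [IsProbabilityMeasure μ]

lemma tendsto_integral_abs_sub (h : HarmonicNearZero μ G)
    (hG : ∀ a > m, ∀ᶠ v in 𝓝[≠] 0, G v < a) (hr : Tendsto r atTop (𝓝[>] 0)) (hw : w ≠ 0)
    (hlim : Tendsto (fun k ↦ G (r k • w)) atTop (𝓝 m)) :
    Tendsto (fun k ↦ ∫ g, |G (r k • g • w) - m| ∂μ) atTop (𝓝 0) := by
  obtain ⟨M, hM⟩ := h.exists_abs_le
  obtain ⟨ρ, hρ, harmonic⟩ := h.exists_harmonic
  have ne_zero (g : SL2) : g • w ≠ 0 := (smul_ne_zero_iff_ne g).2 hw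
  refine _root_.tendsto_integral_abs_sub (M := M) ?_ ?_ ?_ (hlim.congr' ?_)
  · exact .of_forall fun k ↦ (h.measurable.comp (by fun_prop)).aestronglyMeasurable
  · filter_upwards [(tendsto_nhdsWithin_iff.1 hr).2] with k hk g
    exact hM _ (smul_ne_zero (ne_of_gt hk) (ne_zero g))
  · exact fun g a ha ↦ (tendsto_smul_nhdsNE_zero hr (ne_zero g)).eventually (hG a ha)
  · have ball_mem : ∀ᶠ v : Plane in 𝓝[≠] 0, v ≠ 0 ∧ ‖v‖ < ρ :=
      eventually_mem_nhdsWithin.and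
        (nhdsWithin_le_nhds (continuous_norm.continuousAt.eventually_lt_const (by simpa)))
    filter_upwards [(tendsto_smul_nhdsNE_zero hr hw).eventually ball_mem] with k hk
    rw [harmonic _ hk.1 hk.2]
    exact integral_congr_ae (.of_forall fun g ↦ congrArg G (smul_comm g (r k) w))

lemma tendsto_smul_of_mem_support (h : HarmonicNearZero μ G)
    (hG : ∀ a > m, ∀ᶠ v in 𝓝[≠] 0, G v < a) (hr : Tendsto r atTop (𝓝[>] 0)) (hw : w ≠ 0)
    (hlim : Tendsto (fun k ↦ G (r k • w)) atTop (𝓝 m)) {g₀ : SL2} (hg₀ : g₀ ∈ μ.support) :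
    Tendsto (fun k ↦ G (r k • g₀ • w)) atTop (𝓝 m) := by
  refine Metric.tendsto_nhds.2 fun η hη ↦ ?_
  have hgw : g₀ • w ≠ 0 := (smul_ne_zero_iff_ne g₀).2 hw
  set O := {g : SL2 | ∀ ρ : ℝ, 0 < ρ → |G (ρ • g • w) - G (ρ • g₀ • w)| < η / 2}
  have O_mem : O ∈ 𝓝 g₀ :=
    ((continuous_id.smul continuous_const).tendsto g₀).eventually
      (h.eventually_abs_sub_lt hgw (half_pos hη))
  have O_pos : 0 < μ.real O :=
    ENNReal.toReal_pos ((Measure.mem_support_iff_forall g₀).1 hg₀ O O_mem).ne' (measure_ne_top μ O)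
  have integral_lt : ∀ᶠ k in atTop, ∫ g, |G (r k • g • w) - m| ∂μ < η / 2 * μ.real O :=
    (h.tendsto_integral_abs_sub hG hr hw hlim).eventually (gt_mem_nhds (by positivity))
  filter_upwards [integral_lt, (tendsto_nhdsWithin_iff.1 hr).2] with k hk hrk
  have hrk : 0 < r k := hrk
  by_contra! hle
  have subset : O ⊆ {g | η / 2 ≤ |G (r k • g • w) - m|} := by
    intro g hg
    have triangle := abs_sub_le (G (r k • g₀ • w)) (G (r k • g • w)) m
    rw [abs_sub_comm (G (r k • g₀ • w)) (G _)] at triangle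
    rw [Real.dist_eq] at hle
    exact (by linarith [hg (r k) hrk] : η / 2 ≤ |G (r k • g • w) - m|)
  have integrable : Integrable (fun g ↦ |G (r k • g • w) - m|) μ := by
    simp_rw [← fun g : SL2 ↦ smul_comm g (r k) w]
    exact ((h.integrable (smul_ne_zero hrk.ne' hw)).sub (integrable_const m)).abs
  have := mul_meas_ge_le_integral_of_nonneg (.of_forall fun g ↦ abs_nonneg _) integrable (η / 2)
  have := mul_le_mul_of_nonneg_left (measureReal_mono subset (measure_ne_top μ _)) (half_pos hη).le
  linarith

lemma exists_tendsto_of_mem_closure_support (h : HarmonicNearZero μ G) :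
    ∃ (m : ℝ) (r : ℕ → ℝ) (u : Plane), (∀ a > m, ∀ᶠ v in 𝓝[≠] 0, G v < a) ∧
      Tendsto r atTop (𝓝[>] 0) ∧ u ≠ 0 ∧
        ∀ g ∈ Submonoid.closure μ.support, Tendsto (fun k ↦ G (r k • g • u)) atTop (𝓝 m) := by
  obtain ⟨M, hM⟩ := h.exists_abs_le
  have bddAbove : IsBoundedUnder (· ≤ ·) (𝓝[≠] 0) G :=
    isBoundedUnder_of_eventually_le (eventually_mem_nhdsWithin.mono fun v hv ↦
      (abs_le.1 (hM v hv)).2)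
  have bddBelow : IsBoundedUnder (· ≥ ·) (𝓝[≠] 0) G :=
    isBoundedUnder_of_eventually_ge (eventually_mem_nhdsWithin.mono fun v hv ↦
      (abs_le.1 (hM v hv)).1)
  obtain ⟨z, hzG, hz⟩ := exists_seq_tendsto_limsup bddBelow.isCoboundedUnder_le bddAbove
  obtain ⟨r, u, hr, hu, hlim⟩ := h.exists_tendsto_smul hz hzG
  have hG (a) (ha : a > limsup G (𝓝[≠] 0)) : ∀ᶠ v in 𝓝[≠] 0, G v < a :=
    eventually_lt_of_limsup_lt ha bddAbove
  refine ⟨_, r, u, hG, hr, hu, fun g hg ↦ ?_⟩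
  induction hg using Submonoid.closure_induction_left with
  | one => simpa only [one_smul] using hlim
  | mul_left s hs g _ ih =>
    simpa only [mul_smul] using
      h.tendsto_smul_of_mem_support hG hr ((smul_ne_zero_iff_ne g).2 hu) ih hs

end HarmonicNearZero

end MaximizingDirections

section Hyperbolic

variable {g : SL2} {e f : Plane} {l : ℝ}

lemma pow_smul_eq_pow_smul (h : g • e = l • e) (n : ℕ) : g ^ n • e = l ^ n • e := by
  induction n with
  | zero => simp only [pow_zero, one_smul]
  | succ n ih => rw [pow_succ, mul_smul, h, smul_comm, ih, smul_smul, pow_succ, mul_comm]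

lemma tendsto_inv_pow_smul_pow_smul (hl : 1 < l) (he : g • e = l • e) (hf : g • f = l⁻¹ • f)
    (hef : wedge e f ≠ 0) (v : Plane) :
    Tendsto (fun n : ℕ ↦ (l ^ n)⁻¹ • g ^ n • v) atTop (𝓝 ((wedge v f / wedge e f) • e)) := by
  have hl₀ : l ≠ 0 := (zero_lt_one.trans hl).ne'
  have v_eq : v = (wedge v f / wedge e f) • e + (wedge e v / wedge e f) • f := by
    rw [div_eq_inv_mul, div_eq_inv_mul, mul_smul, mul_smul, ← smul_add, ← wedge_smul_eq_add,
      inv_smul_smul₀ hef]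
  have iterate (n : ℕ) : (l ^ n)⁻¹ • g ^ n • v =
      (wedge v f / wedge e f) • e + ((l⁻¹ ^ 2) ^ n * (wedge e v / wedge e f)) • f := by
    conv_lhs => rw [v_eq]
    rw [smul_add, smul_comm (g ^ n), smul_comm (g ^ n), pow_smul_eq_pow_smul he,
      pow_smul_eq_pow_smul hf, smul_add, smul_comm _ _ (l ^ n • e),
      inv_smul_smul₀ (pow_ne_zero n hl₀), smul_smul, smul_smul]
    congr 2
    rw [← inv_pow]
    ring
  simp_rw [iterate]
  have pow_tendsto : Tendsto (fun n : ℕ ↦ (l⁻¹ ^ 2) ^ n) atTop (𝓝 0) :=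
    tendsto_pow_atTop_nhds_zero_of_lt_one (by positivity)
      (pow_lt_one₀ (by positivity) (inv_lt_one_of_one_lt₀ hl) two_ne_zero)
  simpa using ((pow_tendsto.mul_const _).smul_const f).const_add ((wedge v f / wedge e f) • e)

lemma ZariskiDense.exists_mem_closure_wedge_smul_ne_zero {μ : Measure SL2} (hμ : ZariskiDense μ)
    {u : Plane} (hu : u ≠ 0) (hf : f ≠ 0) :
    ∃ s ∈ Submonoid.closure μ.support, wedge (s • u) f ≠ 0 := by
  by_cases huf : wedge f u = 0
  · obtain ⟨c, rfl⟩ := exists_eq_smul_of_wedge_eq_zero hf huf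
    obtain ⟨s, hs, hsf⟩ := hμ.exists_wedge_smul_ne_zero hf
    refine ⟨s, Submonoid.subset_closure hs, ?_⟩
    rw [smul_comm, map_smul, LinearMap.smul_apply, wedge_swap]
    exact smul_ne_zero (smul_ne_zero_iff.1 hu).1 (neg_ne_zero.2 hsf)
  · refine ⟨1, one_mem _, ?_⟩
    rwa [one_smul, wedge_swap, neg_ne_zero]

end Hyperbolic

section Periods

lemma tendsto_const_smul_nhdsNE_zero {c : ℝ} (hc : 0 < c) :
    Tendsto (fun v : Plane ↦ c • v) (𝓝[≠] 0) (𝓝[≠] 0) := by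
  refine tendsto_nhdsWithin_of_tendsto_nhds_of_eventually_within _
    (((continuous_const_smul c).tendsto' 0 0 (smul_zero c)).mono_left nhdsWithin_le_nhds)
    (eventually_mem_nhdsWithin.mono fun v hv ↦ smul_ne_zero hc.ne' hv)

lemma exists_apply_smul_pow_smul_sub_lt {H : Plane → ℝ} {M c s : ℝ} (hM : ∀ v ≠ 0, |H v| ≤ M)
    (hc : c ≠ 0) (hs : 0 < s) :
    ∃ N : ℕ, ∀ v ≠ 0, ∃ i < N, H (c • c ^ i • v) - H (c ^ i • v) < s := by
  obtain ⟨N, hN⟩ := exists_nat_gt (2 * M / s)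
  refine ⟨N, fun v hv ↦ ?_⟩
  by_contra! hle
  have telescope : H (c ^ N • v) - H v =
      ∑ i ∈ Finset.range N, (H (c • c ^ i • v) - H (c ^ i • v)) := by
    simpa only [smul_smul, ← pow_succ', pow_zero, one_smul] using
      (Finset.sum_range_sub (fun i ↦ H (c ^ i • v)) N).symm
  have le_sum := Finset.card_nsmul_le_sum _ _ s fun i hi ↦ hle i (Finset.mem_range.1 hi)
  rw [Finset.card_range, nsmul_eq_mul, ← telescope] at le_sum
  have := (abs_le.1 (hM _ (smul_ne_zero (pow_ne_zero N hc) hv))).2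
  have := (abs_le.1 (hM v hv)).1
  rw [div_lt_iff₀ hs] at hN
  linarith

namespace HarmonicNearZero

variable {μ : Measure SL2} [IsProbabilityMeasure μ] {H : Plane → ℝ} {g : SL2} {e f : Plane} {l : ℝ}

lemma eventually_scaling_sub_lt (hμ : ZariskiDense μ) (h : HarmonicNearZero μ H)
    (hg : g ∈ Submonoid.closure μ.support) (hl : 1 < l) (he : g • e = l • e)
    (hf : g • f = l⁻¹ • f) (hef : wedge e f ≠ 0) {a : ℝ} (ha : 0 < a) :
    ∀ᶠ v in 𝓝[≠] 0, H (l • v) - H v < a := by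
  have hl₀ : 0 < l := zero_lt_one.trans hl
  have hf₀ : f ≠ 0 := by
    rintro rfl
    exact hef (map_zero _)
  have he₀ : e ≠ 0 := by
    rintro rfl
    exact hef (by rw [map_zero, LinearMap.zero_apply])
  have hG := h.scaling_sub hl₀
  obtain ⟨m, r, u, hm, hr, hu, hlim⟩ := hG.exists_tendsto_of_mem_closure_support
  refine hm a (lt_of_le_of_lt ?_ ha)
  by_contra! m_pos
  obtain ⟨s, hs, hsu⟩ := hμ.exists_mem_closure_wedge_smul_ne_zero hu hf₀
  set w := (wedge (s • u) f / wedge e f) • e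
  have hw : w ≠ 0 := smul_ne_zero (div_ne_zero hsu hef) he₀
  obtain ⟨n₀, hn₀⟩ := eventually_atTop.1
    ((tendsto_inv_pow_smul_pow_smul hl he hf hef (s • u)).eventually
      (hG.eventually_abs_sub_lt hw (by linarith : 0 < m / 4)))
  obtain ⟨M, hM⟩ := h.exists_abs_le
  obtain ⟨N, hN⟩ := exists_apply_smul_pow_smul_sub_lt hM hl₀.ne' (half_pos m_pos)
  have near_max : ∀ᶠ k in atTop, ∀ i < N, 3 * m / 4 <
      H (l • r k • g ^ (n₀ + i) • s • u) - H (r k • g ^ (n₀ + i) • s • u) := by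
    refine (Set.finite_lt_nat N).eventually_all.2 fun i _ ↦ ?_
    have := hlim _ (mul_mem (pow_mem hg (n₀ + i)) hs)
    simp_rw [mul_smul] at this
    exact this.eventually (lt_mem_nhds (by linarith))
  obtain ⟨k, hk, hrk⟩ := (near_max.and (hr.eventually eventually_mem_nhdsWithin)).exists
  have hrk : 0 < r k := hrk
  obtain ⟨i, hiN, hi⟩ := hN (r k • l ^ n₀ • w)
    (smul_ne_zero hrk.ne' (smul_ne_zero (pow_pos hl₀ _).ne' hw))
  have close := hn₀ (n₀ + i) le_self_add (r k * l ^ (n₀ + i)) (by positivity)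
  rw [mul_smul, smul_inv_smul₀ (pow_pos hl₀ _).ne', mul_smul] at close
  rw [smul_comm (l ^ i), smul_smul (l ^ i), ← pow_add, add_comm i] at hi
  linarith [hk i hiN, (abs_lt.1 close).2]

lemma tendsto_scaling_sub (hμ : ZariskiDense μ) (h : HarmonicNearZero μ H)
    (hg : g ∈ Submonoid.closure μ.support) (hl : 1 < l) (he : g • e = l • e)
    (hf : g • f = l⁻¹ • f) (hef : wedge e f ≠ 0) :
    Tendsto (fun v ↦ H (l • v) - H v) (𝓝[≠] 0) (𝓝 0) := by
  refine tendsto_order.2 ⟨fun a ha ↦ ?_, fun a ↦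
    h.eventually_scaling_sub_lt hμ hg hl he hf hef⟩
  filter_upwards [h.neg.eventually_scaling_sub_lt hμ hg hl he hf hef (neg_pos.2 ha)] with v hv
  linarith

end HarmonicNearZero

/-- The asymptotic periods of the renewal process: the `p` such that `H (eᵖ v) - H v → 0` as
`v → 0`, for every `H` as in `HarmonicNearZero`. -/
def logPeriods (μ : Measure SL2) : AddSubgroup ℝ where
  carrier := {p | ∀ H, HarmonicNearZero μ H →
    Tendsto (fun v ↦ H (Real.exp p • v) - H v) (𝓝[≠] 0) (𝓝 0)}
  zero_mem' H _ := by simp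
  add_mem' {p q} hp hq H hH := by
    have := ((hp H hH).comp (tendsto_const_smul_nhdsNE_zero (Real.exp_pos q))).add (hq H hH)
    simpa only [Function.comp_apply, smul_smul, ← Real.exp_add, sub_add_sub_cancel,
      add_zero] using this
  neg_mem' {p} hp H hH := by
    have := ((hp H hH).comp (tendsto_const_smul_nhdsNE_zero (Real.exp_pos (-p)))).neg
    simpa only [Function.comp_apply, smul_smul, ← Real.exp_add, add_neg_cancel, Real.exp_zero,
      one_smul, neg_sub, neg_zero] using this

end Periods

section HyperbolicElements

lemma ae_word_mem_closure_support (μ : Measure SL2) [IsProbabilityMeasure μ] (n : ℕ) :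
    ∀ᵐ g ∂(μpi μ n), word g ∈ Submonoid.closure μ.support := by
  have mem_support : ∀ᵐ g ∂(μpi μ n), ∀ i, g i ∈ μ.support :=
    ae_all_iff.2 fun _ ↦ Measure.tendsto_eval_ae_ae Measure.support_mem_ae
  filter_upwards [mem_support] with g hg
  refine list_prod_mem fun s hs ↦ ?_
  obtain ⟨i, rfl⟩ := (List.mem_ofFn' _ _).1 hs
  exact Submonoid.subset_closure (hg i)

lemma exists_mem_closure_support_lt_opNorm {μ : Measure SL2} {ν : Measure PX}
    [IsProbabilityMeasure μ] [IsProbabilityMeasure ν] (hμ : HasExpMoment μ)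
    (hν : IsStationaryMeas μ ν) (hσ : 0 < ∫ g, ∫ x, cocycle g x ∂ν ∂μ) (B : ℝ) :
    ∃ g ∈ Submonoid.closure μ.support, B < opNorm g := by
  obtain ⟨n, hn⟩ := exists_nat_gt (Real.log (max B 1) / ∫ g, ∫ x, cocycle g x ∂ν ∂μ)
  have word_measurable := measurable_word n
  have log_measurable : AEStronglyMeasurable (fun g : SL2 ↦ Real.log (opNorm g))
      ((μpi μ n).map word) :=
    (Real.measurable_log.comp measurable_opNorm).aestronglyMeasurable
  have integrable := hμ.integrable_log_opNorm n
  rw [← map_word_μpi, integrable_map_measure log_measurable word_measurable.aemeasurable]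
    at integrable
  have le_integral := mul_lyapunov_le_integral_log_opNorm hμ hν n
  rw [← map_word_μpi, integral_map word_measurable.aemeasurable log_measurable] at le_integral
  have : IsProbabilityMeasure (μpi μ n) := by
    unfold μpi
    infer_instance
  obtain ⟨w, hw, le_log⟩ := exists_notMem_null_integral_le integrable
    (ae_iff.1 (ae_word_mem_closure_support μ n))
  refine ⟨word w, not_not.1 hw, (le_max_left B 1).trans_lt ?_⟩
  rw [← Real.log_lt_log_iff (by positivity) (opNorm_pos _)]
  rw [div_lt_iff₀ hσ] at hn
  exact hn.trans_le (le_integral.trans le_log)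

lemma wedge_smul_add_wedge_smul (g : SL2) (v w : Plane) :
    wedge (g • v) w + wedge v (g • w) = trace g * wedge v w := by
  simp only [wedge_apply, smul_apply_zero, smul_apply_one, trace_eq]
  ring

lemma trace_mul_self (g : SL2) : trace (g * g) = trace g ^ 2 - 2 := by
  simp only [trace_eq, Matrix.SpecialLinearGroup.coe_mul, Matrix.mul_apply, Fin.sum_univ_two]
  linear_combination -2 * det_eq_one g

lemma exists_tendsto_inv_opNorm_smul (g : ℕ → SL2) :
    ∃ (B : Plane →L[ℝ] Plane) (φ : ℕ → ℕ), B ≠ 0 ∧ StrictMono φ ∧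
      Tendsto (fun k ↦ (opNorm (g (φ k)))⁻¹ •
        Matrix.toEuclideanCLM (𝕜 := ℝ) (g (φ k) : Matrix (Fin 2) (Fin 2) ℝ)) atTop (𝓝 B) := by
  have mem_sphere (k : ℕ) : (opNorm (g k))⁻¹ •
      Matrix.toEuclideanCLM (𝕜 := ℝ) (g k : Matrix (Fin 2) (Fin 2) ℝ) ∈ Metric.sphere 0 1 := by
    rw [mem_sphere_zero_iff_norm, norm_smul, norm_inv, Real.norm_of_nonneg (opNorm_nonneg _)]
    exact inv_mul_cancel₀ (opNorm_pos _).ne'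
  obtain ⟨B, hB, φ, φ_mono, hφ⟩ := (isCompact_sphere _ _).tendsto_subseq mem_sphere
  exact ⟨B, φ, ne_zero_of_mem_unit_sphere ⟨B, hB⟩, φ_mono, hφ⟩

lemma exists_two_lt_abs_trace {T : Submonoid SL2} (hT : ∀ B : ℝ, ∃ g ∈ T, B < opNorm g)
    (hT' : ∀ e ≠ 0, ∃ g ∈ T, wedge e (g • e) ≠ 0) : ∃ g ∈ T, 2 < |trace g| := by
  by_contra! trace_le
  choose g hgT hg using fun k : ℕ ↦ hT k
  obtain ⟨B, φ, hB, φ_mono, B_tendsto⟩ := exists_tendsto_inv_opNorm_smul g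
  have inv_tendsto : Tendsto (fun k ↦ (opNorm (g (φ k)))⁻¹) atTop (𝓝 0) :=
    tendsto_inv_atTop_zero.comp ((tendsto_atTop_mono (fun k ↦ (hg k).le)
      tendsto_natCast_atTop_atTop).comp φ_mono.tendsto_atTop)
  have trace_tendsto {t : SL2} (ht : t ∈ T) :
      Tendsto (fun k ↦ (opNorm (g (φ k)))⁻¹ * trace (t * g (φ k))) atTop (𝓝 0) :=
    inv_tendsto.zero_mul_isBoundedUnder_le
      ⟨2, eventually_map.2 (.of_forall fun k ↦ trace_le _ (mul_mem ht (hgT _)))⟩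
  have B_apply (v : Plane) :
      Tendsto (fun k ↦ (opNorm (g (φ k)))⁻¹ • g (φ k) • v) atTop (𝓝 (B v)) := by
    simpa only [smul_apply, toEuclideanCLM_apply_eq_smul] using B_tendsto.eval_const v
  have B_sq (v : Plane) : B (B v) = 0 := by
    refine tendsto_nhds_unique ((isBoundedBilinearMap_apply.continuous.tendsto (B, B v)).comp
      (B_tendsto.prodMk_nhds (B_apply v))) ?_
    have := ((trace_tendsto (one_mem T)).smul (B_apply v)).sub
      ((inv_tendsto.mul inv_tendsto).smul_const v)
    rw [zero_smul, mul_zero, zero_smul, sub_zero] at this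
    refine this.congr fun k ↦ ?_
    rw [Function.comp_apply, smul_apply, toEuclideanCLM_apply_eq_smul, smul_comm (g (φ k)),
      smul_smul_eq_trace_smul_sub, one_mul]
    generalize g (φ k) • v = y
    module
  have B_wedge {t : SL2} (ht : t ∈ T) (v w : Plane) :
      wedge (t • B v) w + wedge v (t • B w) = 0 := by
    have wedge_tendsto :=
      ((continuous_wedge.tendsto _).comp (((B_apply v).const_smul t).prodMk_nhds
        (tendsto_const_nhds (x := w)))).add
      ((continuous_wedge.tendsto _).comp ((tendsto_const_nhds (x := v)).prodMk_nhds
        ((B_apply w).const_smul t)))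
    refine tendsto_nhds_unique wedge_tendsto ?_
    simpa [smul_comm t, ← mul_smul, ← mul_add, wedge_smul_add_wedge_smul, mul_assoc] using
      (trace_tendsto ht).mul_const (wedge v w)
  obtain ⟨w, hw⟩ := DFunLike.ne_iff.1 hB
  obtain ⟨t, ht, htw⟩ := hT' (B w) hw
  have := B_wedge ht (B w) w
  rw [B_sq, smul_zero, map_zero, LinearMap.zero_apply, zero_add] at this
  exact htw this

lemma exists_wedge_smul_ne_zero_of_two_lt_abs_trace {g : SL2} (hg : 2 < |trace g|) :
    ∃ x, wedge x (g • x) ≠ 0 := by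
  by_contra! H
  have h₁₀ : g 1 0 = 0 := by
    simpa [wedge_apply, smul_apply_zero, smul_apply_one] using H !₂[1, 0]
  have h₀₁ : g 0 1 = 0 := by
    simpa [wedge_apply, smul_apply_zero, smul_apply_one] using H !₂[0, 1]
  have diag_eq : g 1 1 - g 0 0 = 0 := by
    simpa [wedge_apply, smul_apply_zero, smul_apply_one, h₁₀, h₀₁] using H !₂[1, 1]
  have trace_sq : |trace g| ^ 2 = 4 := by
    rw [sq_abs, trace_eq]
    linear_combination 4 * det_eq_one g + (g 1 1 - g 0 0) * diag_eq + 4 * g 0 1 * h₁₀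
  nlinarith

lemma exists_eigenvectors {g : SL2} {l : ℝ} (hl : 1 < l) (hg : trace g = l + l⁻¹) :
    ∃ e f, wedge e f ≠ 0 ∧ g • e = l • e ∧ g • f = l⁻¹ • f := by
  have hl₀ : l ≠ 0 := (zero_lt_one.trans hl).ne'
  have inv_lt : l⁻¹ < 1 := inv_lt_one_of_one_lt₀ hl
  have two_lt : 2 < |trace g| := by
    rw [hg]
    refine lt_of_lt_of_le ?_ (le_abs_self _)
    nlinarith [mul_pos (sub_pos.2 hl) (sub_pos.2 inv_lt), mul_inv_cancel₀ hl₀]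
  obtain ⟨x, hx⟩ := exists_wedge_smul_ne_zero_of_two_lt_abs_trace two_lt
  refine ⟨g • x - l⁻¹ • x, g • x - l • x, ?_, ?_, ?_⟩
  · have : wedge (g • x - l⁻¹ • x) (g • x - l • x) = (l - l⁻¹) * wedge x (g • x) := by
      simp only [map_sub, map_smul, LinearMap.sub_apply, LinearMap.smul_apply, wedge_self,
        wedge_swap (g • x) x, smul_eq_mul]
      ring
    rw [this]
    exact mul_ne_zero (by linarith) hx
  · rw [smul_sub, smul_comm g l⁻¹ x, smul_smul_eq_trace_smul_sub, hg, smul_sub, smul_inv_smul₀ hl₀,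
      add_smul]
    abel
  · rw [smul_sub, smul_comm g l x, smul_smul_eq_trace_smul_sub, hg, smul_sub, inv_smul_smul₀ hl₀,
      add_smul]
    abel

lemma exists_eigenvectors_mul_self {g : SL2} {l : ℝ} (hg : 2 < |trace g|)
    (hl : l = Real.exp (2 * Real.arcosh (|trace g| / 2))) :
    1 < l ∧ ∃ e f, wedge e f ≠ 0 ∧ (g * g) • e = l • e ∧ (g * g) • f = l⁻¹ • f := by
  set τ := Real.arcosh (|trace g| / 2)
  have cosh_τ : 2 * Real.cosh τ = |trace g| := by
    rw [Real.cosh_arcosh (by linarith), mul_div_cancel₀ _ two_ne_zero]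
  have trace_sq : trace (g * g) = l + l⁻¹ := by
    rw [trace_mul_self, ← sq_abs, ← cosh_τ, hl, ← Real.exp_neg]
    linear_combination 2 * Real.cosh_eq (2 * τ) - 2 * Real.cosh_two_mul τ + 2 * Real.cosh_sq τ
  have one_lt : 1 < l := by
    rw [hl]
    exact Real.one_lt_exp_iff.2 (mul_pos two_pos (Real.arcosh_pos (by linarith)))
  exact ⟨one_lt, exists_eigenvectors one_lt trace_sq⟩

lemma two_mul_arcosh_mem_logPeriods {μ : Measure SL2} [IsProbabilityMeasure μ]
    (hμ : ZariskiDense μ) {g : SL2} (hg : g ∈ Submonoid.closure μ.support)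
    (htr : 2 < |trace g|) : 2 * Real.arcosh (|trace g| / 2) ∈ logPeriods μ := by
  obtain ⟨one_lt, e, f, hef, he, hf⟩ := exists_eigenvectors_mul_self htr rfl
  exact fun H hH ↦ hH.tendsto_scaling_sub hμ (mul_mem hg hg) one_lt he hf hef

end HyperbolicElements

section SmallPeriods

open scoped Pointwise

lemma wedge_eq_zero_of_wedge_eq_zero {e v w : Plane} (he : e ≠ 0) (hv : wedge e v = 0)
    (hw : wedge e w = 0) : wedge v w = 0 := by
  obtain ⟨c, rfl⟩ := exists_eq_smul_of_wedge_eq_zero he hv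
  obtain ⟨d, rfl⟩ := exists_eq_smul_of_wedge_eq_zero he hw
  simp

lemma wedge_inv_smul (g : SL2) (v w : Plane) : wedge v (g⁻¹ • w) = wedge (g • v) w := by
  rw [← wedge_smul_smul g, smul_inv_smul]

lemma wedge_mul_wedge_eq (u v w z : Plane) :
    wedge u v * wedge w z = wedge u w * wedge v z - wedge u z * wedge v w := by
  simp only [wedge_apply]
  ring

lemma exists_mem_wedge_smul_ne_zero_and {T : Submonoid SL2} {e f : Plane} (hef : wedge e f ≠ 0)
    (line : ∃ s ∈ T, wedge e (s • e) ≠ 0)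
    (pair : ∃ s ∈ T, ¬(wedge e (s • e) = 0 ∧ wedge f (s • f) = 0) ∧
      ¬(wedge f (s • e) = 0 ∧ wedge e (s • f) = 0)) :
    ∃ h ∈ T, wedge e (h • e) ≠ 0 ∧ wedge f (h • e) ≠ 0 := by
  by_contra! H
  have he : e ≠ 0 := by rintro rfl; simp at hef
  have hf : f ≠ 0 := by rintro rfl; simp at hef
  obtain ⟨s, hs, hse⟩ := line
  obtain ⟨t, ht, diagonal, antidiagonal⟩ := pair
  obtain ⟨c, hc⟩ := exists_eq_smul_of_wedge_eq_zero hf (H s hs hse)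
  have hc₀ : c ≠ 0 := by
    rintro rfl
    simp [hc] at hse
  have tf_mem : wedge e (t • f) ≠ 0 → wedge f (t • f) = 0 := by
    simpa [mul_smul, hc, smul_comm t, hc₀] using H (t * s) (mul_mem ht hs)
  have det : wedge (t • e) (t • f) ≠ 0 := by rwa [wedge_smul_smul]
  by_cases hte : wedge e (t • e) = 0
  · have htf : wedge e (t • f) = 0 := by
      by_contra htf
      exact diagonal ⟨hte, tf_mem htf⟩
    exact det (wedge_eq_zero_of_wedge_eq_zero he hte htf)
  · have htf : wedge e (t • f) ≠ 0 := fun htf ↦ antidiagonal ⟨H t ht hte, htf⟩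
    exact det (wedge_eq_zero_of_wedge_eq_zero hf (H t ht hte) (tf_mem htf))

lemma eventually_wedge_smul_pow_smul_ne_zero {g h : SL2} {l : ℝ} {e f v w : Plane} (hl : 1 < l)
    (he : g • e = l • e) (hf : g • f = l⁻¹ • f) (hef : wedge e f ≠ 0) (hv : wedge v f ≠ 0)
    (hw : wedge (h • e) w ≠ 0) : ∀ᶠ n in atTop, wedge (h • g ^ n • v) w ≠ 0 := by
  have scaled_tendsto := (continuous_wedge.tendsto _).comp
    (((tendsto_inv_pow_smul_pow_smul hl he hf hef v).const_smul h).prodMk_nhds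
      (tendsto_const_nhds (x := w)))
  have limit_ne_zero : wedge (h • (wedge v f / wedge e f) • e) w ≠ 0 := by
    simp [smul_comm h, hv, hef, hw]
  filter_upwards [scaled_tendsto.eventually_ne limit_ne_zero] with n hn hzero
  refine hn ?_
  simp [smul_comm h, hzero]

/- The conditions make `(h • e) ∧ f`, `(h • e) ∧ e` and `(h • f) ∧ f` nonzero: they hold for
`h = h₁ g ^ n h₂` with `n` large, since `g ^ n` attracts every line but `ℝ f` to `ℝ e`. -/
lemma ZariskiDense.exists_mem_closure_wedge_mul_wedge_ne {μ : Measure SL2} (hμ : ZariskiDense μ)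
    {g : SL2} (hg : g ∈ Submonoid.closure μ.support) {l : ℝ} {e f : Plane} (hl : 1 < l)
    (he : g • e = l • e) (hf : g • f = l⁻¹ • f) (hef : wedge e f ≠ 0) :
    ∃ h ∈ Submonoid.closure μ.support, wedge (h • e) f ≠ 0 ∧
      wedge (h • e) f * wedge e (h • f) ≠ wedge e f ^ 2 := by
  have he₀ : e ≠ 0 := by rintro rfl; simp at hef
  have hf₀ : f ≠ 0 := by rintro rfl; simp at hef
  obtain ⟨s, hs, hse⟩ := hμ.exists_wedge_smul_ne_zero he₀
  obtain ⟨s', hs', hs'f⟩ := hμ.exists_wedge_smul_ne_zero hf₀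
  obtain ⟨t, ht, diagonal, antidiagonal⟩ := hμ.exists_not_preserves_pair hef
  replace ht := Submonoid.subset_closure ht
  obtain ⟨h₁, hh₁, h₁e, h₁f⟩ := exists_mem_wedge_smul_ne_zero_and hef
    ⟨s, Submonoid.subset_closure hs, hse⟩ ⟨t, ht, diagonal, antidiagonal⟩
  obtain ⟨h₂, hh₂, h₂f, h₂e⟩ := exists_mem_wedge_smul_ne_zero_and
    (T := (Submonoid.closure μ.support)⁻¹) (e := f) (f := e) (by rwa [wedge_swap, neg_ne_zero])
    ⟨s'⁻¹, by simpa using Submonoid.subset_closure hs', by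
      rwa [wedge_inv_smul, wedge_swap, neg_ne_zero]⟩
    ⟨t⁻¹, by simpa using ht, by
      simpa [wedge_inv_smul, wedge_swap (t • _), and_comm] using And.intro diagonal antidiagonal⟩
  rw [← inv_inv h₂, wedge_inv_smul] at h₂e h₂f
  rw [wedge_swap, neg_ne_zero] at h₁e h₁f
  obtain ⟨n, hee, hef', hff⟩ :=
    ((eventually_wedge_smul_pow_smul_ne_zero hl he hf hef h₂e h₁e).and
      ((eventually_wedge_smul_pow_smul_ne_zero hl he hf hef h₂e h₁f).and
        (eventually_wedge_smul_pow_smul_ne_zero hl he hf hef h₂f h₁f))).exists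
  simp only [← mul_smul] at hee hef' hff
  refine ⟨h₁ * (g ^ n * h₂⁻¹), mul_mem hh₁ (mul_mem (pow_mem hg n) hh₂), hef', fun heq ↦ ?_⟩
  set h := h₁ * (g ^ n * h₂⁻¹)
  have plucker := wedge_mul_wedge_eq (h • e) (h • f) e f
  rw [wedge_smul_smul, wedge_swap (h • f) e] at plucker
  exact mul_ne_zero hee hff (by linear_combination -heq - plucker)

lemma trace_pow_mul_mul_wedge {g : SL2} {l : ℝ} {e f : Plane} (hl : l ≠ 0) (he : g • e = l • e)
    (hf : g • f = l⁻¹ • f) (h : SL2) (n : ℕ) : trace (g ^ n * h) * wedge e f =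
      l ^ n * wedge (h • e) f + (l ^ n)⁻¹ * wedge e (h • f) := by
  have he_pow := pow_smul_eq_pow_smul he n
  have hf_pow := pow_smul_eq_pow_smul hf n
  have fst : wedge (g ^ n • h • e) f = l ^ n * wedge (h • e) f := by
    rw [← wedge_smul_smul (g ^ n) (h • e) f, hf_pow]
    simp [hl]
  have snd : wedge e (g ^ n • h • f) = (l ^ n)⁻¹ * wedge e (h • f) := by
    rw [← wedge_smul_smul (g ^ n) e (h • f), he_pow]
    simp [hl]
  rw [← wedge_smul_add_wedge_smul, mul_smul, mul_smul, fst, snd]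

lemma ZariskiDense.exists_mem_closure_trace_pow_mul_eq {μ : Measure SL2} (hμ : ZariskiDense μ)
    {g : SL2} (hg : g ∈ Submonoid.closure μ.support) {l : ℝ} {e f : Plane} (hl : 1 < l)
    (he : g • e = l • e) (hf : g • f = l⁻¹ • f) (hef : wedge e f ≠ 0) :
    ∃ h ∈ Submonoid.closure μ.support, ∃ a d : ℝ, a ≠ 0 ∧ a * d ≠ 1 ∧
      ∀ n : ℕ, trace (g ^ n * h) = l ^ n * a + (l ^ n)⁻¹ * d := by
  obtain ⟨h, hh, hhe, hhf⟩ := hμ.exists_mem_closure_wedge_mul_wedge_ne hg hl he hf hef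
  refine ⟨h, hh, wedge (h • e) f / wedge e f, wedge e (h • f) / wedge e f, div_ne_zero hhe hef,
    ?_, fun n ↦ ?_⟩
  · rwa [div_mul_div_comm, ← sq, ne_eq, div_eq_one_iff_eq (pow_ne_zero 2 hef)]
  · rw [← mul_div_assoc, ← mul_div_assoc, ← add_div, eq_div_iff hef]
    exact trace_pow_mul_mul_wedge (by positivity) he hf h n

lemma tendsto_arcosh_sub_log : Tendsto (fun x ↦ Real.arcosh x - Real.log x) atTop
    (𝓝 (Real.log 2)) := by
  have sqrt_tendsto : Tendsto (fun x : ℝ ↦ 1 + √(1 - x⁻¹ ^ 2)) atTop (𝓝 2) := by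
    have := ((tendsto_inv_atTop_zero.pow 2).const_sub (1 : ℝ)).sqrt.const_add 1
    simpa [one_add_one_eq_two] using this
  refine ((Real.continuousAt_log two_ne_zero).tendsto.comp sqrt_tendsto).congr' ?_
  filter_upwards [eventually_ge_atTop 1] with x hx
  have hx₀ : 0 < x := by positivity
  have : x + √(x ^ 2 - 1) = x * (1 + √(1 - x⁻¹ ^ 2)) := by
    rw [mul_add, mul_one, ← Real.sqrt_sq hx₀.le, ← Real.sqrt_mul (sq_nonneg x), Real.sqrt_sq hx₀.le]
    congr 2
    field_simp
  rw [Function.comp_apply, Real.arcosh, this, Real.log_mul hx₀.ne' (by positivity)]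
  ring

lemma tendsto_abs_mul_add_inv_mul_div (a d : ℝ) :
    Tendsto (fun E ↦ |E * a + E⁻¹ * d| / 2 / E) atTop (𝓝 (|a| / 2)) := by
  have := (((tendsto_inv_atTop_zero.pow 2).mul_const d).const_add a).abs.div_const 2
  rw [zero_pow two_ne_zero, zero_mul, add_zero] at this
  refine this.congr' ?_
  filter_upwards [eventually_gt_atTop 0] with E hE
  have : E * a + E⁻¹ * d = E * (a + E⁻¹ ^ 2 * d) := by field_simp
  rw [this, abs_mul, abs_of_pos hE]
  field_simp

lemma tendsto_abs_mul_add_inv_mul_atTop {a : ℝ} (ha : a ≠ 0) (d : ℝ) :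
    Tendsto (fun E ↦ |E * a + E⁻¹ * d| / 2) atTop atTop := by
  refine ((tendsto_abs_mul_add_inv_mul_div a d).pos_mul_atTop (by positivity) tendsto_id).congr' ?_
  filter_upwards [eventually_ne_atTop 0] with E hE
  exact div_mul_cancel₀ _ hE

lemma tendsto_arcosh_abs_sub_log {a : ℝ} (ha : a ≠ 0) (d : ℝ) : Tendsto
    (fun E ↦ Real.arcosh (|E * a + E⁻¹ * d| / 2) - Real.log E) atTop (𝓝 (Real.log |a|)) := by
  have abs_tendsto := tendsto_abs_mul_add_inv_mul_atTop ha d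
  have half_pos : 0 < |a| / 2 := by positivity
  have := (tendsto_arcosh_sub_log.comp abs_tendsto).add
    ((tendsto_abs_mul_add_inv_mul_div a d).log half_pos.ne')
  rw [← Real.log_mul two_ne_zero half_pos.ne', mul_div_cancel₀ _ two_ne_zero] at this
  refine this.congr' ?_
  filter_upwards [eventually_ne_atTop 0, abs_tendsto.eventually_ne_atTop 0] with E hE habs
  rw [Function.comp_apply, Real.log_div habs hE]
  ring

lemma eventually_arcosh_abs_sub_log_ne {a d : ℝ} (ha : a ≠ 0) (had : a * d ≠ 1) : ∀ᶠ E in atTop,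
    Real.arcosh (|E * a + E⁻¹ * d| / 2) - Real.log E ≠ Real.log |a| := by
  have ha' : 0 < |a| := abs_pos.2 ha
  filter_upwards [eventually_ge_atTop 1, eventually_ge_atTop (|a * d| / a ^ 2),
    (tendsto_abs_mul_add_inv_mul_atTop ha d).eventually_ge_atTop 1] with E hE_one hE_div hone heq
  have hE : 0 < E := zero_lt_one.trans_le hE_one
  have arcosh_eq : Real.arcosh (|E * a + E⁻¹ * d| / 2) = Real.log (E * |a|) := by
    rw [Real.log_mul hE.ne' ha'.ne']
    linear_combination heq
  have abs_eq := Real.cosh_arcosh hone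
  rw [arcosh_eq, Real.cosh_log (by positivity)] at abs_eq
  have sq_eq : (E * a + E⁻¹ * d) ^ 2 = (E * |a| + (E * |a|)⁻¹) ^ 2 := by
    rw [← sq_abs (E * a + E⁻¹ * d)]
    congr 1
    linear_combination -2 * abs_eq
  have product_eq : (a * d - 1) * (2 * (E * a) ^ 2 + a * d + 1) = 0 := by
    have expand : (E * |a| + (E * |a|)⁻¹) ^ 2 = (E * a) ^ 2 + 2 + ((E * a) ^ 2)⁻¹ := by
      rw [add_sq, mul_assoc 2, mul_inv_cancel₀ (by positivity), inv_pow, mul_pow E |a|, sq_abs,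
        mul_pow, mul_one]
    rw [expand] at sq_eq
    field_simp at sq_eq
    linear_combination sq_eq
  have factor_pos : 0 < 2 * (E * a) ^ 2 + a * d + 1 := by
    rw [div_le_iff₀ (by positivity)] at hE_div
    have sq_le : E * a ^ 2 ≤ (E * a) ^ 2 := by
      rw [mul_pow]
      gcongr
      exact le_self_pow₀ hE_one two_ne_zero
    linarith [neg_abs_le (a * d), sq_nonneg (E * a)]
  exact mul_ne_zero (sub_ne_zero.2 had) factor_pos.ne' product_eq

lemma exists_mem_pos_lt_of_tendsto {Λ : AddSubgroup ℝ} {u : ℕ → ℝ} {c : ℝ}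
    (mem : ∀ᶠ n in atTop, u n ∈ Λ) (hu : Tendsto u atTop (𝓝 c)) (ne : ∀ᶠ n in atTop, u n ≠ c)
    {η : ℝ} (hη : 0 < η) : ∃ p ∈ Λ, 0 < p ∧ p < η := by
  have near : ∀ᶠ n in atTop, dist (u n) c < η / 2 :=
    hu.eventually (Metric.ball_mem_nhds c (half_pos hη))
  obtain ⟨m, hm, hmc, hmη⟩ := (mem.and (ne.and near)).exists
  obtain ⟨n, hn, hnm, hnη⟩ := (mem.and ((hu.eventually_ne hmc.symm).and near)).exists
  refine ⟨|u n - u m|, ?_, abs_pos.2 (sub_ne_zero.2 hnm), ?_⟩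
  · rcases abs_choice (u n - u m) with h | h <;> rw [h]
    · exact sub_mem hn hm
    · exact neg_mem (sub_mem hn hm)
  · have := dist_triangle_right (u n) (u m) c
    rw [Real.dist_eq (u n) (u m)] at this
    linarith

lemma ZariskiDense.exists_mem_logPeriods_pos_lt {μ : Measure SL2} {ν : Measure PX}
    [IsProbabilityMeasure μ] [IsProbabilityMeasure ν] (hμ : ZariskiDense μ) (hμ' : HasExpMoment μ)
    (hν : IsStationaryMeas μ ν) (hσ : 0 < ∫ g, ∫ x, cocycle g x ∂ν ∂μ) {η : ℝ} (hη : 0 < η) :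
    ∃ p ∈ logPeriods μ, 0 < p ∧ p < η := by
  obtain ⟨g, hg, htr⟩ := exists_two_lt_abs_trace
    (exists_mem_closure_support_lt_opNorm hμ' hν hσ) fun e he ↦
      (hμ.exists_wedge_smul_ne_zero he).imp fun _ ↦ .imp_left (Submonoid.subset_closure ·)
  have g_mem := two_mul_arcosh_mem_logPeriods hμ hg htr
  obtain ⟨l, hl⟩ : ∃ l, l = Real.exp (2 * Real.arcosh (|trace g| / 2)) := ⟨_, rfl⟩
  obtain ⟨one_lt, e, f, hef, he, hf⟩ := exists_eigenvectors_mul_self htr hl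
  obtain ⟨h, hh, a, d, ha, had, trace_eq⟩ :=
    hμ.exists_mem_closure_trace_pow_mul_eq (mul_mem hg hg) one_lt he hf hef
  have pow_tendsto : Tendsto (fun n : ℕ ↦ l ^ n) atTop atTop :=
    tendsto_pow_atTop_atTop_of_one_lt one_lt
  refine exists_mem_pos_lt_of_tendsto (c := 2 * Real.log |a|)
    (u := fun n ↦ 2 * (Real.arcosh (|l ^ n * a + (l ^ n)⁻¹ * d| / 2) - Real.log (l ^ n))) ?_
    (((tendsto_arcosh_abs_sub_log ha d).comp pow_tendsto).const_mul 2) ?_ hη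
  · filter_upwards [((tendsto_abs_mul_add_inv_mul_atTop ha d).comp
      pow_tendsto).eventually_gt_atTop 1] with n hn
    rw [Function.comp_apply, ← trace_eq, one_lt_div (two_pos (α := ℝ))] at hn
    rw [← trace_eq, mul_sub, Real.log_pow, hl, Real.log_exp, mul_left_comm, ← nsmul_eq_mul,
      two_mul (2 * Real.arcosh (|trace g| / 2))]
    exact sub_mem
      (two_mul_arcosh_mem_logPeriods hμ (mul_mem (pow_mem (mul_mem hg hg) n) hh) hn)
      (nsmul_mem (add_mem g_mem g_mem) n)
  · filter_upwards [pow_tendsto.eventually (eventually_arcosh_abs_sub_log_ne ha had)] with n hn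
    exact fun heq ↦ hn (mul_left_cancel₀ two_ne_zero heq)

end SmallPeriods

section SparseTranslates

namespace IsTestFunction

variable {μ : Measure SL2} {f : ℝ → ℝ≥0} {v w : Plane} {M : ℝ≥0∞} {P : ℝ}

lemma sum_comp_log_norm_smul_le_window (hf : IsTestFunction f)
    (spread : ∀ x y, f x ≠ 0 → f y ≠ 0 → |x - y| < P) {K : ℕ} (hK : ∀ j < K, j * P ≤ 1)
    (hw : w ≠ 0) :
    ∑ j ∈ Finset.range K, (f (Real.log ‖Real.exp (j * P) • w‖) : ℝ≥0∞) ≤ window w := by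
  have log_eq (j : ℕ) : Real.log ‖Real.exp (j * P) • w‖ = j * P + Real.log ‖w‖ := by
    rw [norm_smul, Real.norm_of_nonneg (Real.exp_pos _).le,
      Real.log_mul (Real.exp_pos _).ne' (norm_ne_zero_iff.2 hw), Real.log_exp]
  simp_rw [log_eq]
  by_cases h : ∃ j ∈ Finset.range K, f (j * P + Real.log ‖w‖) ≠ 0
  · obtain ⟨j, hj, hfj⟩ := h
    have hP : 0 < P := by simpa using spread _ _ hfj hfj
    have jP_le := hK j (Finset.mem_range.1 hj)
    have abs_le_two : |j * P + Real.log ‖w‖| ≤ 2 := not_lt.1 (mt (hf.eq_zero _) hfj)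
    have abs_le_three : |Real.log ‖w‖| ≤ 3 := by
      have : 0 ≤ j * P := by positivity
      rw [abs_le] at abs_le_two ⊢
      constructor <;> linarith
    rw [window_eq_one hw abs_le_three, Finset.sum_eq_single_of_mem j hj]
    · exact_mod_cast hf.le_one _
    · intro i _ hij
      by_contra hfi
      have lt := spread _ _ (ENNReal.coe_ne_zero.1 hfi) hfj
      rw [add_sub_add_right_eq_sub, ← sub_mul, abs_mul, abs_of_pos hP,
        mul_lt_iff_lt_one_left hP] at lt
      have : |(i : ℤ) - j| < 1 := by exact_mod_cast lt
      exact hij (by exact_mod_cast sub_eq_zero.1 (Int.abs_lt_one_iff.1 this))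
  · push Not at h
    rw [Finset.sum_eq_zero fun j hj ↦ by rw [h j hj, ENNReal.coe_zero]]
    exact zero_le

lemma sum_renewalFunction_smul_le (hf : IsTestFunction f)
    (hM : ∀ v ≠ 0, potential μ window v ≤ M) (hM' : M ≠ ∞)
    (spread : ∀ x y, f x ≠ 0 → f y ≠ 0 → |x - y| < P) {K : ℕ} (hK : ∀ j < K, j * P ≤ 1)
    (hv : v ≠ 0) :
    ∑ j ∈ Finset.range K, renewalFunction μ f (Real.exp (j * P) • v) ≤ M.toReal := by
  have measurable_smul (j : ℕ) : Measurable fun g : SL2 ↦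
      (f (Real.log ‖g • Real.exp (j * P) • v‖) : ℝ≥0∞) :=
    hf.measurable_comp_log_norm.comp (measurable_smul_const _)
  unfold renewalFunction
  rw [← ENNReal.toReal_sum fun j _ ↦ ne_top_of_le_ne_top hM'
    (hf.potential_le hM (smul_ne_zero (Real.exp_pos _).ne' hv))]
  refine ENNReal.toReal_mono hM' (le_trans ?_ (hM v hv))
  simp_rw [potential]
  rw [← Summable.tsum_finsetSum fun _ _ ↦ ENNReal.summable]
  refine ENNReal.tsum_le_tsum fun n ↦ ?_
  rw [← lintegral_finsetSum _ fun j _ ↦ measurable_smul j]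
  refine lintegral_mono fun g ↦ ?_
  simp_rw [smul_comm g]
  exact hf.sum_comp_log_norm_smul_le_window spread hK ((smul_ne_zero_iff_ne g).2 hv)

/- The `K ≈ 1 / P` functions `v ↦ H (e^{jP} v)` are asymptotically equal to `H` near `0`, and their
sum is at most `M`. -/
lemma eventually_renewalFunction_le (hf : IsTestFunction f)
    (hH : HarmonicNearZero μ (renewalFunction μ f))
    (hM : ∀ v ≠ 0, potential μ window v ≤ M) (hM' : M ≠ ∞) (hP : 0 < P) (hP' : P ∈ logPeriods μ)
    (spread : ∀ x y, f x ≠ 0 → f y ≠ 0 → |x - y| < P) :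
    ∀ᶠ v in 𝓝[≠] 0, renewalFunction μ f v ≤ (M.toReal + 1) * P := by
  set K := ⌊1 / P⌋₊ + 1 with hK_def
  have K_pos : (0 : ℝ) < K := by positivity
  have hK : ∀ j < K, j * P ≤ 1 := fun j hj ↦ by
    rw [← le_div_iff₀ hP]
    exact (Nat.le_floor_iff (by positivity)).1 (Nat.lt_succ_iff.1 hj)
  have one_le : 1 ≤ K * P := by
    rw [← div_le_iff₀ hP, hK_def, Nat.cast_succ]
    exact (Nat.lt_floor_add_one _).le
  have nearly_periodic : ∀ᶠ v in 𝓝[≠] 0, ∀ j ∈ Finset.range K,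
      -(1 / K) < renewalFunction μ f (Real.exp (j * P) • v) - renewalFunction μ f v :=
    (Filter.eventually_all_finset _).2 fun j _ ↦ by
      have period := nsmul_mem hP' j _ hH
      rw [nsmul_eq_mul] at period
      exact period.eventually (lt_mem_nhds (by simpa using K_pos))
  filter_upwards [nearly_periodic, self_mem_nhdsWithin] with v hv hv₀
  have card_mul_le := (Finset.card_nsmul_le_sum (Finset.range K) _ (renewalFunction μ f v - 1 / K)
    fun j hj ↦ by linarith [hv j hj]).trans
    (hf.sum_renewalFunction_smul_le hM hM' spread hK hv₀)
  rw [Finset.card_range, nsmul_eq_mul, mul_sub, mul_one_div_cancel K_pos.ne',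
    sub_le_iff_le_add] at card_mul_le
  calc renewalFunction μ f v ≤ (K * P) * renewalFunction μ f v :=
        le_mul_of_one_le_left (renewalFunction_nonneg μ f v) one_le
    _ = K * renewalFunction μ f v * P := by ring
    _ ≤ (M.toReal + 1) * P := by gcongr

end IsTestFunction

lemma mem_Ioo_of_thickenedIndicator_Icc_ne_zero {d x : ℝ} (hd : 0 < d)
    (hx : thickenedIndicator hd (Set.Icc 0 d) x ≠ 0) : x ∈ Set.Ioo (-d) (2 * d) := by
  obtain ⟨z, hz, hxz⟩ := Metric.mem_thickening_iff.1
    (not_imp_comm.1 (thickenedIndicator_zero hd (Set.Icc 0 d)) hx)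
  rw [Real.dist_eq, abs_lt] at hxz
  exact ⟨by linarith [hz.1], by linarith [hz.2]⟩

lemma isTestFunction_thickenedIndicator_Icc {d : ℝ} (hd : 0 < d) (hd' : d ≤ 2 / 3) :
    IsTestFunction (thickenedIndicator hd (Set.Icc 0 d)) where
  le_one := thickenedIndicator_le_one hd _
  eq_zero x hx := by
    by_contra h
    obtain ⟨hx₁, hx₂⟩ := mem_Ioo_of_thickenedIndicator_Icc_ne_zero hd h
    exact hx.not_ge (abs_le.2 ⟨by linarith, by linarith⟩)
  exists_lipschitzWith := ⟨_, lipschitzWith_thickenedIndicator hd _⟩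

lemma abs_sub_lt_of_thickenedIndicator_Icc_ne_zero {d x y : ℝ} (hd : 0 < d)
    (hx : thickenedIndicator hd (Set.Icc 0 d) x ≠ 0)
    (hy : thickenedIndicator hd (Set.Icc 0 d) y ≠ 0) : |x - y| < 3 * d := by
  obtain ⟨hx₁, hx₂⟩ := mem_Ioo_of_thickenedIndicator_Icc_ne_zero hd hx
  obtain ⟨hy₁, hy₂⟩ := mem_Ioo_of_thickenedIndicator_Icc_ne_zero hd hy
  exact abs_lt.2 ⟨by linarith, by linarith⟩

end SparseTranslates

section RenewalMeasure

/-- The renewal measure `B ↦ R(1_B)(x, t)`, the expected number of visits to `B` of the sequence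
`σ(gₙ ⋯ g₁, x) - t`. -/
def renewalMeasure (μ : Measure SL2) (x : PX) (t : ℝ) : Measure ℝ :=
  .sum fun n ↦ (convPow μ n).map fun g ↦ cocycle g x - t

lemma measurable_cocycle_sub (x : PX) (t : ℝ) : Measurable fun g ↦ cocycle g x - t :=
  ((continuous_cocycle.comp (.prodMk_left x)).measurable).sub_const t

lemma tsum_μpi_eq_renewalMeasure (μ : Measure SL2) [IsProbabilityMeasure μ] (x : PX) (t : ℝ)
    {B : Set ℝ} (hB : MeasurableSet B) :
    ∑' n, μpi μ n {g | cocycle (word g) x - t ∈ B} = renewalMeasure μ x t B := by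
  rw [renewalMeasure, Measure.sum_apply _ hB]
  congr 1 with n
  rw [← map_word_μpi, Measure.map_map (measurable_cocycle_sub x t) (measurable_word n),
    Measure.map_apply ((measurable_cocycle_sub x t).comp (measurable_word n)) hB]
  rfl

lemma exists_log_norm_eq_and_cocycle_eq (x : PX) (s : ℝ) :
    ∃ v ≠ 0, Real.log ‖v‖ = s ∧ ∀ g, cocycle g x = normCocycle g v := by
  have norm_ne_zero := norm_ne_zero_iff.2 (repVec_ne_zero x)
  have scalar_ne_zero : Real.exp s * ‖repVec x‖⁻¹ ≠ 0 := by positivity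
  refine ⟨(Real.exp s * ‖repVec x‖⁻¹) • repVec x,
    smul_ne_zero scalar_ne_zero (repVec_ne_zero x), ?_, fun g ↦ ?_⟩
  · rw [norm_smul, norm_mul, norm_inv, norm_norm, inv_mul_cancel_right₀ norm_ne_zero,
      Real.norm_of_nonneg (Real.exp_pos s).le, Real.log_exp]
  · rw [cocycle_eq_normCocycle, normCocycle_smul g _ scalar_ne_zero]

lemma renewalMeasure_Icc_le_potential (μ : Measure SL2) {f : ℝ → ℝ≥0} {d b c t : ℝ} {x : PX}
    {v : Plane} (hf : ∀ y ∈ Set.Icc 0 d, f y = 1) (hc : c ≤ b + d) (hv : v ≠ 0)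
    (log_norm : Real.log ‖v‖ = -(t + b)) (hx : ∀ g, cocycle g x = normCocycle g v) :
    renewalMeasure μ x t (Set.Icc b c) ≤
      potential μ (fun w ↦ (f (Real.log ‖w‖) : ℝ≥0∞)) v := by
  rw [renewalMeasure, Measure.sum_apply _ measurableSet_Icc]
  refine ENNReal.tsum_le_tsum fun n ↦ ?_
  rw [Measure.map_apply (measurable_cocycle_sub x t) measurableSet_Icc,
    ← lintegral_indicator_one (measurable_cocycle_sub x t measurableSet_Icc)]
  refine lintegral_mono fun g ↦ Set.indicator_apply_le' (fun hg ↦ ?_) fun _ ↦ zero_le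
  obtain ⟨hb, hc'⟩ : cocycle g x - t ∈ Set.Icc b c := hg
  rw [hx] at hb hc'
  beta_reduce
  rw [log_norm_smul g hv, log_norm, hf _ ⟨by linarith, by linarith⟩, Pi.one_apply,
    ENNReal.coe_one]

variable {μ : Measure SL2} {ν : Measure PX} [IsProbabilityMeasure μ] [IsProbabilityMeasure ν]

lemma ZariskiDense.exists_mem_logPeriods_mem_Ico (hμ : ZariskiDense μ) (hμ' : HasExpMoment μ)
    (hν : IsStationaryMeas μ ν) (hσ : 0 < ∫ g, ∫ x, cocycle g x ∂ν ∂μ) (a : ℝ) {η : ℝ}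
    (hη : 0 < η) : ∃ P ∈ logPeriods μ, P ∈ Set.Ico a (a + η) := by
  obtain ⟨p, hp_mem, hp, hpη⟩ := hμ.exists_mem_logPeriods_pos_lt hμ' hν hσ hη
  obtain ⟨m, hm, -⟩ := existsUnique_add_zsmul_mem_Ico hp 0 a
  rw [zero_add] at hm
  exact ⟨m • p, zsmul_mem hp_mem m, hm.1, hm.2.trans (by linarith)⟩

lemma exists_potential_thickenedIndicator_le (hμ : ZariskiDense μ) (hμ' : HasExpMoment μ)
    (hν : IsStationaryMeas μ ν) (hσ : 0 < ∫ g, ∫ x, cocycle g x ∂ν ∂μ) :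
    ∃ m > (0 : ℝ), ∀ d (hd : 0 < d), d ≤ 2 / 3 → ∃ s ≥ (1 : ℝ), ∀ v : Plane, v ≠ 0 →
      potential μ (fun w ↦ (thickenedIndicator hd (Set.Icc 0 d) (Real.log ‖w‖) : ℝ≥0∞)) v ≤
        ENNReal.ofReal m ∧
      (Real.log ‖v‖ < -s →
        potential μ (fun w ↦ (thickenedIndicator hd (Set.Icc 0 d) (Real.log ‖w‖) : ℝ≥0∞)) v ≤
          ENNReal.ofReal (m * d)) := by
  obtain ⟨ε₀, hε₀, h⟩ := hμ.exists_isTransienceExponent hμ' hσ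
    (mul_lyapunov_le_integral_log_opNorm hμ' hν)
  obtain ⟨ε, hε, hε₁, hε₂⟩ : ∃ ε > 0, ε ≤ 1 ∧ 2 * ε ≤ ε₀ :=
    ⟨min 1 (ε₀ / 2), by positivity, min_le_left _ _, by linarith [min_le_right 1 (ε₀ / 2)]⟩
  have h := h (2 * ε) (by positivity) hε₂
  obtain ⟨M, hM', hM⟩ := h.exists_potential_window_le (by positivity)
  refine ⟨4 * (M.toReal + 1), by positivity, fun d hd hd' ↦ ?_⟩
  have hf := isTestFunction_thickenedIndicator_Icc hd hd'
  obtain ⟨P, hP, three_mul_le, lt_add⟩ :=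
    hμ.exists_mem_logPeriods_mem_Ico hμ' hν hσ (3 * d) hd
  have eventually_le := hf.eventually_renewalFunction_le
    (hf.harmonicNearZero_renewalFunction h hε hε₁) hM hM' (by linarith) hP
    fun x y hx hy ↦ (abs_sub_lt_of_thickenedIndicator_Icc_ne_zero hd hx hy).trans_le three_mul_le
  rw [eventually_nhdsWithin_iff, Metric.eventually_nhds_iff] at eventually_le
  obtain ⟨r, hr, near_zero⟩ := eventually_le
  refine ⟨max 1 (-Real.log r), le_max_left _ _, fun v hv ↦ ⟨(hf.potential_le hM hv).trans ?_, ?_⟩⟩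
  · refine (ENNReal.le_ofReal_iff_toReal_le hM' (by positivity)).2 ?_
    linarith [M.toReal_nonneg]
  · intro log_lt
    have norm_lt : ‖v‖ < r := (Real.log_lt_log_iff (norm_pos_iff.2 hv) hr).1
      (by linarith [le_max_right 1 (-Real.log r)])
    rw [← hf.ofReal_renewalFunction hM hM' hv]
    refine ENNReal.ofReal_le_ofReal ((near_zero (by rwa [dist_zero_right]) hv).trans ?_)
    nlinarith [M.toReal_nonneg]

lemma exists_renewalMeasure_Icc_le (hμ : ZariskiDense μ) (hμ' : HasExpMoment μ)
    (hν : IsStationaryMeas μ ν) (hσ : 0 < ∫ g, ∫ x, cocycle g x ∂ν ∂μ) :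
    ∃ m > (0 : ℝ), ∀ d, 0 < d → d ≤ 2 / 3 → ∃ s ≥ (1 : ℝ), ∀ b c t x, c ≤ b + d →
      renewalMeasure μ x t (Set.Icc b c) ≤ ENNReal.ofReal m ∧
      (s < t + b → renewalMeasure μ x t (Set.Icc b c) ≤ ENNReal.ofReal (m * d)) := by
  obtain ⟨m, hm, h⟩ := exists_potential_thickenedIndicator_le hμ hμ' hν hσ
  refine ⟨m, hm, fun d hd hd' ↦ ?_⟩
  obtain ⟨s, hs, h⟩ := h d hd hd'
  refine ⟨s, hs, fun b c t x hc ↦ ?_⟩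
  obtain ⟨v, hv, log_norm, hx⟩ := exists_log_norm_eq_and_cocycle_eq x (-(t + b))
  have le_potential := renewalMeasure_Icc_le_potential μ
    (fun y hy ↦ thickenedIndicator_one hd _ hy) hc hv log_norm hx
  exact ⟨le_potential.trans (h v hv).1,
    fun hst ↦ le_potential.trans ((h v hv).2 (by rwa [log_norm, neg_lt_neg_iff]))⟩

lemma exists_renewalMeasure_Icc_le_mul_add (hμ : ZariskiDense μ) (hμ' : HasExpMoment μ)
    (hν : IsStationaryMeas μ ν) {σ : ℝ} (hσ : σ = ∫ g, ∫ x, cocycle g x ∂ν ∂μ) (hσ' : 0 < σ) :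
    ∃ C > (0 : ℝ), ∀ δ, 0 < δ → δ ≤ 1 / 3 → ∃ Cδ > (0 : ℝ), ∀ b c t x, c ≤ b + 2 * δ → 0 < t →
      renewalMeasure μ x t (Set.Icc b c) ≤
        ENNReal.ofReal (C * δ * (1 / σ + Cδ * (1 + |b|) / t)) := by
  obtain ⟨m, hm, h⟩ := exists_renewalMeasure_Icc_le hμ hμ' hν (hσ ▸ hσ')
  refine ⟨2 * m * σ, by positivity, fun δ hδ hδ' ↦ ?_⟩
  obtain ⟨s, hs, h⟩ := h (2 * δ) (by positivity) (by linarith)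
  refine ⟨s / (2 * σ * δ), by positivity, fun b c t x hc ht ↦ ?_⟩
  have bound_eq : 2 * m * σ * δ * (1 / σ + s / (2 * σ * δ) * (1 + |b|) / t) =
      m * (2 * δ) + m * (s * (1 + |b|) / t) := by
    field_simp
  obtain ⟨le, le_of_lt⟩ := h b c t x hc
  rw [bound_eq]
  by_cases hst : s < t + b
  · exact (le_of_lt hst).trans (ENNReal.ofReal_le_ofReal
      (le_add_of_nonneg_right (by positivity)))
  · have t_le : t ≤ s * (1 + |b|) := by
      nlinarith [neg_abs_le b, abs_nonneg b]
    refine le.trans (ENNReal.ofReal_le_ofReal ?_)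
    have : m ≤ m * (s * (1 + |b|) / t) := le_mul_of_one_le_right hm.le ((one_le_div ht).2 t_le)
    linarith [mul_pos hm hδ]

end RenewalMeasure

section Covering

lemma Icc_subset_biUnion_Icc {b c d : ℝ} (hd : 0 < d) :
    Set.Icc b c ⊆ ⋃ j ∈ Finset.range (⌊(c - b) / d⌋₊ + 1), Set.Icc (b + j * d) (b + j * d + d) := by
  rintro y ⟨hby, hyc⟩
  have floor_le := Nat.floor_le (div_nonneg (sub_nonneg.2 hby) hd.le)
  have lt_floor := Nat.lt_floor_add_one ((y - b) / d)
  rw [le_div_iff₀ hd] at floor_le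
  rw [div_lt_iff₀ hd] at lt_floor
  refine Set.mem_iUnion₂.2 ⟨⌊(y - b) / d⌋₊, ?_, by linarith, by linarith⟩
  rw [Finset.mem_range, Nat.lt_succ_iff]
  gcongr

lemma measure_Icc_le_of_forall_Icc_le {ρ : Measure ℝ} {b c d B : ℝ} (hd : 0 < d)
    (hbc : d ≤ c - b) (hB : 0 ≤ B)
    (h : ∀ b' ∈ Set.Icc b c, ρ (Set.Icc b' (b' + d)) ≤ ENNReal.ofReal B) :
    ρ (Set.Icc b c) ≤ ENNReal.ofReal (2 * ((c - b) / d) * B) := by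
  have one_le : 1 ≤ (c - b) / d := (one_le_div hd).2 hbc
  have floor_le := Nat.floor_le (zero_le_one.trans one_le)
  have left_mem : ∀ j ∈ Finset.range (⌊(c - b) / d⌋₊ + 1), b + j * d ∈ Set.Icc b c := by
    intro j hj
    have : (j : ℝ) ≤ (c - b) / d :=
      floor_le.trans' (Nat.cast_le.2 (Nat.lt_succ_iff.1 (Finset.mem_range.1 hj)))
    rw [le_div_iff₀ hd] at this
    exact ⟨le_add_of_nonneg_right (by positivity), by linarith⟩
  calc ρ (Set.Icc b c)
      ≤ ∑ j ∈ Finset.range (⌊(c - b) / d⌋₊ + 1), ρ (Set.Icc (b + j * d) (b + j * d + d)) :=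
        (measure_mono (Icc_subset_biUnion_Icc hd)).trans (measure_biUnion_finset_le _ _)
    _ ≤ (⌊(c - b) / d⌋₊ + 1) • ENNReal.ofReal B := by
        simpa only [Finset.card_range] using
          Finset.sum_le_card_nsmul _ _ _ fun j hj ↦ h _ (left_mem j hj)
    _ = ENNReal.ofReal ((⌊(c - b) / d⌋₊ + 1) * B) := by
        rw [← ENNReal.ofReal_nsmul, nsmul_eq_mul, Nat.cast_succ]
    _ ≤ ENNReal.ofReal (2 * ((c - b) / d) * B) := by
        gcongr
        linarith

end Covering

theorem renewal_operator_interval_bound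
    (μ : Measure SL2) [IsProbabilityMeasure μ]
    (hmom : HasExpMoment μ) (hzd : ZariskiDense μ)
    (ν : Measure PX) [IsProbabilityMeasure ν] (hstat : IsStationaryMeas μ ν)
    (σμ : ℝ) (hσ : σμ = ∫ g, ∫ x, cocycle g x ∂ν ∂μ) (hσpos : 0 < σμ) :
    ∃ C > (0 : ℝ), ∀ δ : ℝ, 0 < δ → δ ≤ 1 / 3 → ∃ Cδ > (0 : ℝ),
      ∀ (b₁ b₂ t : ℝ) (x : PX), b₁ ≤ b₂ → 0 < t →
        (2 * δ ≤ b₂ - b₁ →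
          (∑' n : ℕ, μpi μ n {g | cocycle (word g) x - t ∈ Set.Icc b₁ b₂}) ≤
            ENNReal.ofReal (C * (b₂ - b₁) * (1 / σμ + Cδ * (1 + |b₁| + |b₂|) / t))) ∧
        (b₂ - b₁ < 2 * δ →
          (∑' n : ℕ, μpi μ n {g | cocycle (word g) x - t ∈ Set.Icc b₁ b₂}) ≤
            ENNReal.ofReal (C * δ * (1 / σμ + Cδ * (1 + |b₁|) / t))) := by
  obtain ⟨C, hC, h⟩ := exists_renewalMeasure_Icc_le_mul_add hzd hmom hstat hσ hσpos
  refine ⟨C, hC, fun δ hδ hδ' ↦ ?_⟩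
  obtain ⟨Cδ, hCδ, h⟩ := h δ hδ hδ'
  refine ⟨Cδ, hCδ, fun b₁ b₂ t x _ ht ↦ ?_⟩
  rw [tsum_μpi_eq_renewalMeasure μ x t measurableSet_Icc]
  refine ⟨fun hlong ↦ ?_, fun hshort ↦ h b₁ b₂ t x (by linarith) ht⟩
  have short_le : ∀ b ∈ Set.Icc b₁ b₂, renewalMeasure μ x t (Set.Icc b (b + 2 * δ)) ≤
      ENNReal.ofReal (C * δ * (1 / σμ + Cδ * (1 + |b₁| + |b₂|) / t)) := fun b hb ↦ by
    have abs_le : |b| ≤ |b₁| + |b₂| := (abs_le_max_abs_abs hb.1 hb.2).trans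
      (max_le_add_of_nonneg (abs_nonneg _) (abs_nonneg _))
    refine (h b _ t x le_rfl ht).trans ?_
    rw [add_assoc 1]
    gcongr
  convert measure_Icc_le_of_forall_Icc_le (by positivity) hlong (by positivity) short_le using 2
  field_simp

end
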